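/- arXiv:1902.04960 — 7 statements merged into one kernel-verified Lean document; each statement's English description precedes it below -/
import Mathlib

section
/- Let (H,X) be a minimal graphical conjunctive query and let h : H → H be a graph homomorphism (endomorphism) that maps X bijectively onto X. Then h is an automorphism of H. -/
/-!
Let `R` be the image of `h`, and consider the query `(H[R], X)`, which makes sense since
`X = h(X) ⊆ R`. It is equivalent to `(H, X)`: restricting a homomorphism `H → G` to `R` shows that
every partial homomorphism of `(H, X)` is one of `(H[R], X)`, and precomposing a homomorphism
`H[R] → G` with `h` shows that `a ↦ a ∘ h|_X` maps the partial homomorphisms of `(H[R], X)`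
injectively into those of `(H, X)`, because `h|_X` is a permutation of `X`. So the two finite counts
agree (`queryEquiv_induce_range`). Minimality then forces `|R| ≥ |V(H)|`, so `h` is bijective, and a
bijective endomorphism of a finite graph is an automorphism (`adj_of_adj_map`), as it permutes the
finitely many adjacent pairs.
-/

/-- The set of partial homomorphisms of the graphical conjunctive query `(H, X)`
into `G`: maps `a : X → V(G)` that extend to a homomorphism `H → G`. -/
def partialHoms {α β : Type} (H : SimpleGraph α) (X : Set α) (G : SimpleGraph β) :
    Set (X → β) :=
  {a | ∃ h : H →g G, ∀ x : X, h x.val = a x}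

/-- Two graphical conjunctive queries are equivalent if they have the same number
of partial homomorphisms into every finite simple graph. -/
def QueryEquiv {α β : Type} (H : SimpleGraph α) (X : Set α)
    (H' : SimpleGraph β) (X' : Set β) : Prop :=
  ∀ (γ : Type) [Fintype γ], ∀ G : SimpleGraph γ,
    (partialHoms H X G).ncard = (partialHoms H' X' G).ncard

/-- A graphical conjunctive query is minimal if its pair (#vertices, #edges) is
lexicographically least among all equivalent queries. -/
def MinimalQuery {α : Type} [Fintype α] (H : SimpleGraph α) (X : Set α) : Prop :=
  ∀ (β : Type) [Fintype β], ∀ (H' : SimpleGraph β) (X' : Set β),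
    QueryEquiv H X H' X' →
      Fintype.card α < Fintype.card β ∨
        (Fintype.card α = Fintype.card β ∧ H.edgeSet.ncard ≤ H'.edgeSet.ncard)

/-- The query obtained from `(H, X)` by restricting to the image of an endomorphism `h` that
permutes `X` is equivalent to `(H, X)`. -/
theorem queryEquiv_induce_range {α : Type} [Fintype α] (H : SimpleGraph α) (X : Set α)
    (h : H →g H) (hbij : Set.BijOn h X X) :
    QueryEquiv H X (H.induce (Set.range h)) (Subtype.val ⁻¹' X) := by
  intro γ _ G
  have hX : ∀ x ∈ X, x ∈ Set.range h := fun x hx => by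
    obtain ⟨y, -, hy⟩ := hbij.surjOn hx
    exact ⟨y, hy⟩
  apply le_antisymm
  · -- Restriction of homomorphisms from `H` to the image of `h`.
    refine Set.ncard_le_ncard_of_injOn
      (fun (a : X → γ) (x : (Subtype.val ⁻¹' X : Set (Set.range h))) => a ⟨x.1.1, x.2⟩)
      ?_ ?_ (Set.toFinite _)
    · rintro a ⟨g, hg⟩
      exact ⟨g.comp (SimpleGraph.Embedding.induce _).toHom, fun x => hg ⟨x.1.1, x.2⟩⟩
    · intro a _ b _ hab
      funext x
      exact congrFun hab ⟨⟨x.1, hX x.1 x.2⟩, x.2⟩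
  · -- Precomposition with `h`, viewed as a homomorphism onto its image.
    refine Set.ncard_le_ncard_of_injOn
      (fun (a : (Subtype.val ⁻¹' X : Set (Set.range h)) → γ) (x : X) =>
        a ⟨⟨h x.1, x.1, rfl⟩, hbij.mapsTo x.2⟩)
      ?_ ?_ (Set.toFinite _)
    · rintro a ⟨g, hg⟩
      let k : H →g H.induce (Set.range h) := ⟨fun v => ⟨h v, v, rfl⟩, fun hv => h.map_adj hv⟩
      exact ⟨g.comp k, fun x => hg ⟨⟨h x.1, x.1, rfl⟩, hbij.mapsTo x.2⟩⟩
    · intro a _ b _ hab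
      funext ⟨⟨x, hxR⟩, hx⟩
      obtain ⟨y, hy, rfl⟩ := hbij.surjOn hx
      exact congrFun hab ⟨y, hy⟩

/-- A bijective endomorphism of a finite graph reflects adjacency: it permutes the finitely many
adjacent pairs, so every adjacent pair is the image of an adjacent pair. -/
theorem adj_of_adj_map {α : Type} [Fintype α] (H : SimpleGraph α) (h : H →g H)
    (hb : Function.Bijective h) {u v : α} (huv : H.Adj (h u) (h v)) : H.Adj u v := by
  let f : {p : α × α // H.Adj p.1 p.2} → {p : α × α // H.Adj p.1 p.2} :=
    fun p => ⟨(h p.1.1, h p.1.2), h.map_adj p.2⟩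
  have hf : Function.Injective f := by
    rintro ⟨⟨a, b⟩, hab⟩ ⟨⟨c, d⟩, hcd⟩ hp
    have hp' := congrArg Subtype.val hp
    simp only [f, Prod.mk.injEq] at hp'
    simp [hb.1 hp'.1, hb.1 hp'.2]
  obtain ⟨⟨⟨a, b⟩, hab⟩, hp⟩ := Finite.surjective_of_injective hf ⟨(h u, h v), huv⟩
  have hp' := congrArg Subtype.val hp
  simp only [f, Prod.mk.injEq] at hp'
  rwa [← hb.1 hp'.1, ← hb.1 hp'.2]

/-- Every endomorphism of a minimal graphical conjunctive query `(H, X)` that maps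
`X` bijectively onto `X` is an automorphism. -/
theorem stmt_1 {α : Type} [Fintype α] (H : SimpleGraph α) (X : Set α)
    (hmin : MinimalQuery H X) (h : H →g H) (hbij : Set.BijOn h X X) :
    ∃ φ : H ≃g H, ∀ v, φ v = h v := by
  classical
  have hcard : Fintype.card α ≤ Fintype.card (Set.range h) := by
    rcases hmin _ _ _ (queryEquiv_induce_range H X h hbij) with hlt | ⟨heq, -⟩
    · exact hlt.le
    · exact heq.le
  -- The corestriction of `h` to its image is surjective, so by cardinality it is injective.
  have hinj : Function.Injective h := by
    have hr : Function.Bijective (Set.rangeFactorization h) :=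
      (Fintype.bijective_iff_surjective_and_card _).2
        ⟨Set.rangeFactorization_surjective,
          le_antisymm hcard (Fintype.card_le_of_surjective _ Set.rangeFactorization_surjective)⟩
    exact fun a b hab => hr.1 (Subtype.ext hab)
  have hb : Function.Bijective h := Finite.injective_iff_bijective.1 hinj
  exact ⟨⟨Equiv.ofBijective h hb, ⟨fun huv => adj_of_adj_map H h hb huv, fun huv => h.map_adj huv⟩⟩,
    fun _ => rfl⟩
end

section
/- Let (H,X) be a graphical conjunctive query and let G be a finite simple graph with an H-coloring c. Let Aut(H,X) = {b : X → X | there exists an automorphism h of H whose restriction to X equals b}. Then #cfHom((H,X) → G) = #Aut(H,X) · #cpHom((H,X) → G). -/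
/-!
A bijection `Aut(H, X) × cpHom → cfHom` is given by `(b, a) ↦ a ∘ b`. If `b` is the restriction of an
automorphism `φ` and `a` of a homomorphism `h` with `c ∘ h = id`, then `a ∘ b` is the restriction of
`h ∘ φ`, whose color map is `c ∘ h ∘ φ = φ`. The map is injective: `c ∘ (a ∘ b) = b` recovers `b`,
and `b` permutes the finite set `X`, so `a` is recovered as well. It is surjective: if `h` is a
colorful homomorphism, then `c ∘ h` is a surjective endomorphism of the finite graph `H`, hence an
automorphism `φ` (`exists_iso_of_surjective`), and `h = (h ∘ φ⁻¹) ∘ φ` with `c ∘ h ∘ φ⁻¹ = id`.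
-/

/-- `c` is an `H`-coloring of `G`: a graph homomorphism on vertices. -/
def IsColoring {α β : Type} (G : SimpleGraph β) (H : SimpleGraph α) (c : β → α) : Prop :=
  ∀ ⦃a b : β⦄, G.Adj a b → H.Adj (c a) (c b)

/-- Color-prescribed partial homomorphisms of `(H, X)` into the `H`-colored graph `G`. -/
def cpHoms {α β : Type} (H : SimpleGraph α) (X : Set α) (G : SimpleGraph β) (c : β → α) :
    Set (X → β) :=
  {a | ∃ h : H →g G, (∀ v, c (h v) = v) ∧ ∀ x : X, h x.val = a x}

/-- Colorful partial homomorphisms of `(H, X)` into the `H`-colored graph `G`. -/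
def cfHoms {α β : Type} (H : SimpleGraph α) (X : Set α) (G : SimpleGraph β) (c : β → α) :
    Set (X → β) :=
  {a | c '' Set.range a = X ∧
    ∃ h : H →g G, Set.range (fun v => c (h v)) = Set.univ ∧ ∀ x : X, h x.val = a x}

/-- The set `Aut(H, X)` of restrictions to `X` of automorphisms of `H` that map `X` to `X`. -/
def autSet {α : Type} (H : SimpleGraph α) (X : Set α) : Set (X → α) :=
  {b | (∀ x : X, b x ∈ X) ∧ ∃ φ : H ≃g H, ∀ x : X, φ x.val = b x}

/-- A surjective endomorphism of a finite graph is an automorphism: it is a permutation of finite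
order, so its inverse is one of its powers and therefore preserves adjacency. -/
lemma exists_iso_of_surjective {α : Type} [Finite α] (H : SimpleGraph α) (f : α → α)
    (hf : ∀ a b, H.Adj a b → H.Adj (f a) (f b)) (hs : Function.Surjective f) :
    ∃ φ : H ≃g H, ∀ v, φ v = f v := by
  let e : Equiv.Perm α := Equiv.ofBijective f
    ⟨Finite.injective_iff_surjective.mpr hs, hs⟩
  have hpow : ∀ (n : ℕ) (a b : α), H.Adj a b → H.Adj ((e ^ n) a) ((e ^ n) b) := by
    intro n
    induction n with
    | zero => intro a b h; simpa using h
    | succ n ih =>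
      intro a b h
      rw [pow_succ]
      exact ih _ _ (hf a b h)
  have hinv : ∀ a, (e ^ (orderOf e - 1)) (e a) = a := by
    intro a
    have h1 : e ^ (orderOf e - 1) * e = 1 := by
      rw [← pow_succ, Nat.sub_add_cancel (orderOf_pos e), pow_orderOf_eq_one]
    exact congrArg (fun g : Equiv.Perm α => g a) h1
  refine ⟨⟨e, ?_⟩, fun v => rfl⟩
  intro a b
  refine ⟨fun h => ?_, hf a b⟩
  have h2 := hpow (orderOf e - 1) _ _ h
  rwa [hinv, hinv] at h2

/-- An element of `Aut(H, X)` maps `X` onto `X`, by injectivity and finiteness. -/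
lemma autSet_surj {α : Type} [Finite α] {H : SimpleGraph α} {X : Set α} {b : X → α}
    (hb : b ∈ autSet H X) (x : X) : ∃ y : X, b y = x := by
  obtain ⟨hX, φ, hφ⟩ := hb
  have hinj : Function.Injective (fun y : X => (⟨b y, hX y⟩ : X)) := by
    intro y z hyz
    have h1 : b y = b z := congrArg Subtype.val hyz
    rw [← hφ, ← hφ] at h1
    exact Subtype.ext (φ.injective h1)
  obtain ⟨y, hy⟩ := Finite.surjective_of_injective hinj x
  exact ⟨y, congrArg Subtype.val hy⟩

/-- #cfHom((H,X) → G) = #Aut(H,X) · #cpHom((H,X) → G). -/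
theorem stmt_2 {α β : Type} [Fintype α] [Fintype β]
    (H : SimpleGraph α) (X : Set α) (G : SimpleGraph β) (c : β → α)
    (hc : IsColoring G H c) :
    (cfHoms H X G c).ncard = (autSet H X).ncard * (cpHoms H X G c).ncard := by
  have cp_color : ∀ a ∈ cpHoms H X G c, ∀ x : X, c (a x) = x := by
    rintro a ⟨h, hh, ha⟩ x
    rw [← ha, hh]
  rw [← Set.ncard_prod]
  symm
  refine Set.ncard_congr (fun p hp x => p.2 ⟨p.1 x, hp.1.1 x⟩) ?_ ?_ ?_
  · rintro ⟨b, a⟩ ⟨hb, ha⟩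
    have hcol := cp_color a ha
    have hsurj := autSet_surj hb
    obtain ⟨hX, φ, hφ⟩ := hb
    obtain ⟨h, hh, hha⟩ := ha
    refine ⟨?_, h.comp φ.toHom, ?_, ?_⟩
    · ext v
      constructor
      · rintro ⟨_, ⟨x, rfl⟩, rfl⟩
        simpa only [hcol] using hX x
      · intro hv
        obtain ⟨y, hy⟩ := hsurj ⟨v, hv⟩
        exact ⟨_, ⟨y, rfl⟩, (hcol _).trans hy⟩
    · refine Set.range_eq_univ.mpr fun v => ⟨φ.symm v, ?_⟩
      exact (hh _).trans (φ.apply_symm_apply v)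
    · intro x
      change h (φ x) = _
      rw [hφ]
      exact hha ⟨b x, hX x⟩
  · rintro ⟨b, a⟩ ⟨b', a'⟩ ⟨hb, ha⟩ ⟨hb', ha'⟩ heq
    have heq' : ∀ x : X, a ⟨b x, hb.1 x⟩ = a' ⟨b' x, hb'.1 x⟩ := fun x => congrFun heq x
    have hbb : b = b' := by
      funext x
      have h1 := congrArg c (heq' x)
      rwa [cp_color a ha, cp_color a' ha'] at h1
    subst hbb
    refine Prod.ext rfl (funext fun x => ?_)
    obtain ⟨y, hy⟩ := autSet_surj hb x
    have hx : (⟨b y, hb.1 y⟩ : X) = x := Subtype.ext hy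
    have h1 := heq' y
    rwa [hx] at h1
  · rintro a ⟨hX, h, hr, ha⟩
    obtain ⟨φ, hφ⟩ := exists_iso_of_surjective H (fun v => c (h v))
      (fun u v huv => hc (h.map_adj huv)) (Set.range_eq_univ.mp hr)
    have hmem : ∀ x : X, c (a x) ∈ X := fun x => by
      have h1 : c (a x) ∈ c '' Set.range a := ⟨_, ⟨x, rfl⟩, rfl⟩
      rwa [hX] at h1
    refine ⟨(fun x => c (a x), fun x => h (φ.symm x)), ⟨⟨hmem, φ, fun x => ?_⟩,
      h.comp φ.symm.toHom, fun v => ?_, fun x => rfl⟩, ?_⟩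
    · rw [hφ, ha]
    · exact (hφ (φ.symm v)).symm.trans (φ.apply_symm_apply v)
    · funext x
      change h (φ.symm (c (a x))) = a x
      rw [← ha, ← hφ, φ.symm_apply_apply]
end

section
/- Let (H,X) be a graphical conjunctive query, let e = {u,v} ∈ E(H), and let (H',X') = (H,X)/e be the query obtained by the edge-contraction operation applied to e, with w the contracted vertex. Then for every finite simple graph G with an H'-coloring c there exists a finite simple graph G' with an H-coloring such that |V(G')| = |V(G)| + |c⁻¹(w)| and #cpHom((H',X') → G) = #cpHom((H,X) → G'). -/
/-- The graph `H/e` obtained from `H` by contracting the edge `e = {u,v}` to the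
vertex `u` (representing the merged vertex `w`); multiple edges and self-loops are
discarded. -/
def contractGraph {α : Type} (H : SimpleGraph α) (u v : α) :
    SimpleGraph ↥({x : α | x ≠ v}) :=
  SimpleGraph.fromRel fun a b => H.Adj a.val b.val ∨ (a.val = u ∧ H.Adj v b.val)

/-- The free-variable set of `(H,X)/e`: the merged vertex is free iff `u ∈ X` or `v ∈ X`. -/
def contractFree {α : Type} (X : Set α) (u v : α) : Set ↥({x : α | x ≠ v}) :=
  {x | x.val ∈ X ∨ (x.val = u ∧ v ∈ X)}

/-- The vertex set of `G'`: all of `W`, together with a second copy of the color class `c⁻¹(w)`. -/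
abbrev SplitVert {α W : Type} {u v : α} (c : W → ↥({x : α | x ≠ v})) : Type :=
  W ⊕ {z : W // (c z).val = u}

/-- The projection `V(G') → V(G)` forgetting which copy a vertex lies in. -/
def splitProj {α W : Type} {u v : α} (c : W → ↥({x : α | x ≠ v})) :
    SplitVert (u := u) c → W :=
  Sum.elim id Subtype.val

/-- The `H`-coloring of `G'`: the original vertices keep their color (with `w` read as `u`), and
the new copies of the vertices of color `w` get color `v`. -/
def splitColor {α W : Type} {u v : α} (c : W → ↥({x : α | x ≠ v})) :
    SplitVert (u := u) c → α :=
  Sum.elim (fun z => (c z).val) (fun _ => v)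

/-- The graph `G'`: vertices are adjacent iff their colors are adjacent in `H` and their projections
are adjacent or equal in `G`. The case of equal projections yields exactly the edges between a
vertex of color `w` and its copy. -/
def splitGraph {α W : Type} {u v : α} (H : SimpleGraph α) (G : SimpleGraph W)
    (c : W → ↥({x : α | x ≠ v})) : SimpleGraph (SplitVert (u := u) c) where
  Adj a b := H.Adj (splitColor c a) (splitColor c b) ∧
    (G.Adj (splitProj c a) (splitProj c b) ∨ splitProj c a = splitProj c b)
  symm := ⟨fun _ _ h => ⟨h.1.symm, h.2.imp (fun h => h.symm) (fun h => h.symm)⟩⟩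
  loopless := ⟨fun _ h => h.1.ne rfl⟩

section

variable {α W : Type} {u v : α} {H : SimpleGraph α} {G : SimpleGraph W}
  {c : W → ↥({x : α | x ≠ v})}

lemma split_ext {a b : SplitVert (u := u) c} (hp : splitProj c a = splitProj c b)
    (hcol : splitColor c a = splitColor c b) : a = b := by
  rcases a with a | a <;> rcases b with b | b
  · exact congrArg Sum.inl hp
  · exact absurd hcol (c a).2
  · exact absurd hcol.symm (c b).2
  · exact congrArg Sum.inr (Subtype.ext hp)

lemma color_proj_of_ne {a : SplitVert (u := u) c} (h : splitColor c a ≠ v) :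
    (c (splitProj c a)).val = splitColor c a := by
  rcases a with a | a
  · rfl
  · exact absurd rfl h

lemma color_proj_of_eq {a : SplitVert (u := u) c} (h : splitColor c a = v) :
    (c (splitProj c a)).val = u := by
  rcases a with a | a
  · exact absurd h (c a).2
  · exact a.2

/-- A color-prescribed homomorphism `H → G'` sends `u` and `v` to the two copies of one vertex: the
alternative is that their projections are adjacent in `G`, but these have the same color `w`. -/
lemma proj_hom_eq (huv : H.Adj u v) (hc : IsColoring G (contractGraph H u v) c)
    (h : H →g splitGraph (u := u) H G c) (hh : ∀ x, splitColor c (h x) = x) :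
    splitProj c (h v) = splitProj c (h u) := by
  rcases (h.map_rel huv).2 with hadj | heq
  · refine absurd (Subtype.ext ?_) (hc hadj).ne
    rw [color_proj_of_eq (hh v), color_proj_of_ne (by rw [hh]; exact huv.ne), hh]
  · exact heq.symm

/-- Projecting a color-prescribed homomorphism `H → G'` gives a homomorphism `H/e → G`. -/
lemma proj_hom_adj (huv : H.Adj u v) (hc : IsColoring G (contractGraph H u v) c)
    (h : H →g splitGraph (u := u) H G c) (hh : ∀ x, splitColor c (h x) = x)
    {x y : ↥({x : α | x ≠ v})} (hxy : (contractGraph H u v).Adj x y) :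
    G.Adj (splitProj c (h x.val)) (splitProj c (h y.val)) := by
  have key : ∀ x y : ↥({x : α | x ≠ v}), x ≠ y →
      (H.Adj x.val y.val ∨ (x.val = u ∧ H.Adj v y.val)) →
      G.Adj (splitProj c (h x.val)) (splitProj c (h y.val)) := by
    intro x y hne hor
    have hcol : ∀ z : ↥({x : α | x ≠ v}), c (splitProj c (h z.val)) = z := fun z =>
      Subtype.ext (by rw [color_proj_of_ne (by rw [hh]; exact z.2), hh])
    have hadj : G.Adj (splitProj c (h x.val)) (splitProj c (h y.val)) ∨
        splitProj c (h x.val) = splitProj c (h y.val) := by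
      rcases hor with hor | ⟨hx, hor⟩
      · exact (h.map_rel hor).2
      · rw [hx, ← proj_hom_eq huv hc h hh]
        exact (h.map_rel hor).2
    refine hadj.resolve_right fun heq => hne ?_
    rw [← hcol x, heq, hcol y]
  rw [contractGraph, SimpleGraph.fromRel_adj] at hxy
  exact hxy.2.elim (key x y hxy.1) (fun h' => (key y x hxy.1.symm h').symm)

/-- Every color-prescribed homomorphism `H/e → G` is the projection of one `H → G'`. -/
lemma exists_lift (huv : H.Adj u v) (g : contractGraph H u v →g G) (hg : ∀ x, c (g x) = x) :
    ∃ h : H →g splitGraph (u := u) H G c, (∀ x, splitColor c (h x) = x) ∧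
      (∀ x : ↥({x : α | x ≠ v}), splitProj c (h x.val) = g x) := by
  classical
  let f : α → SplitVert (u := u) c := fun x =>
    if hx : x = v then Sum.inr ⟨g ⟨u, huv.ne⟩, by rw [hg]⟩ else Sum.inl (g ⟨x, hx⟩)
  have fv : f v = Sum.inr ⟨g ⟨u, huv.ne⟩, by rw [hg]⟩ := dif_pos rfl
  have fne : ∀ x (hx : x ≠ v), f x = Sum.inl (g ⟨x, hx⟩) := fun x hx => dif_neg hx
  have fcol : ∀ x, splitColor c (f x) = x := by
    intro x
    by_cases hx : x = v
    · subst hx; rw [fv]; rfl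
    · rw [fne x hx]; simp [splitColor, hg]
  have fpv : splitProj c (f v) = g ⟨u, huv.ne⟩ := by rw [fv]; rfl
  have fp : ∀ x (hx : x ≠ v), splitProj c (f x) = g ⟨x, hx⟩ := by
    intro x hx; rw [fne x hx]; rfl
  -- An edge `vy` of `H` becomes the edge `wy` of `H/e`, or is contracted when `y = u`.
  have hv : ∀ y (hy : y ≠ v), H.Adj v y →
      G.Adj (g ⟨u, huv.ne⟩) (g ⟨y, hy⟩) ∨ g ⟨u, huv.ne⟩ = g ⟨y, hy⟩ := by
    intro y hy hvy
    by_cases hyu : y = u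
    · subst hyu; exact Or.inr rfl
    · refine Or.inl (g.map_rel ?_)
      rw [contractGraph, SimpleGraph.fromRel_adj]
      exact ⟨fun h => hyu (congrArg Subtype.val h).symm, Or.inl (Or.inr ⟨rfl, hvy⟩)⟩
  refine ⟨⟨f, fun {x y} hxy => ⟨by rw [fcol, fcol]; exact hxy, ?_⟩⟩, fcol, fun x => fp x.1 x.2⟩
  by_cases hx : x = v
  · subst hx
    rw [fpv, fp y hxy.ne.symm]
    exact hv y _ hxy
  · by_cases hy : y = v
    · subst hy
      rw [fpv, fp x hx]
      exact (hv x hx hxy.symm).imp (fun h => h.symm) (fun h => h.symm)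
    · rw [fp x hx, fp y hy]
      refine Or.inl (g.map_rel ?_)
      rw [contractGraph, SimpleGraph.fromRel_adj]
      exact ⟨fun h => hxy.ne (congrArg Subtype.val h), Or.inl (Or.inl hxy)⟩

open Classical in
/-- The map from partial assignments `X → V(G')` to partial assignments `X' → V(G)` induced by the
projection; the value at `w` is read off at `u` if `u ∈ X`, and at `v` otherwise. -/
noncomputable def projAssign {X : Set α} (b : X → SplitVert (u := u) c) :
    contractFree X u v → W := fun x =>
  if hx : x.1.val ∈ X then splitProj c (b ⟨x.1.val, hx⟩)
  else splitProj c (b ⟨v, (x.2.resolve_left hx).2⟩)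

lemma projAssign_eq (huv : H.Adj u v) (hc : IsColoring G (contractGraph H u v) c) {X : Set α}
    {b : X → SplitVert (u := u) c}
    (h : H →g splitGraph (u := u) H G c) (hh : ∀ x, splitColor c (h x) = x)
    (hb : ∀ x : X, h x.val = b x) (x : contractFree X u v) :
    projAssign b x = splitProj c (h x.1.val) := by
  unfold projAssign
  split_ifs with hx
  · rw [← hb]
  · rw [← hb, (x.2.resolve_left hx).1]
    exact proj_hom_eq huv hc h hh

end

/-- Edge contraction: let `(H',X') = (H,X)/e` with `e = {u,v}` and contracted vertex `w`.
For every `H'`-colored graph `G` there exists an `H`-colored graph `G'` with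
`|V(G')| = |V(G)| + |c⁻¹(w)|` and the same number of color-prescribed partial
homomorphisms. -/
theorem stmt_6 {α : Type} [Fintype α] (H : SimpleGraph α) (X : Set α)
    (u v : α) (huv : H.Adj u v)
    (W : Type) [Fintype W] (G : SimpleGraph W)
    (c : W → ↥({x : α | x ≠ v}))
    (hc : IsColoring G (contractGraph H u v) c) :
    ∃ (W' : Type) (fW' : Fintype W') (G' : SimpleGraph W') (c' : W' → α),
      IsColoring G' H c' ∧
      @Fintype.card W' fW' = Fintype.card W + (c ⁻¹' {⟨u, huv.ne⟩}).ncard ∧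
      (cpHoms (contractGraph H u v) (contractFree X u v) G c).ncard =
        (cpHoms H X G' c').ncard := by
  classical
  refine ⟨SplitVert (u := u) c, inferInstance, splitGraph H G c, splitColor c,
    fun _ _ h => h.1, ?_, ?_⟩
  · rw [Fintype.card_sum, ← Nat.card_coe_set_eq, ← Nat.card_eq_fintype_card
      (α := {z : W // (c z).val = u})]
    congr 1
    exact Nat.card_congr (Equiv.subtypeEquivRight fun z => by simp [Subtype.ext_iff])
  · symm
    refine Set.ncard_congr (fun b _ => projAssign b) ?_ ?_ ?_
    · rintro b ⟨h, hh, hb⟩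
      refine ⟨⟨fun x => splitProj c (h x.val), fun hxy => proj_hom_adj huv hc h hh hxy⟩,
        fun x => Subtype.ext ?_, fun x => (projAssign_eq huv hc h hh hb x).symm⟩
      change (c (splitProj c (h x.val))).val = x.val
      rw [color_proj_of_ne (by rw [hh]; exact x.2), hh]
    · rintro b₁ b₂ ⟨h₁, hh₁, hb₁⟩ ⟨h₂, hh₂, hb₂⟩ heq
      have key : ∀ x : contractFree X u v,
          splitProj c (h₁ x.1.val) = splitProj c (h₂ x.1.val) := fun x => by
        rw [← projAssign_eq huv hc h₁ hh₁ hb₁, ← projAssign_eq huv hc h₂ hh₂ hb₂]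
        exact congrFun heq x
      funext x
      rw [← hb₁, ← hb₂]
      refine split_ext ?_ (by rw [hh₁, hh₂])
      by_cases hx : x.val = v
      · rw [hx, proj_hom_eq huv hc h₁ hh₁, proj_hom_eq huv hc h₂ hh₂]
        exact key ⟨⟨u, huv.ne⟩, Or.inr ⟨rfl, hx ▸ x.2⟩⟩
      · exact key ⟨⟨x.val, hx⟩, Or.inl x.2⟩
    · rintro a ⟨g, hg, ha⟩
      obtain ⟨h, hh, hp⟩ := exists_lift huv g hg
      refine ⟨fun x => h x.val, ⟨h, hh, fun _ => rfl⟩, ?_⟩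
      funext x
      rw [projAssign_eq huv hc h hh (fun _ => rfl) x, hp, ha]
end

section
/- Let (H,X) be a graphical conjunctive query, let G be a finite simple graph, and let m : V(G) → ℕ satisfy m(v) ≥ 1 for all v. Let G[m] be the blow-up of G: its vertex set is the set of pairs (v,i) with v ∈ V(G) and 1 ≤ i ≤ m(v), and (v,i) is adjacent to (w,j) in G[m] if and only if v is adjacent to w in G. Then #Hom((H,X) → G[m]) = Σ_{a ∈ Hom((H,X) → G)} Π_{x ∈ X} m(a(x)). -/
theorem mem_partialHoms_blowup {α β : Type} (H : SimpleGraph α) (X : Set α) (G : SimpleGraph β)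
    (m : β → ℕ) (hm : ∀ v, 1 ≤ m v) (b : X → Σ v : β, Fin (m v)) :
    b ∈ partialHoms H X (SimpleGraph.comap (Sigma.fst : (Σ v : β, Fin (m v)) → β) G) ↔
      (fun x => (b x).1) ∈ partialHoms H X G := by
  classical
  constructor
  · rintro ⟨h, hh⟩
    exact ⟨⟨fun v => (h v).1, fun {u v} huv => h.map_rel huv⟩,
      fun x => congrArg Sigma.fst (hh x)⟩
  · rintro ⟨h, hh⟩
    let f : α → Σ v : β, Fin (m v) := fun v => if hv : v ∈ X then b ⟨v, hv⟩ else ⟨h v, 0, hm _⟩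
    have hf : ∀ v, (f v).1 = h v := by
      intro v
      by_cases hv : v ∈ X
      · simpa [f, hv] using (hh ⟨v, hv⟩).symm
      · simp [f, hv]
    refine ⟨⟨f, fun {u v} huv => ?_⟩, fun x => ?_⟩
    · rw [SimpleGraph.comap_adj, hf, hf]
      exact h.map_rel huv
    · change f x = b x
      simp [f]

/-- Splitting a map into the vertices of the blow-up into its projection and its choice of clones,
restricted to partial homomorphisms. -/
def partialHomsBlowupEquiv {α β : Type} (H : SimpleGraph α) (X : Set α) (G : SimpleGraph β)
    (m : β → ℕ) (hm : ∀ v, 1 ≤ m v) :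
    partialHoms H X (SimpleGraph.comap (Sigma.fst : (Σ v : β, Fin (m v)) → β) G) ≃
      Σ a : partialHoms H X G, ∀ x : X, Fin (m (a.1 x)) where
  toFun b := ⟨⟨fun x => (b.1 x).1, (mem_partialHoms_blowup H X G m hm b.1).1 b.2⟩,
    fun x => (b.1 x).2⟩
  invFun p := ⟨fun x => ⟨p.1.1 x, p.2 x⟩, (mem_partialHoms_blowup H X G m hm _).2 p.1.2⟩
  left_inv _ := rfl
  right_inv _ := rfl

/-- The number of partial homomorphisms into the blow-up `G[m]` (each vertex `v`
replaced by `m v` clones) is `Σ_a Π_{x ∈ X} m(a x)` over partial homomorphisms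
`a` into `G`. The blow-up is realized as the comap of `G` along the projection
`(Σ v, Fin (m v)) → V(G)`. -/
theorem stmt_7 {α β : Type} [Fintype α] [Fintype β]
    (H : SimpleGraph α) (X : Set α) (G : SimpleGraph β)
    (m : β → ℕ) (hm : ∀ v, 1 ≤ m v) :
    (partialHoms H X
        (SimpleGraph.comap (Sigma.fst : (Σ v : β, Fin (m v)) → β) G)).ncard =
      ∑ᶠ a ∈ partialHoms H X G, ∏ᶠ x : X, m (a x) := by
  classical
  rw [← Nat.card_coe_set_eq, Nat.card_congr (partialHomsBlowupEquiv H X G m hm), Nat.card_sigma,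
    ← finsum_set_coe_eq_finsum_mem, finsum_eq_sum_of_fintype]
  refine Finset.sum_congr rfl fun a _ => ?_
  rw [Nat.card_pi, finprod_eq_prod_of_fintype]
  simp
end

section
/- Write (H,X) ≥ (H',X') if there exists a surjective map s : X → X' that extends to a graph homomorphism from H to H'. If (H,X) and (H',X') are minimal graphical conjunctive queries with (H,X) ≥ (H',X') and (H',X') ≥ (H,X), then there exists a graph isomorphism φ : H → H' with φ(X) = X'. -/
/-- `(H,X) ≥ (H',X')`: there is a surjective map `s : X → X'` that extends to a
graph homomorphism from `H` to `H'`. -/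
def QueryGE {α β : Type} (H : SimpleGraph α) (X : Set α)
    (H' : SimpleGraph β) (X' : Set β) : Prop :=
  ∃ s : X → X', Function.Surjective s ∧ ∃ h : H →g H', ∀ x : X, h x.val = (s x).val

lemma exists_iterate_eq_id {α : Type} [Finite α] {s : α → α} (hs : Function.Bijective s) :
    ∃ m, s^[m + 1] = id := by
  have hpos := orderOf_pos (Equiv.ofBijective s hs)
  refine ⟨orderOf (Equiv.ofBijective s hs) - 1, ?_⟩
  rw [Nat.sub_add_cancel hpos]
  have h := Equiv.Perm.iterate_eq_pow (Equiv.ofBijective s hs)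
    (orderOf (Equiv.ofBijective s hs))
  rw [pow_orderOf_eq_one] at h
  exact h

/-- Otherwise `H` could be replaced by its subgraph induced on the range of `f`, which gives an
equivalent query with fewer vertices. -/
lemma surjective_of_fixes {α : Type} [Fintype α] {H : SimpleGraph α} {X : Set α}
    (hmin : MinimalQuery H X) (f : H →g H) (hf : ∀ x ∈ X, f x = x) :
    Function.Surjective f := by
  classical
  have hX : ∀ x ∈ X, x ∈ Set.range f := fun x hx => ⟨x, hf x hx⟩
  have key : QueryEquiv H X (H.induce (Set.range f)) (Subtype.val ⁻¹' X) := by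
    intro γ _ G
    refine Set.ncard_congr (fun a _ y => a ⟨y.1.1, y.2⟩) ?_ ?_ ?_
    · rintro a ⟨h, hh⟩
      exact ⟨h.comp (SimpleGraph.Embedding.induce (Set.range f)).toHom,
        fun y => hh ⟨y.1.1, y.2⟩⟩
    · intro a b _ _ hab
      funext x
      exact congrFun hab ⟨⟨x.1, hX x.1 x.2⟩, x.2⟩
    · rintro b ⟨h, hh⟩
      refine ⟨fun x => b ⟨⟨x.1, hX x.1 x.2⟩, x.2⟩,
        ⟨⟨fun v => h ⟨f v, Set.mem_range_self v⟩, fun {u v} huv => h.map_adj (f.map_adj huv)⟩, ?_⟩, rfl⟩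
      intro x
      refine Eq.trans ?_ (hh ⟨⟨x.1, hX x.1 x.2⟩, x.2⟩)
      exact congrArg h (Subtype.ext (hf x.1 x.2))
  have hcard : Fintype.card α ≤ Fintype.card (Set.range f) := by
    rcases hmin _ _ _ key with h | h
    · exact h.le
    · exact h.1.le
  rw [← Set.range_eq_univ, ← Set.toFinset_inj, Set.toFinset_univ]
  apply Finset.eq_univ_of_card
  rw [Set.toFinset_card]
  exact le_antisymm (Fintype.card_subtype_le _) hcard

lemma exists_hom_iterate {α : Type} {H : SimpleGraph α} (g : H →g H) (n : ℕ) :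
    ∃ f : H →g H, ⇑f = g^[n] := by
  induction n with
  | zero => exact ⟨SimpleGraph.Hom.id, rfl⟩
  | succ n ih =>
    obtain ⟨f, hf⟩ := ih
    exact ⟨f.comp g, by rw [Function.iterate_succ, ← hf]; rfl⟩

/-- A power of `g` fixes `X` pointwise, and `surjective_of_fixes` applies to that power. -/
lemma bijective_of_permutes {α : Type} [Fintype α] {H : SimpleGraph α} {X : Set α}
    (hmin : MinimalQuery H X) (g : H →g H) (s : X → X) (hs : Function.Surjective s)
    (hg : ∀ x : X, g x.1 = (s x).1) : Function.Bijective g := by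
  have hsb : Function.Bijective s := Finite.surjective_iff_bijective.mp hs
  obtain ⟨m, hsm⟩ := exists_iterate_eq_id hsb
  have hiter : ∀ (m : ℕ) (x : X), g^[m] x.1 = (s^[m] x).1 := by
    intro m
    induction m with
    | zero => intro x; rfl
    | succ m ih => intro x; rw [Function.iterate_succ_apply, hg, ih, Function.iterate_succ_apply]
  obtain ⟨f, hf⟩ := exists_hom_iterate g (m + 1)
  have hfs := surjective_of_fixes hmin f (fun x hx => by
    rw [hf, hiter (m + 1) ⟨x, hx⟩, hsm]; rfl)
  rw [hf, Function.iterate_succ'] at hfs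
  exact Finite.surjective_iff_bijective.mp hfs.of_comp

/-- The inverse of a bijective endomorphism of a finite graph is one of its powers, hence again a
homomorphism. -/
lemma adj_of_map_adj {α : Type} [Fintype α] {H : SimpleGraph α} (g : H →g H)
    (hg : Function.Bijective g) {a b : α} (hab : H.Adj (g a) (g b)) : H.Adj a b := by
  obtain ⟨m, hid⟩ := exists_iterate_eq_id hg
  rw [Function.iterate_succ] at hid
  obtain ⟨f, hf⟩ := exists_hom_iterate g m
  have h := f.map_adj hab
  rw [hf] at h
  have ha := congrFun hid a
  have hb := congrFun hid b
  simp only [Function.comp_apply, id_eq] at ha hb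
  rwa [ha, hb] at h

/-- Two minimal graphical conjunctive queries with `(H,X) ≥ (H',X')` and
`(H',X') ≥ (H,X)` are isomorphic via an isomorphism mapping `X` onto `X'`. -/
theorem stmt_9 {α β : Type} [Fintype α] [Fintype β]
    (H : SimpleGraph α) (X : Set α) (H' : SimpleGraph β) (X' : Set β)
    (hmin : MinimalQuery H X) (hmin' : MinimalQuery H' X')
    (hge : QueryGE H X H' X') (hge' : QueryGE H' X' H X) :
    ∃ φ : H ≃g H', ⇑φ '' X = X' := by
  obtain ⟨s, hs, h, hh⟩ := hge
  obtain ⟨s', hs', h', hh'⟩ := hge'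
  have hb : Function.Bijective (h'.comp h) :=
    bijective_of_permutes hmin (h'.comp h) (s' ∘ s) (hs'.comp hs) (fun x => by
      simp [hh, hh'])
  have hb' : Function.Bijective (h.comp h') :=
    bijective_of_permutes hmin' (h.comp h') (s ∘ s') (hs.comp hs') (fun x => by
      simp [hh, hh'])
  have hinj : Function.Injective h := Function.Injective.of_comp (f := h') hb.1
  have hsurj : Function.Surjective h := Function.Surjective.of_comp (g := h') hb'.2
  refine ⟨⟨Equiv.ofBijective h ⟨hinj, hsurj⟩, fun {a b} => ⟨fun hab => ?_, fun hab => ?_⟩⟩, ?_⟩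
  · exact adj_of_map_adj (h'.comp h) hb (h'.map_adj hab)
  · exact h.map_adj hab
  · change h '' X = X'
    ext y
    constructor
    · rintro ⟨x, hx, rfl⟩
      rw [hh ⟨x, hx⟩]
      exact (s ⟨x, hx⟩).2
    · intro hy
      obtain ⟨x, hx⟩ := hs ⟨y, hy⟩
      exact ⟨x.1, x.2, by rw [hh, hx]⟩
end

section
/- For every integer g > 0 there exists an integer κ ≥ 1 such that the following holds: for every finite simple graph G and every node-well-linked set S ⊆ V(G) with |S| ≥ κ, there exists a minor mapping η from the (g × g)-grid to G such that for every j ∈ {1,…,g} the set η(v_{1,j}) contains at least one element of S. -/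
/-!
Suppose that `G` has no grid minor whose first column is rooted in `S`.

*Rerouting* (`tool`). Consider paths from `S` to some set which, among all systems of equally many
disjoint paths, have the fewest edges outside a given family of disjoint connected sets. Menger's
theorem shows (`cut`, `order`) that many of the sets are passed by all the paths in the same order.
If many of them met `r` common paths, then, a large connected graph containing a long path or a
large star (`path_or_star`, applied to the graph of direct links between paths inside each set), the
paths would form the rows and pieces of the sets the columns of a rooted grid (`grid_of_order`).
Hence only boundedly many sets of the family meet `r` or more of the paths.

*Blobs* (`blobs`). A large well-linked set `S` has many vertices in each of many disjoint connected
sets. Either a connected set with many vertices of `S` splits into such pieces, or there is a vertex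
(a hub) with a large fan to `S` (`blobs_or_fan`). Well-linkedness allows one to repeat this after
deleting the hubs found so far (`big_component`), and many hubs yield the desired sets by
Menger's theorem in a graph where each hub is replaced by several copies (`blobs_of_hubs`).

*Assembly* (`rooted_grid`). Any two blobs are linked by many paths which, after rerouting, meet
other blobs rarely, with a bounded number of exceptional blobs. A counting argument (`selection`)
chooses one blob for every vertex of the grid such that no chosen blob is exceptional for a chosen
pair. Rerouting again, one pair at a time, produces disjoint connectors for all edges of the grid
(`clean`). Blobs and connectors together form a grid minor (`build`), and since every blob meets
`S`, this minor is rooted in `S`, a contradiction.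
-/

/-- A set `S` is node-well-linked in `G` if for all disjoint equal-sized subsets
`A, B ⊆ S` there are `|A|` pairwise vertex-disjoint paths joining `A` to `B`,
such that every vertex of `A ∪ B` is an endpoint of one of the paths. -/
def NodeWellLinked {V : Type} (G : SimpleGraph V) (S : Set V) : Prop :=
  ∀ A B : Finset V, (A : Set V) ⊆ S → (B : Set V) ⊆ S → Disjoint A B → A.card = B.card →
    ∃ P : A → (u : V) × (v : V) × G.Walk u v,
      (∀ a, (P a).1 ∈ A ∧ (P a).2.1 ∈ B ∧ (P a).2.2.IsPath) ∧
      (∀ a b : A, a ≠ b → ∀ x, x ∈ (P a).2.2.support → x ∉ (P b).2.2.support) ∧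
      (∀ v : V, (v ∈ A ∨ v ∈ B) → ∃ a, (P a).1 = v ∨ (P a).2.1 = v)

/-- A minor mapping from `F` to `G`: branch sets are nonempty, connected, pairwise
disjoint, and edges of `F` are realized between the corresponding branch sets. -/
def IsMinorMapping {α V : Type} (F : SimpleGraph α) (G : SimpleGraph V)
    (η : α → Set V) : Prop :=
  (∀ v, (η v).Nonempty ∧ (G.induce (η v)).Connected) ∧
  (∀ u v, u ≠ v → Disjoint (η u) (η v)) ∧
  (∀ u v, F.Adj u v → ∃ u' ∈ η u, ∃ v' ∈ η v, G.Adj u' v')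

/-- The (g × g)-grid graph on `Fin g × Fin g`. -/
def gridGraph (g : ℕ) : SimpleGraph (Fin g × Fin g) :=
  SimpleGraph.fromRel fun p q =>
    (p.1 = q.1 ∧ (p.2 : ℕ) + 1 = (q.2 : ℕ)) ∨ (p.2 = q.2 ∧ (p.1 : ℕ) + 1 = (q.1 : ℕ))

namespace RootedGrids

variable {V : Type}

/-! ### Reachability and connected vertex sets -/

/-- `Rch G U x y`: there is a walk from `x` to `y` in `G` all of whose edges have both ends
in `U`. (It is reflexive also at vertices outside `U`.) -/
def Rch (G : SimpleGraph V) (U : Set V) : V → V → Prop :=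
  Relation.ReflTransGen (fun a b => G.Adj a b ∧ a ∈ U ∧ b ∈ U)

theorem Rch.refl {G : SimpleGraph V} {U : Set V} (x : V) : Rch G U x x :=
  Relation.ReflTransGen.refl

theorem Rch.trans {G : SimpleGraph V} {U : Set V} {x y z : V} (h : Rch G U x y)
    (h' : Rch G U y z) : Rch G U x z :=
  Relation.ReflTransGen.trans h h'

theorem Rch.single {G : SimpleGraph V} {U : Set V} {x y : V} (h : G.Adj x y) (hx : x ∈ U)
    (hy : y ∈ U) : Rch G U x y :=
  Relation.ReflTransGen.single ⟨h, hx, hy⟩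

theorem Rch.symm {G : SimpleGraph V} {U : Set V} {x y : V} (h : Rch G U x y) : Rch G U y x := by
  induction h with
  | refl => exact Rch.refl _
  | tail _ h2 ih => exact (Rch.single h2.1.symm h2.2.2 h2.2.1).trans ih

theorem Rch.mem {G : SimpleGraph V} {U : Set V} {x y : V} (h : Rch G U x y) (hx : x ∈ U) :
    y ∈ U := by
  induction h with
  | refl => exact hx
  | tail _ h2 _ => exact h2.2.2

theorem Rch.mono {G G' : SimpleGraph V} {U U' : Set V} {x y : V} (h : Rch G U x y)
    (hU : U ⊆ U') (hG : ∀ a b, a ∈ U → b ∈ U → G.Adj a b → G'.Adj a b) : Rch G' U' x y := by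
  induction h with
  | refl => exact Rch.refl _
  | tail _ h2 ih =>
    exact ih.trans (Rch.single (hG _ _ h2.2.1 h2.2.2 h2.1) (hU h2.2.1) (hU h2.2.2))

theorem Rch.mono_set {G : SimpleGraph V} {U U' : Set V} {x y : V} (h : Rch G U x y)
    (hU : U ⊆ U') : Rch G U' x y :=
  h.mono hU fun _ _ _ _ h => h

/-- A walk leaving the set `P` uses an edge leaving `P`. -/
theorem Rch.exit {G : SimpleGraph V} {U : Set V} {x y : V} (h : Rch G U x y) {P : V → Prop}
    (hx : P x) (hy : ¬ P y) : ∃ c d, G.Adj c d ∧ c ∈ U ∧ d ∈ U ∧ P c ∧ ¬ P d := by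
  induction h with
  | refl => exact absurd hx hy
  | @tail b c _ h2 ih =>
    by_cases hb : P b
    · exact ⟨b, c, h2.1, h2.2.1, h2.2.2, hb, hy⟩
    · exact ih hb

/-- `Cn G U`: the vertex set `U` is nonempty and induces a connected subgraph of `G`. -/
def Cn (G : SimpleGraph V) (U : Set V) : Prop :=
  U.Nonempty ∧ ∀ x ∈ U, ∀ y ∈ U, Rch G U x y

theorem Cn.of_center {G : SimpleGraph V} {U : Set V} {x : V} (hx : x ∈ U)
    (h : ∀ y ∈ U, Rch G U x y) : Cn G U :=
  ⟨⟨x, hx⟩, fun a ha b hb => (h a ha).symm.trans (h b hb)⟩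

theorem Cn.singleton {G : SimpleGraph V} (x : V) : Cn G {x} :=
  Cn.of_center (x := x) rfl (by rintro y rfl; exact Rch.refl _)

theorem Cn.union {G : SimpleGraph V} {U W : Set V} (hU : Cn G U) (hW : Cn G W) {x : V}
    (hx : x ∈ U) (hx' : x ∈ W) : Cn G (U ∪ W) := by
  refine Cn.of_center (x := x) (Or.inl hx) ?_
  rintro y (hy | hy)
  · exact (hU.2 x hx y hy).mono_set Set.subset_union_left
  · exact (hW.2 x hx' y hy).mono_set Set.subset_union_right

theorem Cn.union_adj {G : SimpleGraph V} {U W : Set V} (hU : Cn G U) (hW : Cn G W) {x y : V}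
    (hx : x ∈ U) (hy : y ∈ W) (h : G.Adj x y) : Cn G (U ∪ W) := by
  refine Cn.of_center (x := x) (Or.inl hx) ?_
  rintro z (hz | hz)
  · exact (hU.2 x hx z hz).mono_set Set.subset_union_left
  · exact (Rch.single h (Or.inl hx) (Or.inr hy)).trans
      ((hW.2 y hy z hz).mono_set Set.subset_union_right)

theorem Cn.mono {G G' : SimpleGraph V} {U : Set V} (h : Cn G U)
    (hG : ∀ a b, a ∈ U → b ∈ U → G.Adj a b → G'.Adj a b) : Cn G' U :=
  ⟨h.1, fun x hx y hy => (h.2 x hx y hy).mono subset_rfl hG⟩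

theorem Cn.connected {G : SimpleGraph V} {U : Set V} (h : Cn G U) :
    (G.induce U).Connected := by
  have key : ∀ x (hx : x ∈ U) y, Rch G U x y →
      ∃ hy : y ∈ U, (G.induce U).Reachable ⟨x, hx⟩ ⟨y, hy⟩ := by
    intro x hx y hxy
    induction hxy with
    | refl => exact ⟨hx, SimpleGraph.Reachable.refl _⟩
    | tail _ h2 ih =>
      obtain ⟨hy, ih⟩ := ih
      refine ⟨h2.2.2, ih.trans (SimpleGraph.Adj.reachable ?_)⟩
      simpa using h2.1
  obtain ⟨z, hz⟩ := h.1
  have : Nonempty U := ⟨⟨z, hz⟩⟩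
  refine SimpleGraph.Connected.mk ?_
  rintro ⟨x, hx⟩ ⟨y, hy⟩
  exact (key x hx y (h.2 x hx y hy)).2

/-- The vertices reachable from `x ∈ U` inside `U` form a connected set. -/
theorem Cn.component {G : SimpleGraph V} {U : Set V} (x : V) :
    Cn G {y | Rch G U x y} := by
  refine Cn.of_center (x := x) (Rch.refl x) ?_
  have key : ∀ y, Rch G U x y → Rch G {y | Rch G U x y} x y := by
    intro y hy
    induction hy with
    | refl => exact Rch.refl _
    | tail h1 h2 ih => exact ih.trans (Rch.single h2.1 h1 (h1.tail h2))
  exact key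

/-! ### Systems of disjoint paths -/

/-- `t` pairwise disjoint paths of `G` from `A` to `B`. The `j`-th path has the vertices
`q j 0, …, q j (len j)`; the field `inj` says both that each path repeats no vertex and that
different paths are disjoint. Values `q j i` with `i > len j` are irrelevant. -/
structure PathSys (G : SimpleGraph V) (A B : Set V) (t : ℕ) where
  len : Fin t → ℕ
  q : Fin t → ℕ → V
  adj : ∀ j i, i < len j → G.Adj (q j i) (q j (i + 1))
  inj : ∀ j i j' i', i ≤ len j → i' ≤ len j' → q j i = q j' i' → j = j' ∧ i = i'
  start : ∀ j, q j 0 ∈ A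
  fin : ∀ j, q j (len j) ∈ B

namespace PathSys

variable {G : SimpleGraph V} {A B : Set V} {t : ℕ}

/-- The vertex set of the `j`-th path. -/
def vs (Q : PathSys G A B t) (j : Fin t) : Set V := {x | ∃ i ≤ Q.len j, Q.q j i = x}

/-- The subsystem of the paths selected by an injection of index sets. -/
def sub (Q : PathSys G A B t) {t' : ℕ} (σ : Fin t' → Fin t) (hσ : Function.Injective σ) :
    PathSys G A B t' where
  len j := Q.len (σ j)
  q j := Q.q (σ j)
  adj j i h := Q.adj (σ j) i h
  inj j i j' i' h h' e := by
    obtain ⟨h1, h2⟩ := Q.inj _ _ _ _ h h' e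
    exact ⟨hσ h1, h2⟩
  start j := Q.start _
  fin j := Q.fin _

theorem vs_disj (Q : PathSys G A B t) {j j' : Fin t} {x : V} (h : x ∈ Q.vs j)
    (h' : x ∈ Q.vs j') : j = j' := by
  obtain ⟨i, hi, rfl⟩ := h
  obtain ⟨i', hi', e⟩ := h'
  exact (Q.inj _ _ _ _ hi' hi e).1.symm

/-- The same paths, regarded as paths of another graph. -/
def change (Q : PathSys G A B t) {G' : SimpleGraph V} {A' B' : Set V}
    (hG : ∀ j i, i < Q.len j → G'.Adj (Q.q j i) (Q.q j (i + 1)))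
    (hA : ∀ j, Q.q j 0 ∈ A') (hB : ∀ j, Q.q j (Q.len j) ∈ B') : PathSys G' A' B' t where
  len := Q.len
  q := Q.q
  adj := hG
  inj := Q.inj
  start := hA
  fin := hB

/-- A segment of a path all of whose edges lie in `G'` and whose vertices lie in `U`. -/
theorem rch_seg (Q : PathSys G A B t) {G' : SimpleGraph V} {U : Set V} (j : Fin t) (a b : ℕ)
    (hab : a ≤ b) (hG : ∀ i, a ≤ i → i < b → G'.Adj (Q.q j i) (Q.q j (i + 1)))
    (hU : ∀ i, a ≤ i → i ≤ b → Q.q j i ∈ U) : Rch G' U (Q.q j a) (Q.q j b) := by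
  induction b, hab using Nat.le_induction with
  | base => exact Rch.refl _
  | succ b hab ih =>
    refine (ih (fun i h h' => hG i h (by omega)) (fun i h h' => hU i h (by omega))).trans ?_
    exact Rch.single (hG b hab (by omega)) (hU b hab (by omega)) (hU (b + 1) (by omega) le_rfl)

/-- Segments of paths are connected. -/
theorem cn_seg (Q : PathSys G A B t) {G' : SimpleGraph V} (j : Fin t) (a b : ℕ)
    (hab : a ≤ b) (hG : ∀ i, a ≤ i → i < b → G'.Adj (Q.q j i) (Q.q j (i + 1))) :
    Cn G' {x | ∃ i, a ≤ i ∧ i ≤ b ∧ Q.q j i = x} := by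
  refine Cn.of_center (x := Q.q j a) ⟨a, le_rfl, hab, rfl⟩ ?_
  rintro y ⟨i, h1, h2, rfl⟩
  exact Q.rch_seg j a i h1 (fun k hk hk' => hG k hk (by omega))
    (fun k hk hk' => ⟨k, hk, by omega, rfl⟩)

end PathSys

/-! ### Menger's theorem -/

/-- If `S` separates `A` from `B` in `G'`, where `G'` is `G` without the edge `xy`, and `y` is
not reachable from `A` in `G' - S`, then every set separating `A` from `S ∪ {x}` in `G'`
separates `A` from `B` in `G`. -/
theorem menger_aux (G G' : SimpleGraph V) (A B S T : Set V) (x y : V)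
    (hGG' : ∀ c d, G.Adj c d → G'.Adj c d ∨ (c = x ∧ d = y) ∨ (c = y ∧ d = x))
    (hsep : ∀ a ∈ A, ∀ b ∈ B, a ∉ S → ¬ Rch G' Sᶜ a b)
    (hy : ∀ a ∈ A, a ∉ S → ¬ Rch G' Sᶜ a y)
    (h : ∃ a ∈ A, ∃ b ∈ B, a ∉ T ∧ Rch G Tᶜ a b) :
    ∃ a ∈ A, ∃ u ∈ insert x S, a ∉ T ∧ Rch G' Tᶜ a u := by
  obtain ⟨a, ha, b, hb, haT, hab⟩ := h
  by_cases haS : a ∈ insert x S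
  · exact ⟨a, ha, a, haS, haT, Rch.refl _⟩
  have hR : ∀ z, Rch G' (T ∪ insert x S)ᶜ a z → Rch G' Sᶜ a z ∧ Rch G' Tᶜ a z := by
    intro z hz
    exact ⟨hz.mono_set fun w hw hw' => hw (Or.inr (Or.inr hw')),
      hz.mono_set fun w hw hw' => hw (Or.inl hw')⟩
  have haS' : a ∉ S := fun h => haS (Or.inr h)
  obtain ⟨c, d, hcd, hc, hd, hPc, hPd⟩ := hab.exit
    (P := fun z => Rch G' (T ∪ insert x S)ᶜ a z) (Rch.refl a)
    (fun hb' => hsep a ha b hb haS' (hR b hb').1)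
  have hcm : c ∈ (T ∪ insert x S)ᶜ := Rch.mem hPc (by rintro (h | h); exacts [haT h, haS h])
  rcases hGG' c d hcd with h | ⟨rfl, rfl⟩ | ⟨rfl, rfl⟩
  · have hdS : d ∈ insert x S := by
      by_contra hdS
      exact hPd (Rch.trans hPc (Rch.single h hcm (by rintro (h | h); exacts [hd h, hdS h])))
    exact ⟨a, ha, d, hdS, haT, (hR c hPc).2.trans (Rch.single h hc hd)⟩
  · exact absurd (Or.inr (Or.inl rfl)) hcm
  · exact absurd (hR _ hPc).1 (hy a ha haS')

/-- Gluing step of Menger's theorem: `P` goes from `A` to `S ∪ {x}`, and `R` from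
`S ∪ {y}` to `B`, where `S` has fewer than `k` vertices and separates `A` from `B` in `G'`;
together with the edge `xy` they form a system of `k` paths from `A` to `B`. -/
theorem menger_glue (G G' : SimpleGraph V) (A B : Set V) (S : Finset V) (x y : V) (k : ℕ)
    (hle : G' ≤ G) (hxy : G.Adj x y) (hx : x ∉ S) (hS : S.card < k)
    (hsep : ∀ a ∈ A, ∀ b ∈ B, a ∉ S → ¬ Rch G' (↑S : Set V)ᶜ a b)
    (P : PathSys G' A (insert x (↑S : Set V)) k) (R : PathSys G' (insert y (↑S : Set V)) B k) :
    Nonempty (PathSys G A B k) := by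
  classical
  have hPend : ∀ u ∈ insert x S, ∃ j, P.q j (P.len j) = u := by
    have hinj : Function.Injective (fun j => P.q j (P.len j)) := fun j j' h =>
      (P.inj _ _ _ _ le_rfl le_rfl h).1
    have himg : Finset.univ.image (fun j => P.q j (P.len j)) = insert x S := by
      apply Finset.eq_of_subset_of_card_le
      · intro u hu
        obtain ⟨j, -, rfl⟩ := Finset.mem_image.1 hu
        have := P.fin j
        simpa using this
      · rw [Finset.card_image_of_injective _ hinj, Finset.card_univ, Fintype.card_fin]
        exact (Finset.card_insert_le _ _).trans hS
    intro u hu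
    rw [← himg] at hu
    obtain ⟨j, -, h⟩ := Finset.mem_image.1 hu
    exact ⟨j, h⟩
  have hRst : ∀ u ∈ insert y S, ∃ j, R.q j 0 = u := by
    have hinj : Function.Injective (fun j => R.q j 0) := fun j j' h =>
      (R.inj _ _ _ _ (Nat.zero_le _) (Nat.zero_le _) h).1
    have himg : Finset.univ.image (fun j => R.q j 0) = insert y S := by
      apply Finset.eq_of_subset_of_card_le
      · intro u hu
        obtain ⟨j, -, rfl⟩ := Finset.mem_image.1 hu
        have := R.start j
        simpa using this
      · rw [Finset.card_image_of_injective _ hinj, Finset.card_univ, Fintype.card_fin]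
        exact (Finset.card_insert_le _ _).trans hS
    intro u hu
    rw [← himg] at hu
    obtain ⟨j, -, h⟩ := Finset.mem_image.1 hu
    exact ⟨j, h⟩
  have hPS : ∀ j i, i ≤ P.len j → P.q j i ∈ insert x S → i = P.len j := by
    intro j i hi hm
    obtain ⟨j', hj'⟩ := hPend _ hm
    obtain ⟨rfl, h⟩ := P.inj _ _ _ _ hi le_rfl hj'.symm
    exact h
  have hRS : ∀ j i, i ≤ R.len j → R.q j i ∈ insert y S → i = 0 := by
    intro j i hi hm
    obtain ⟨j', hj'⟩ := hRst _ hm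
    obtain ⟨rfl, h⟩ := R.inj _ _ _ _ hi (Nat.zero_le _) hj'.symm
    exact h
  -- The two systems meet only in `S`.
  have hmeet : ∀ j i j' i', i ≤ P.len j → i' ≤ R.len j' → P.q j i = R.q j' i' →
      P.q j i ∈ S := by
    intro j i j' i' hi hi' he
    by_contra hnS
    have h1 : ∀ l, 0 ≤ l → l ≤ i → P.q j l ∈ ((↑S : Set V))ᶜ := by
      intro l _ hl hm
      have hm : P.q j l ∈ S := hm
      have := hPS j l (by omega) (Finset.mem_insert_of_mem hm)
      have : l = i := by omega
      exact hnS (this ▸ hm)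
    have h2 : ∀ l, i' ≤ l → l ≤ R.len j' → R.q j' l ∈ ((↑S : Set V))ᶜ := by
      intro l hl hl' hm
      have hm : R.q j' l ∈ S := hm
      have := hRS j' l (by omega) (Finset.mem_insert_of_mem hm)
      have : l = i' := by omega
      exact hnS (he ▸ this ▸ hm)
    have r1 := P.rch_seg (G' := G') j 0 i (Nat.zero_le _) (fun l _ hl => P.adj j l (by omega)) h1
    have r2 := R.rch_seg (G' := G') j' i' _ hi' (fun l _ hl => R.adj j' l (by omega)) h2
    rw [he] at r1
    exact hsep _ (P.start j) _ (R.fin j') (h1 0 le_rfl (Nat.zero_le _)) (r1.trans r2)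
  have hτ : ∀ j, ∃ j', R.q j' 0 = if P.q j (P.len j) = x then y else P.q j (P.len j) := by
    intro j
    apply hRst
    split_ifs with h
    · simp
    · have := P.fin j
      simp only [Set.mem_insert_iff, h, false_or] at this
      exact Finset.mem_insert_of_mem this
  choose τ hτ using hτ
  by_cases hyS : y ∈ S
  · -- `S` itself would contain all `k` distinct starting points of `R`.
    exfalso
    have hinj : Function.Injective (fun j => R.q j 0) := fun j j' h =>
      (R.inj _ _ _ _ (Nat.zero_le _) (Nat.zero_le _) h).1
    have : (Finset.univ.image (fun j => R.q j 0)) ⊆ S := by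
      intro u hu
      obtain ⟨j, -, rfl⟩ := Finset.mem_image.1 hu
      have := R.start j
      rcases this with h | h
      · simp only [h]; exact hyS
      · exact h
    have := Finset.card_le_card this
    rw [Finset.card_image_of_injective _ hinj, Finset.card_univ, Fintype.card_fin] at this
    omega
  have hτi : Function.Injective τ := by
    intro j j' h
    have h1 := hτ j
    have h2 := hτ j'
    rw [h, h2] at h1
    have hm : ∀ j, P.q j (P.len j) ≠ x → P.q j (P.len j) ∈ S := by
      intro j h
      have := P.fin j
      simp only [Set.mem_insert_iff, h, false_or] at this
      exact this
    split_ifs at h1 with h3 h4 h4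
    · exact (P.inj _ _ _ _ le_rfl le_rfl (h3.trans h4.symm)).1.symm
    · exact absurd (h1 ▸ hm _ h4) hyS
    · exact absurd (h1 ▸ hm _ h3) hyS
    · exact (P.inj _ _ _ _ le_rfl le_rfl h1).1.symm
  -- `m j` is the number of vertices contributed by the `j`-th path of `P`.
  let m : Fin k → ℕ := fun j => if P.q j (P.len j) = x then P.len j + 1 else P.len j
  have hm : ∀ j, m j ≤ P.len j + 1 := by
    intro j; simp only [m]; split_ifs <;> omega
  have hcross : ∀ j i j' i', i < m j → i' ≤ R.len j' → P.q j i ≠ R.q j' i' := by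
    intro j i j' i' hi hi' he
    have hi2 : i ≤ P.len j := by have := hm j; omega
    have hS' := hmeet j i j' i' hi2 hi' he
    have := hPS j i hi2 (Finset.mem_insert_of_mem hS')
    subst this
    simp only [m] at hi
    split_ifs at hi with h
    · exact hx (h ▸ hS')
    · omega
  refine ⟨⟨fun j => m j + R.len (τ j),
    fun j i => if i < m j then P.q j i else R.q (τ j) (i - m j), ?_, ?_, ?_, ?_⟩⟩
  · intro j i hi
    have hmj := hm j
    rcases lt_trichotomy (i + 1) (m j) with h | h | h
    · rw [if_pos (by omega), if_pos h]
      exact hle (P.adj j i (by omega))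
    · rw [if_pos (by omega), if_neg (by omega), show i + 1 - m j = 0 by omega, hτ]
      by_cases hxx : P.q j (P.len j) = x
      · rw [if_pos hxx]
        simp only [m, if_pos hxx] at h
        rw [show i = P.len j by omega, hxx]
        exact hxy
      · rw [if_neg hxx]
        simp only [m, if_neg hxx] at h
        rw [← h]
        exact hle (P.adj j i (by omega))
    · rw [if_neg (by omega), if_neg (by omega), show i + 1 - m j = (i - m j) + 1 by omega]
      exact hle (R.adj _ _ (by omega))
  · intro j i j' i' hi hi' he
    have hmj := hm j
    have hmj' := hm j'
    split_ifs at he with h1 h2 h2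
    · exact P.inj _ _ _ _ (by omega) (by omega) he
    · exact absurd he (hcross _ _ _ _ h1 (by omega))
    · exact absurd he.symm (hcross _ _ _ _ h2 (by omega))
    · obtain ⟨e1, e2⟩ := R.inj _ _ _ _ (by omega) (by omega) he
      have := hτi e1
      subst this
      exact ⟨rfl, by omega⟩
  · intro j
    by_cases h : 0 < m j
    · rw [if_pos h]; exact P.start j
    · rw [if_neg h, Nat.zero_sub, hτ]
      have hxx : P.q j (P.len j) ≠ x := by
        intro hxx; simp only [m, if_pos hxx] at h; omega
      rw [if_neg hxx]
      simp only [m, if_neg hxx] at h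
      rw [show P.len j = 0 by omega]
      exact P.start j
  · intro j
    rw [if_neg (by omega), show m j + R.len (τ j) - m j = R.len (τ j) by omega]
    exact R.fin _

/-- Menger's theorem: if no set of fewer than `k` vertices separates `A` from `B`, then there
are `k` disjoint paths from `A` to `B`. The proof is by induction on the number of edges. -/
theorem menger [Fintype V] (k : ℕ) : ∀ (n : ℕ) (G : SimpleGraph V) (A B : Set V),
    G.edgeSet.ncard = n →
    (∀ X : Finset V, X.card < k → ∃ a ∈ A, ∃ b ∈ B, a ∉ X ∧ Rch G (↑X : Set V)ᶜ a b) →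
    Nonempty (PathSys G A B k) := by
  classical
  intro n
  induction n using Nat.strong_induction_on with
  | _ n IH =>
  intro G A B hn h
  by_cases hG : ∃ x y, G.Adj x y
  swap
  · have hR : ∀ U a b, Rch G U a b → a = b := by
      intro U a b hab
      induction hab with
      | refl => rfl
      | tail _ h2 _ => exact absurd ⟨_, _, h2.1⟩ hG
    have hk : k ≤ (A ∩ B).toFinset.card := by
      by_contra hlt
      obtain ⟨a, ha, b, hb, haX, hab⟩ := h (A ∩ B).toFinset (by omega)
      have := hR _ _ _ hab
      subst this
      exact haX (by simp [ha, hb])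
    obtain ⟨X, hX, hXk⟩ := Finset.exists_subset_card_eq hk
    let e := X.equivFinOfCardEq hXk
    have he : ∀ j, ((e.symm j : X) : V) ∈ A ∩ B := fun j => by
      simpa using hX (e.symm j).2
    refine ⟨⟨fun _ => 0, fun j _ => (e.symm j : X), ?_, ?_, fun j => (he j).1,
      fun j => (he j).2⟩⟩
    · intro j i hi; omega
    · intro j i j' i' hi hi' hq
      refine ⟨?_, by omega⟩
      exact e.symm.injective (Subtype.ext hq)
  obtain ⟨x₀, y₀, hxy₀⟩ := hG
  let G' : SimpleGraph V := G.deleteEdges {s(x₀, y₀)}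
  have hle : G' ≤ G := G.deleteEdges_le _
  have hlt : G'.edgeSet.ncard < n := by
    rw [← hn]
    apply Set.ncard_lt_ncard _ (Set.toFinite _)
    refine ⟨SimpleGraph.edgeSet_mono hle, fun hsub => ?_⟩
    have : s(x₀, y₀) ∈ G'.edgeSet := hsub hxy₀
    simp [G'] at this
  by_cases hsepall : ∀ X : Finset V, X.card < k →
      ∃ a ∈ A, ∃ b ∈ B, a ∉ X ∧ Rch G' (↑X : Set V)ᶜ a b
  · obtain ⟨Q⟩ := IH _ hlt G' A B rfl hsepall
    exact ⟨Q.change (fun j i hi => hle (Q.adj j i hi)) Q.start Q.fin⟩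
  push Not at hsepall
  obtain ⟨S, hS, hsep⟩ := hsepall
  -- Orient the deleted edge: an `A`-`B` walk of `G - S` crosses it from `x` to `y`.
  obtain ⟨a, ha, b, hb, haS, hab⟩ := h S hS
  obtain ⟨x, y, hxy, hx, hy, ⟨a', ha', ha'S, hPx⟩, hPy⟩ := hab.exit
    (P := fun z => ∃ a ∈ A, a ∉ S ∧ Rch G' (↑S : Set V)ᶜ a z) ⟨a, ha, haS, Rch.refl _⟩
    (by rintro ⟨a', ha', ha'S, h'⟩; exact hsep a' ha' b hb ha'S h')
  have hedge : s(x, y) = s(x₀, y₀) := by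
    by_contra hne
    refine hPy ⟨a', ha', ha'S, hPx.trans (Rch.single ?_ hx hy)⟩
    simp only [G', SimpleGraph.deleteEdges_adj, Set.mem_singleton_iff]
    exact ⟨hxy, hne⟩
  have hGG' : ∀ c d, G.Adj c d → G'.Adj c d ∨ (c = x ∧ d = y) ∨ (c = y ∧ d = x) := by
    intro c d hcd
    by_cases hne : s(c, d) = s(x₀, y₀)
    · right
      rw [← hedge] at hne
      simpa using hne
    · left
      simp only [G', SimpleGraph.deleteEdges_adj, Set.mem_singleton_iff]
      exact ⟨hcd, hne⟩
  have hxS : x ∉ S := hx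
  obtain ⟨P⟩ := IH _ hlt G' A (insert x (↑S : Set V)) rfl (fun T hT =>
    menger_aux G G' A B S T x y hGG' hsep
      (fun a ha haS hr => hPy ⟨a, ha, haS, hr⟩) (h T hT))
  obtain ⟨R⟩ := IH _ hlt G' (insert y (↑S : Set V)) B rfl (fun T hT => by
    obtain ⟨b, hb, u, hu, hbT, hr⟩ := menger_aux G G' B A S T y x
      (fun c d hcd => by rcases hGG' c d hcd with h | h | h <;> tauto)
      (fun b hb a ha hbS hr => hsep a ha b hb (Rch.mem hr hbS) hr.symm)
      (fun b hb hbS hr => hsep a' ha' b hb ha'S (hPx.trans hr.symm))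
      (by
        obtain ⟨a, ha, b, hb, haT, hr⟩ := h T hT
        exact ⟨b, hb, a, ha, Rch.mem hr haT, hr.symm⟩)
    exact ⟨u, hu, b, hb, Rch.mem hr hbT, hr.symm⟩)
  exact menger_glue G G' A B S x y k hle hxy hxS hS hsep P R

/-! ### Minor mappings from cores and connectors -/

/-- A connected set `Z` meeting disjoint sets `C` and `C'` contains a set `Y`, disjoint from
both, which extends `C` to a connected set with a neighbour in `C'`. -/
theorem connector {G : SimpleGraph V} {C C' Z : Set V} (hC : Cn G C) (hZ : Cn G Z)
    (hdis : Disjoint C C') (h : (Z ∩ C).Nonempty) (h' : (Z ∩ C').Nonempty) :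
    ∃ Y ⊆ Z, Disjoint Y C ∧ Disjoint Y C' ∧ Cn G (C ∪ Y) ∧
      ∃ x ∈ C ∪ Y, ∃ y ∈ C', G.Adj x y := by
  obtain ⟨x, hxZ, hxC⟩ := h
  obtain ⟨y, hyZ, hyC'⟩ := h'
  let U : Set V := C ∪ (Z \ C')
  have hxU : x ∈ U := Or.inl hxC
  let R : Set V := {z | Rch G U x z}
  have hCR : C ⊆ R := fun z hz => (hC.2 x hxC z hz).mono_set Set.subset_union_left
  have hRU : R ⊆ U := fun z hz => Rch.mem hz hxU
  refine ⟨R \ C, ?_, Set.disjoint_sdiff_left, ?_, ?_, ?_⟩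
  · rintro z ⟨hz, hzC⟩
    rcases hRU hz with h | h
    · exact absurd h hzC
    · exact h.1
  · rw [Set.disjoint_left]
    rintro z ⟨hz, hzC⟩ hzC'
    rcases hRU hz with h | h
    · exact absurd h hzC
    · exact h.2 hzC'
  · rw [Set.union_sdiff_cancel hCR]
    exact Cn.component x
  · rw [Set.union_sdiff_cancel hCR]
    obtain ⟨c, d, hcd, hc, hd, hPc, hPd⟩ := (hZ.2 x hxZ y hyZ).exit (P := fun z => z ∈ R)
      (Rch.refl x) (fun hy => by
        rcases hRU hy with h | h
        · exact Set.disjoint_left.1 hdis h hyC'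
        · exact h.2 hyC')
    refine ⟨c, hPc, d, ?_, hcd⟩
    by_contra hdC'
    exact hPd (Rch.trans hPc (Rch.single hcd (hRU hPc) (Or.inr ⟨hd, hdC'⟩)))

/-- Disjoint connected cores `C v`, together with a connected set `Z u v` linking the cores of
`u` and `v` for each oriented edge `uv`, give a minor mapping, provided that the sets `Z`
avoid all other cores and meet each other only inside cores. -/
theorem build {α : Type} (rel : α → α → Prop) (G : SimpleGraph V) (C : α → Set V)
    (Z : α → α → Set V) (hC : ∀ v, Cn G (C v)) (hdis : ∀ u v, u ≠ v → Disjoint (C u) (C v))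
    (hZ : ∀ u v, rel u v → u ≠ v → Cn G (Z u v) ∧ (Z u v ∩ C u).Nonempty ∧
      (Z u v ∩ C v).Nonempty ∧ ∀ w, w ≠ u → w ≠ v → Disjoint (Z u v) (C w))
    (hZZ : ∀ u v u' v', rel u v → u ≠ v → rel u' v' → u' ≠ v' → (u, v) ≠ (u', v') →
      ∀ x ∈ Z u v, x ∈ Z u' v' → ∃ w, x ∈ C w) :
    ∃ η : α → Set V, IsMinorMapping (SimpleGraph.fromRel rel) G η ∧ ∀ v, C v ⊆ η v := by
  classical
  have hY : ∀ u v, ∃ Y : Set V, rel u v → u ≠ v → Y ⊆ Z u v ∧ Disjoint Y (C u) ∧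
      Disjoint Y (C v) ∧ Cn G (C u ∪ Y) ∧ ∃ x ∈ C u ∪ Y, ∃ y ∈ C v, G.Adj x y := by
    intro u v
    by_cases h : rel u v ∧ u ≠ v
    · obtain ⟨h1, h2, h3, -⟩ := hZ u v h.1 h.2
      obtain ⟨Y, hY⟩ := connector (hC u) h1 (hdis u v h.2) h2 h3
      exact ⟨Y, fun _ _ => hY⟩
    · exact ⟨∅, fun h1 h2 => absurd ⟨h1, h2⟩ h⟩
  choose Y hY using hY
  have hYC : ∀ u v, rel u v → u ≠ v → ∀ w, ∀ x ∈ Y u v, x ∉ C w := by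
    intro u v h h' w x hx hxw
    obtain ⟨h1, h2, h3, -⟩ := hY u v h h'
    by_cases hwu : w = u
    · subst hwu; exact Set.disjoint_left.1 h2 hx hxw
    by_cases hwv : w = v
    · subst hwv; exact Set.disjoint_left.1 h3 hx hxw
    exact Set.disjoint_left.1 ((hZ u v h h').2.2.2 w hwu hwv) (h1 hx) hxw
  let η : α → Set V := fun u => C u ∪ {x | ∃ v, rel u v ∧ u ≠ v ∧ x ∈ Y u v}
  have hsub : ∀ u v, rel u v → u ≠ v → C u ∪ Y u v ⊆ η u := by
    rintro u v h h' x (hx | hx)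
    · exact Or.inl hx
    · exact Or.inr ⟨v, h, h', hx⟩
  refine ⟨η, ⟨?_, ?_, ?_⟩, fun v => Set.subset_union_left⟩
  · intro u
    obtain ⟨x, hx⟩ := (hC u).1
    have : Cn G (η u) := by
      refine Cn.of_center (x := x) (Or.inl hx) ?_
      rintro y (hy | ⟨v, h, h', hy⟩)
      · exact ((hC u).2 x hx y hy).mono_set Set.subset_union_left
      · exact ((hY u v h h').2.2.2.1.2 x (Or.inl hx) y (Or.inr hy)).mono_set (hsub u v h h')
    exact ⟨this.1, this.connected⟩
  · intro u u' huu'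
    rw [Set.disjoint_left]
    rintro x (hx | ⟨v, h, h', hx⟩) (hx2 | ⟨v', h2, h2', hx2⟩)
    · exact Set.disjoint_left.1 (hdis u u' huu') hx hx2
    · exact hYC _ _ h2 h2' _ _ hx2 hx
    · exact hYC _ _ h h' _ _ hx hx2
    · obtain ⟨w, hw⟩ := hZZ u v u' v' h h' h2 h2' (by simp [huu']) x
        ((hY u v h h').1 hx) ((hY u' v' h2 h2').1 hx2)
      exact hYC _ _ h h' _ _ hx hw
  · intro u v huv
    rw [SimpleGraph.fromRel_adj] at huv
    obtain ⟨hne, h | h⟩ := huv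
    · obtain ⟨-, -, -, -, x, hx, y, hy, hxy⟩ := hY u v h hne
      exact ⟨x, hsub u v h hne hx, y, Or.inl hy, hxy⟩
    · obtain ⟨-, -, -, -, x, hx, y, hy, hxy⟩ := hY v u h hne.symm
      exact ⟨y, Or.inl hy, x, hsub v u h hne.symm hx, hxy.symm⟩

/-! ### Path systems with few edges outside a given subgraph -/

/-- The edges of the paths of a path system. -/
def PathSys.edges {G : SimpleGraph V} {A B : Set V} {t : ℕ} (Q : PathSys G A B t) :
    Set (Sym2 V) :=
  {e | ∃ j i, i < Q.len j ∧ e = s(Q.q j i, Q.q j (i + 1))}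

/-- The number of edges of a path system outside the subgraph `F`. -/
noncomputable def PathSys.cost {G : SimpleGraph V} {A B : Set V} {t : ℕ}
    (Q : PathSys G A B t) (F : SimpleGraph V) : ℕ :=
  (Q.edges \ F.edgeSet).ncard

/-- Let `Q` have the fewest edges outside `F`, and let the `i0`-th edge of path `j0` be one of
them. By minimality and Menger's theorem, fewer than `t` vertices `X` separate `A` from `B` in
the union of `Q` and `F` without this edge. The set `U` of vertices on the `A`-side then cuts
each path `j` at one place `c j`, and edges of `F` that avoid `X` do not leave `U`. -/
theorem cut [Fintype V] {G : SimpleGraph V} {A B : Set V} {t : ℕ} (Q : PathSys G A B t)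
    (F : SimpleGraph V) (hF : F ≤ G) (hmin : ∀ Q' : PathSys G A B t, Q.cost F ≤ Q'.cost F)
    (j0 : Fin t) (i0 : ℕ) (hi0 : i0 < Q.len j0) (hnF : ¬ F.Adj (Q.q j0 i0) (Q.q j0 (i0 + 1))) :
    ∃ (X : Finset V) (U : Set V) (c : Fin t → ℕ), X.card < t ∧ c j0 = i0 + 1 ∧
      (∀ j i, i ≤ Q.len j → Q.q j i ∉ X → (Q.q j i ∈ U ↔ i < c j)) ∧
      (∀ u v, F.Adj u v → u ∉ X → v ∉ X → u ∈ U → v ∈ U) := by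
  classical
  let e0 : Sym2 V := s(Q.q j0 i0, Q.q j0 (i0 + 1))
  let Γ : SimpleGraph V :=
    { Adj := fun u v => G.Adj u v ∧ (F.Adj u v ∨ s(u, v) ∈ Q.edges) ∧ s(u, v) ≠ e0
      symm := ⟨by
        intro u v h
        rw [Sym2.eq_swap] at h
        exact ⟨h.1.symm, h.2.1.imp (fun h => h.symm) id, h.2.2⟩⟩
      loopless := ⟨fun u h => G.loopless.irrefl u h.1⟩ }
  have hno : ¬ Nonempty (PathSys Γ A B t) := by
    rintro ⟨R⟩
    have := hmin (R.change (G' := G) (fun j i hi => (R.adj j i hi).1) R.start R.fin)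
    refine absurd this (not_le.2 (Set.ncard_lt_ncard ?_ (Set.toFinite _)))
    have hsub : ∀ e ∈ (R.change (G' := G) (fun j i hi => (R.adj j i hi).1) R.start R.fin).edges,
        e ∉ F.edgeSet → e ∈ Q.edges ∧ e ≠ e0 := by
      rintro e ⟨j, i, hi, rfl⟩ heF
      have := R.adj j i hi
      exact ⟨this.2.1.resolve_left heF, this.2.2⟩
    refine ⟨fun e he => ⟨(hsub e he.1 he.2).1, he.2⟩, fun h => ?_⟩
    have he0 : e0 ∈ Q.edges \ F.edgeSet := ⟨⟨j0, i0, hi0, rfl⟩, hnF⟩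
    have := h he0
    exact (hsub e0 this.1 this.2).2 rfl
  have hX : ∃ X : Finset V, X.card < t ∧ ∀ a ∈ A, ∀ b ∈ B, a ∉ X →
      ¬ Rch Γ (↑X : Set V)ᶜ a b := by
    by_contra hcon
    push Not at hcon
    exact hno (menger t _ Γ A B rfl hcon)
  obtain ⟨X, hXt, hsep⟩ := hX
  have hstep : ∀ j i, i < Q.len j → ¬ (j = j0 ∧ i = i0) →
      Γ.Adj (Q.q j i) (Q.q j (i + 1)) := by
    intro j i hi hne
    refine ⟨Q.adj j i hi, Or.inr ⟨j, i, hi, rfl⟩, fun he => hne ?_⟩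
    rcases Sym2.eq_iff.1 he with ⟨h1, -⟩ | ⟨h1, h2⟩
    · exact Q.inj _ _ _ _ hi.le hi0.le h1
    · have e1 := (Q.inj _ _ _ _ hi.le hi0 h1).2
      have e2 := (Q.inj _ _ _ _ hi hi0.le h2).2
      omega
  have hseg : ∀ j a b, a ≤ b → b ≤ Q.len j → ¬ (j = j0 ∧ a ≤ i0 ∧ i0 < b) →
      (∀ i, a ≤ i → i ≤ b → Q.q j i ∉ X) → Rch Γ (↑X : Set V)ᶜ (Q.q j a) (Q.q j b) := by
    intro j a b hab hb hne hXX
    exact Q.rch_seg j a b hab (fun i h h' => hstep j i (by omega) (by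
      rintro ⟨rfl, rfl⟩; exact hne ⟨rfl, h, h'⟩)) hXX
  have hhit : ∀ j, ∃ i, j ≠ j0 → i ≤ Q.len j ∧ Q.q j i ∈ X := by
    intro j
    by_contra hcon
    push Not at hcon
    have hjj := (hcon 0).1
    have hall : ∀ i, 0 ≤ i → i ≤ Q.len j → Q.q j i ∉ X := fun i _ hi => (hcon i).2 hi
    exact hsep _ (Q.start j) _ (Q.fin j) (hall 0 le_rfl (Nat.zero_le _))
      (hseg j 0 _ (Nat.zero_le _) le_rfl (fun h => hjj h.1) hall)
  choose h hh using hhit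
  -- Counting: `X` consists of exactly one vertex from each path other than `j0`.
  have hXeq : (Finset.univ.erase j0).image (fun j => Q.q j (h j)) = X := by
    apply Finset.eq_of_subset_of_card_le
    · intro x hx
      obtain ⟨j, hj, rfl⟩ := Finset.mem_image.1 hx
      exact (hh j (Finset.ne_of_mem_erase hj)).2
    · rw [Finset.card_image_of_injOn, Finset.card_erase_of_mem (Finset.mem_univ _),
        Finset.card_univ, Fintype.card_fin]
      · omega
      · intro j hj j' hj' he
        have hj := Finset.ne_of_mem_erase (Finset.mem_coe.1 hj)
        have hj' := Finset.ne_of_mem_erase (Finset.mem_coe.1 hj')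
        exact (Q.inj _ _ _ _ (hh j hj).1 (hh j' hj').1 he).1
  have hXpos : ∀ j i, i ≤ Q.len j → Q.q j i ∈ X → j ≠ j0 ∧ i = h j := by
    intro j i hi hx
    rw [← hXeq] at hx
    obtain ⟨j', hj', he⟩ := Finset.mem_image.1 hx
    have hj' := Finset.ne_of_mem_erase hj'
    obtain ⟨rfl, e⟩ := Q.inj _ _ _ _ (hh j' hj').1 hi he
    exact ⟨hj', e.symm⟩
  let U : Set V := {z | ∃ a ∈ A, a ∉ X ∧ Rch Γ (↑X : Set V)ᶜ a z}
  refine ⟨X, U, fun j => if j = j0 then i0 + 1 else h j, hXt, if_pos rfl, ?_, ?_⟩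
  · intro j i hi hiX
    have hlow : ¬ (j = j0 ∧ i0 < i) → (j ≠ j0 → i < h j) → Q.q j i ∈ U := by
      intro h1 h2
      have hno : ∀ l, 0 ≤ l → l ≤ i → Q.q j l ∉ X := by
        intro l _ hl hlX
        obtain ⟨e1, e2⟩ := hXpos j l (by omega) hlX
        have := h2 e1
        omega
      exact ⟨_, Q.start j, hno 0 le_rfl (Nat.zero_le _),
        hseg j 0 i (Nat.zero_le _) hi (fun h => h1 ⟨h.1, h.2.2⟩) hno⟩
    have hhigh : ¬ (j = j0 ∧ i ≤ i0) → (j ≠ j0 → h j < i) → Q.q j i ∉ U := by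
      rintro h1 h2 ⟨a, ha, haX, hr⟩
      refine hsep a ha _ (Q.fin j) haX (hr.trans (hseg j i _ hi le_rfl
        (fun h => h1 ⟨h.1, h.2.1⟩) ?_))
      intro l hl hl' hlX
      obtain ⟨e1, e2⟩ := hXpos j l hl' hlX
      have := h2 e1
      omega
    by_cases hj : j = j0
    · simp only [if_pos hj]
      constructor
      · intro hU
        by_contra hlt
        exact hhigh (fun h => by omega) (fun h => absurd hj h) hU
      · intro hlt
        exact hlow (fun h => by omega) (fun h => absurd hj h)
    · simp only [if_neg hj]
      constructor
      · intro hU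
        by_contra hlt
        rcases (not_lt.1 hlt).eq_or_lt with he | hgt
        · exact hiX (he ▸ (hh j hj).2)
        · exact hhigh (fun h => hj h.1) (fun _ => hgt) hU
      · intro hlt
        exact hlow (fun h => hj h.1) (fun _ => hlt)
  · rintro u v huv hu hv ⟨a, ha, haX, hr⟩
    refine ⟨a, ha, haX, hr.trans (Rch.single ⟨hF huv, Or.inl huv, ?_⟩ hu hv)⟩
    intro he
    have : e0 ∈ F.edgeSet := he ▸ huv
    exact hnF this

/-- The subgraph of `G` formed by the edges with both ends in the same set of a family. -/
def inside {ι : Type} (G : SimpleGraph V) (Y : ι → Set V) : SimpleGraph V where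
  Adj u v := G.Adj u v ∧ ∃ n, u ∈ Y n ∧ v ∈ Y n
  symm := ⟨fun _ _ h => ⟨h.1.symm, h.2.imp fun _ h => ⟨h.2, h.1⟩⟩⟩
  loopless := ⟨fun u h => G.loopless.irrefl u h.1⟩

/-- Let `Q` have the fewest edges outside the disjoint connected sets `Y`. Among sufficiently
many of these sets that all meet one path `j0`, there are `s` sets which every path of `Q`
passes one after the other, in the same order. They are found by cutting `Q` at `s` edges of
the path `j0` and discarding the sets that meet one of the separators. -/
theorem order [Fintype V] {G : SimpleGraph V} {A B : Set V} {t : ℕ} (Q : PathSys G A B t)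
    {ι : Type} (Y : ι → Set V) (hY : ∀ n, Cn G (Y n))
    (hdis : ∀ n n', n ≠ n' → Disjoint (Y n) (Y n'))
    (hmin : ∀ Q' : PathSys G A B t, Q.cost (inside G Y) ≤ Q'.cost (inside G Y))
    (j0 : Fin t) (s L : ℕ) (hL : s * t < L) (σ : Fin (s * L) → ι) (hσ : Function.Injective σ)
    (hmeet : ∀ n, ∃ i ≤ Q.len j0, Q.q j0 i ∈ Y (σ n)) :
    ∃ τ : Fin s → Fin (s * L), ∀ a b, a < b → ∀ j i i', i ≤ Q.len j → i' ≤ Q.len j →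
      Q.q j i ∈ Y (σ (τ a)) → Q.q j i' ∈ Y (σ (τ b)) → i < i' := by
  classical
  have huniq : ∀ n n' x, x ∈ Y n → x ∈ Y n' → n = n' := by
    intro n n' x h h'
    by_contra hne
    exact Set.disjoint_left.1 (hdis n n' hne) h h'
  choose φ hφ hφY using hmeet
  have hφinj : Function.Injective φ := by
    intro n n' h
    exact hσ (huniq _ _ _ (hφY n) (h ▸ hφY n'))
  let π := Tuple.sort φ
  have hπ : StrictMono (φ ∘ π) :=
    (Tuple.monotone_sort φ).strictMono_of_injective (hφinj.comp π.injective)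
  let ν : Fin s → Fin L → Fin (s * L) := fun a b => finProdFinEquiv (a, b)
  have hν : ∀ a b, (ν a b : ℕ) = b + L * a := fun a b => rfl
  -- Between two sets the path `j0` leaves the first one, along an edge outside all sets.
  have hstep : ∀ n n', φ n < φ n' → ∃ i, φ n ≤ i ∧ i < φ n' ∧
      ¬ (inside G Y).Adj (Q.q j0 i) (Q.q j0 (i + 1)) := by
    intro n n' hlt
    by_contra hcon
    push Not at hcon
    have : ∀ i, φ n ≤ i → i ≤ φ n' → Q.q j0 i ∈ Y (σ n) := by
      intro i hi
      induction i, hi using Nat.le_induction with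
      | base => exact fun _ => hφY n
      | succ i hi ih =>
        intro hi'
        obtain ⟨-, m, h1, h2⟩ := hcon i hi (by omega)
        exact huniq _ _ _ (ih (by omega)) h1 ▸ h2
    have hn := hσ (huniq _ _ _ (this _ hlt.le le_rfl) (hφY n'))
    subst hn
    exact lt_irrefl _ hlt
  -- The cut in front of block `b`; for the first block nothing is needed.
  have hcut : ∀ b : Fin s, ∃ (X : Finset V) (U : Set V) (c : Fin t → ℕ), X.card ≤ t ∧
      (∀ j i, i ≤ Q.len j → Q.q j i ∉ X → (Q.q j i ∈ U ↔ i < c j)) ∧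
      (∀ u v, (inside G Y).Adj u v → u ∉ X → v ∉ X → u ∈ U → v ∈ U) ∧
      (∀ a d d', a < b → φ (π (ν a d)) < c j0 ∧ c j0 ≤ φ (π (ν b d'))) := by
    intro b
    by_cases hb : (b : ℕ) = 0
    · refine ⟨∅, ∅, fun _ => 0, by simp, by simp, by simp, ?_⟩
      intro a d d' hab
      have : (a : ℕ) < b := hab
      omega
    have hLpos : 0 < L := by omega
    let bp : Fin s := ⟨b - 1, by omega⟩
    let last : Fin L := ⟨L - 1, by omega⟩
    let first : Fin L := ⟨0, hLpos⟩
    have hlt : ν bp last < ν b first := by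
      rw [Fin.lt_def, hν, hν]
      have : (b : ℕ) = (b - 1) + 1 := by omega
      simp only [bp, last, first]
      generalize hb' : (b : ℕ) - 1 = b' at *
      rw [this, Nat.mul_add]
      omega
    obtain ⟨i0, h1, h2, h3⟩ := hstep _ _ (hπ hlt)
    obtain ⟨X, U, c, hX, hc, hU, hF⟩ := cut Q (inside G Y) (fun _ _ h => h.1) hmin j0 i0
      (lt_of_lt_of_le h2 (hφ _)) h3
    refine ⟨X, U, c, hX.le, hU, hF, ?_⟩
    intro a d d' hab
    have hle1 : ν a d ≤ ν bp last := by
      rw [Fin.le_def, hν, hν]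
      have : (a : ℕ) ≤ bp := by have : (a : ℕ) < b := hab; simp only [bp]; omega
      have := Nat.mul_le_mul_left L this
      have := d.2
      simp only [last]
      omega
    have hle2 : ν b first ≤ ν b d' := by
      rw [Fin.le_def, hν, hν]
      simp only [first]
      omega
    have m1 := hπ.monotone hle1
    have m2 := hπ.monotone hle2
    simp only [Function.comp] at m1 m2
    have m3 : i0 < φ (π (ν b first)) := h2
    have m4 : φ (π (ν bp last)) ≤ i0 := h1
    omega
  choose X U c hX hU hF hside using hcut
  -- In each block some set avoids all separators.
  have hpick : ∀ a : Fin s, ∃ d : Fin L, ∀ b, ∀ x ∈ X b, x ∉ Y (σ (π (ν a d))) := by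
    intro a
    by_contra hcon
    push Not at hcon
    choose b x hx hxY using hcon
    have hinj : Function.Injective x := by
      intro d d' h
      have := hσ (huniq _ _ _ (hxY d) (h ▸ hxY d'))
      have := finProdFinEquiv.injective (π.injective this)
      exact (Prod.ext_iff.1 this).2
    have hsub : Finset.univ.image x ⊆ Finset.univ.biUnion X := by
      intro y hy
      obtain ⟨d, -, rfl⟩ := Finset.mem_image.1 hy
      exact Finset.mem_biUnion.2 ⟨b d, Finset.mem_univ _, hx d⟩
    have h1 := Finset.card_le_card hsub
    rw [Finset.card_image_of_injective _ hinj, Finset.card_univ, Fintype.card_fin] at h1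
    have h2 : (Finset.univ.biUnion X).card ≤ s * t := by
      have := Finset.card_biUnion_le_card_mul Finset.univ X t (fun b _ => hX b)
      simpa using this
    omega
  choose d hd using hpick
  refine ⟨fun a => π (ν a (d a)), ?_⟩
  intro a b hab j i i' hi hi' hqa hqb
  have hconst : ∀ a', ∀ x ∈ Y (σ (π (ν a' (d a')))), ∀ y ∈ Y (σ (π (ν a' (d a')))),
      x ∈ U b → y ∈ U b := by
    intro a' x hx y hy hxU
    have hr := (hY _).2 x hx y hy
    induction hr with
    | refl => exact hxU
    | tail h1 h2 ih =>
      exact hF b _ _ ⟨h2.1, _, h2.2.1, h2.2.2⟩ (fun h => hd a' b _ h h2.2.1)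
        (fun h => hd a' b _ h h2.2.2) (ih h2.2.1)
  obtain ⟨s1, s2⟩ := hside b a (d a) (d b) hab
  have ua : Q.q j i ∈ U b := hconst a _ (hφY _) _ hqa
    ((hU b j0 _ (hφ _) (fun h => hd a b _ h (hφY _))).2 s1)
  have ub : Q.q j i' ∉ U b := by
    intro h
    have := hconst b _ hqb _ (hφY _) h
    have := (hU b j0 _ (hφ _) (fun h => hd b b _ h (hφY _))).1 this
    omega
  have l1 := (hU b j i hi (fun h => hd a b _ h hqa)).1 ua
  have l2 : ¬ i' < c b j := fun h => ub ((hU b j i' hi' (fun h => hd b b _ h hqb)).2 h)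
  omega

/-! ### Grids from a path system crossed by connected sets -/

/-- A `g × g`-grid minor whose first column is rooted in `S`. -/
def RootedGrid (G : SimpleGraph V) (S : Set V) (g : ℕ) (hg : 0 < g) : Prop :=
  ∃ η : Fin g × Fin g → Set V, IsMinorMapping (gridGraph g) G η ∧
    ∀ j : Fin g, ∃ x ∈ S, x ∈ η (⟨0, hg⟩, j)

/-- The relation whose symmetrization is the adjacency relation of the grid. -/
def gridRel (g : ℕ) (p q : Fin g × Fin g) : Prop :=
  (p.1 = q.1 ∧ (p.2 : ℕ) + 1 = (q.2 : ℕ)) ∨ (p.2 = q.2 ∧ (p.1 : ℕ) + 1 = (q.1 : ℕ))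

theorem RootedGrid.mono {G G' : SimpleGraph V} {S : Set V} {g : ℕ} {hg : 0 < g} (hG : G ≤ G')
    (h : RootedGrid G S g hg) : RootedGrid G' S g hg := by
  obtain ⟨η, ⟨h1, h2, h3⟩, h4⟩ := h
  refine ⟨η, ⟨fun v => ⟨(h1 v).1, (h1 v).2.mono ?_⟩, h2, fun u v huv => ?_⟩, h4⟩
  · exact fun a b hab => hG hab
  · obtain ⟨x, hx, y, hy, hxy⟩ := h3 u v huv
    exact ⟨x, hx, y, hy, hG hxy⟩

/-- The paths of `P` are the rows of the grid. Each row passes the disjoint sets `H n`,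
`n < g * g`, in this order. The sets `H (c * g)` cut the rows into columns, and inside
`H (c * g + a + 1)` the rows `a` and `a + 1` are linked within column `c`. -/
theorem grid_of_links {G : SimpleGraph V} {S B : Set V} {g : ℕ} (hg : 0 < g)
    (P : PathSys G S B g) (H : ℕ → Set V)
    (hdis : ∀ n n', n < g * g → n' < g * g → n ≠ n' → Disjoint (H n) (H n'))
    (hord : ∀ n n', n < n' → n' < g * g → ∀ b x x', x ≤ P.len b → x' ≤ P.len b →
      P.q b x ∈ H n → P.q b x' ∈ H n' → x < x')
    (hmeet : ∀ n < g * g, ∀ b, ∃ x ≤ P.len b, P.q b x ∈ H n)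
    (hlink : ∀ n < g * g, ∀ a b : Fin g, (a : ℕ) + 1 = b → ∃ Z ⊆ H n, Cn G Z ∧
      (Z ∩ P.vs a).Nonempty ∧ (Z ∩ P.vs b).Nonempty ∧
      ∀ l, l ≠ a → l ≠ b → Disjoint Z (P.vs l)) : RootedGrid G S g hg := by
  classical
  choose! pos hpos hposH using hmeet
  choose! Z hZ using hlink
  let lo : ℕ → Fin g → ℕ := fun c b =>
    if c = 0 then 0 else if c < g then pos (c * g) b else P.len b + 1
  have hmul : ∀ {c c' : ℕ}, c < c' → c * g < c' * g := fun h => Nat.mul_lt_mul_of_pos_right h hg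
  have hlo : ∀ c c' b, c < c' → c < g → lo c b < lo c' b := by
    intro c c' b hcc hcg
    have h1 : lo c b ≤ pos (c * g) b := by
      simp only [lo]; split_ifs <;> omega
    simp only [lo, if_neg (show c' ≠ 0 by omega)] at h1 ⊢
    split_ifs at h1 ⊢ with h2 h3 h3
    · exact lt_of_le_of_lt (Nat.zero_le _) (hord _ _ (hmul hcc) (hmul h3) b _ _
        (hpos _ (hmul hcg) b) (hpos _ (hmul h3) b) (hposH _ (hmul hcg) b) (hposH _ (hmul h3) b))
    · omega
    · exact hord _ _ (hmul hcc) (hmul h3) b _ _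
        (hpos _ (hmul hcg) b) (hpos _ (hmul h3) b) (hposH _ (hmul hcg) b) (hposH _ (hmul h3) b)
    · have := hpos _ (hmul hcg) b
      omega
  have hlolen : ∀ c b, c < g → lo c b ≤ P.len b := by
    intro c b hcg
    have := hpos _ (hmul hcg) b
    simp only [lo]; split_ifs <;> omega
  have hlotop : ∀ c b, c ≤ g → lo c b ≤ P.len b + 1 := by
    intro c b hc
    rcases hc.lt_or_eq with h | h
    · exact (hlolen c b h).trans (Nat.le_succ _)
    · simp only [lo]; split_ifs <;> omega
  let C : Fin g × Fin g → Set V := fun p =>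
    {y | ∃ x, lo p.1 p.2 ≤ x ∧ x ≤ lo (p.1 + 1) p.2 - 1 ∧ P.q p.2 x = y}
  have hCx : ∀ (p : Fin g × Fin g) x, lo p.1 p.2 ≤ x → x < lo (p.1 + 1) p.2 →
      P.q p.2 x ∈ C p := fun p x h h' => ⟨x, h, by omega, rfl⟩
  have hCmem : ∀ (p : Fin g × Fin g) y, y ∈ C p → ∃ x, lo p.1 p.2 ≤ x ∧
      x < lo (p.1 + 1) p.2 ∧ x ≤ P.len p.2 ∧ P.q p.2 x = y := by
    rintro p y ⟨x, h, h', rfl⟩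
    have h1 := hlo p.1 (p.1 + 1) p.2 (Nat.lt_succ_self _) p.1.2
    have h2 := hlotop (p.1 + 1) p.2 p.1.2
    exact ⟨x, h, by omega, by omega, rfl⟩
  have hCuniq : ∀ p p' y, y ∈ C p → y ∈ C p' → p = p' := by
    intro p p' y hy hy'
    obtain ⟨x, h1, h2, h3, rfl⟩ := hCmem p y hy
    obtain ⟨x', h1', h2', h3', e⟩ := hCmem p' _ hy'
    obtain ⟨e1, rfl⟩ := P.inj _ _ _ _ h3' h3 e
    obtain ⟨c, b⟩ := p
    obtain ⟨c', b'⟩ := p'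
    simp only at e1 h1 h2 h1' h2'
    subst e1
    have key : ∀ d d' : Fin g, (d : ℕ) < d' → lo (d + 1) b' ≤ lo d' b' := by
      intro d d' h
      rcases (show (d : ℕ) + 1 ≤ d' from h).eq_or_lt with h | h
      · rw [h]
      · exact (hlo _ _ b' h (by omega)).le
    rcases lt_trichotomy (c : ℕ) c' with h | h | h
    · have := key _ _ h; omega
    · rw [Fin.ext h]
    · have := key _ _ h; omega
  -- A hit of `H (c * g + a + 1)` on row `b` lies in column `c`.
  have hin : ∀ (c : Fin g) (a : ℕ), a + 1 < g → ∀ b, ∀ y ∈ H (c * g + (a + 1)), y ∈ P.vs b →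
      y ∈ C (c, b) := by
    rintro c a ha b y hy ⟨x, hx, rfl⟩
    have hn : (c : ℕ) * g + (a + 1) < (c + 1) * g := by rw [Nat.add_mul]; omega
    have hng : ((c : ℕ) + 1) * g ≤ g * g := Nat.mul_le_mul_right g c.2
    apply hCx (c, b)
    · refine le_trans ?_ (hord (c * g) _ (by omega) (by omega) b _ _ (hpos _ (by omega) b) hx
        (hposH _ (by omega) b) hy).le
      simp only [lo]; split_ifs <;> omega
    · simp only [lo, if_neg (Nat.succ_ne_zero _)]
      split_ifs with h
      · have := hmul h
        exact hord _ _ hn this b _ _ hx (hpos _ this b) hy (hposH _ this b)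
      · omega
  have hnlt : ∀ (c : Fin g) (a : ℕ), a + 1 < g → (c : ℕ) * g + (a + 1) < g * g := by
    intro c a ha
    have hn : (c : ℕ) * g + (a + 1) < (c + 1) * g := by rw [Nat.add_mul]; omega
    have hng : ((c : ℕ) + 1) * g ≤ g * g := Nat.mul_le_mul_right g c.2
    omega
  let ZZ : Fin g × Fin g → Fin g × Fin g → Set V := fun p q =>
    if p.1 = q.1 then Z (p.1 * g + (p.2 + 1)) p.2 q.2
    else {P.q p.2 (lo q.1 p.2 - 1), P.q p.2 (lo q.1 p.2)}
  have hhor : ∀ p q : Fin g × Fin g, p.2 = q.2 → (p.1 : ℕ) + 1 = q.1 →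
      P.q p.2 (lo q.1 p.2 - 1) ∈ C p ∧ P.q p.2 (lo q.1 p.2) ∈ C q := by
    intro p q h2 h1
    have l1 := hlo p.1 (p.1 + 1) p.2 (Nat.lt_succ_self _) p.1.2
    have l2 := hlo q.1 (q.1 + 1) q.2 (Nat.lt_succ_self _) q.1.2
    constructor
    · apply hCx
      · rw [← h1]; omega
      · rw [h1] at l1 ⊢; omega
    · rw [h2]
      exact hCx q _ le_rfl l2
  suffices hb : ∃ η : Fin g × Fin g → Set V, IsMinorMapping (gridGraph g) G η ∧
      ∀ v, C v ⊆ η v by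
    obtain ⟨η, hη, hsub⟩ := hb
    refine ⟨η, hη, fun j => ⟨P.q j 0, P.start j, hsub _ (hCx (⟨0, hg⟩, j) 0 ?_ ?_)⟩⟩
    · simp [lo]
    · exact lt_of_le_of_lt (Nat.zero_le _) (hlo 0 1 j one_pos hg)
  refine build (gridRel g) G C ZZ ?_ ?_ ?_ ?_
  · intro p
    have h1 := hlo p.1 (p.1 + 1) p.2 (Nat.lt_succ_self _) p.1.2
    have h2 := hlotop (p.1 + 1) p.2 p.1.2
    exact P.cn_seg p.2 _ _ (by omega) (fun i _ hi => P.adj _ _ (by omega))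
  · intro p p' hne
    rw [Set.disjoint_left]
    exact fun y hy hy' => hne (hCuniq _ _ _ hy hy')
  · rintro p q (⟨h1, h2⟩ | ⟨h1, h2⟩) -
    · simp only [ZZ, if_pos h1]
      have ha : (p.2 : ℕ) + 1 < g := by have := q.2.2; omega
      obtain ⟨z1, z2, ⟨x, hx, hx'⟩, ⟨y, hy, hy'⟩, z5⟩ := hZ _ (hnlt p.1 p.2 ha) p.2 q.2 h2
      refine ⟨z2, ⟨x, hx, hin p.1 p.2 ha _ _ (z1 hx) hx'⟩, ⟨y, hy, ?_⟩, ?_⟩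
      · have := hin p.1 p.2 ha _ _ (z1 hy) hy'
        rwa [h1] at this
      · intro w hwp hwq
        rw [Set.disjoint_left]
        intro v hv hvw
        obtain ⟨i, -, -, hi, rfl⟩ := hCmem _ _ hvw
        have hrow : P.q w.2 i ∈ P.vs w.2 := ⟨i, hi, rfl⟩
        have hw := hCuniq _ _ _ (hin p.1 p.2 ha w.2 _ (z1 hv) hrow) hvw
        have hw1 : p.1 = w.1 := (Prod.ext_iff.1 hw).1
        refine Set.disjoint_left.1 (z5 w.2 ?_ ?_) hv hrow
        · exact fun h => hwp (Prod.ext hw1.symm h)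
        · exact fun h => hwq (Prod.ext (hw1.symm.trans h1) h)
    · have hne : p.1 ≠ q.1 := fun h => by rw [h] at h2; omega
      obtain ⟨m1, m2⟩ := hhor p q h1 h2
      simp only [ZZ, if_neg hne]
      refine ⟨?_, ⟨_, Or.inl rfl, m1⟩, ⟨_, Or.inr rfl, m2⟩, ?_⟩
      · have l1 := hlo p.1 (p.1 + 1) p.2 (Nat.lt_succ_self _) p.1.2
        have l2 := hlolen q.1 p.2 q.1.2
        have := P.adj p.2 (lo q.1 p.2 - 1) (by rw [h2] at l1; omega)
        rw [Nat.sub_add_cancel (by rw [h2] at l1; omega)] at this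
        exact (Cn.singleton _).union_adj (Cn.singleton _) rfl rfl this
      · intro w hwp hwq
        rw [Set.disjoint_left]
        rintro v (rfl | rfl) hvw
        · exact hwp (hCuniq _ _ _ hvw m1)
        · exact hwq (hCuniq _ _ _ hvw m2)
  · intro u v u' v' h hne h' hne' hdiff x hx hx'
    rcases h with ⟨h1, h2⟩ | ⟨h1, h2⟩
    · rcases h' with ⟨h1', h2'⟩ | ⟨h1', h2'⟩
      · exfalso
        simp only [ZZ, if_pos h1, if_pos h1'] at hx hx'
        have ha : (u.2 : ℕ) + 1 < g := by have := v.2.2; omega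
        have ha' : (u'.2 : ℕ) + 1 < g := by have := v'.2.2; omega
        have k1 := (hZ _ (hnlt u.1 u.2 ha) u.2 v.2 h2).1 hx
        have k2 := (hZ _ (hnlt u'.1 u'.2 ha') u'.2 v'.2 h2').1 hx'
        by_cases hn : (u.1 : ℕ) * g + (u.2 + 1) = u'.1 * g + (u'.2 + 1)
        · apply hdiff
          have e1 : (u.1 : ℕ) = u'.1 := by
            rcases lt_trichotomy (u.1 : ℕ) u'.1 with h | h | h
            · have := Nat.mul_le_mul_right g (show (u.1 : ℕ) + 1 ≤ u'.1 from h)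
              rw [Nat.add_mul] at this; omega
            · exact h
            · have := Nat.mul_le_mul_right g (show (u'.1 : ℕ) + 1 ≤ u.1 from h)
              rw [Nat.add_mul] at this; omega
          rw [e1] at hn
          have e1' := Fin.ext e1
          have e2 : u.2 = u'.2 := Fin.ext (by omega)
          have e3 : v.2 = v'.2 := Fin.ext (by omega)
          rw [Prod.ext_iff, Prod.ext_iff, Prod.ext_iff]
          exact ⟨⟨e1', e2⟩, by rw [← h1, ← h1']; exact e1', e3⟩
        · exact Set.disjoint_left.1 (hdis _ _ (hnlt _ _ ha) (hnlt _ _ ha') hn) k1 k2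
      · have hne : u'.1 ≠ v'.1 := fun h => by rw [h] at h2'; omega
        simp only [ZZ, if_neg hne] at hx'
        obtain ⟨m1, m2⟩ := hhor u' v' h1' h2'
        rcases hx' with rfl | rfl
        exacts [⟨_, m1⟩, ⟨_, m2⟩]
    · have hne : u.1 ≠ v.1 := fun h => by rw [h] at h2; omega
      simp only [ZZ, if_neg hne] at hx
      obtain ⟨m1, m2⟩ := hhor u v h1 h2
      rcases hx with rfl | rfl
      exacts [⟨_, m1⟩, ⟨_, m2⟩]

/-- Two paths are adjacent in the link graph of `K` if `K` contains a connected set that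
meets these two paths and no other ones. -/
def linkGraph {G : SimpleGraph V} {A B : Set V} {r : ℕ} (Q : PathSys G A B r) (K : Set V) :
    SimpleGraph (Fin r) where
  Adj j j' := j ≠ j' ∧ ∃ Z ⊆ K, Cn G Z ∧ (Z ∩ Q.vs j).Nonempty ∧ (Z ∩ Q.vs j').Nonempty ∧
    ∀ l, l ≠ j → l ≠ j' → Disjoint Z (Q.vs l)
  symm := ⟨fun _ _ ⟨h, Z, h1, h2, h3, h4, h5⟩ =>
    ⟨h.symm, Z, h1, h2, h4, h3, fun l hl hl' => h5 l hl' hl⟩⟩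
  loopless := ⟨fun _ h => h.1 rfl⟩

/-- If the connected set `K` meets all paths, then its link graph is connected: walking through
`K`, consecutive visits to different paths yield links. -/
theorem linkGraph_reachable {G : SimpleGraph V} {A B : Set V} {r : ℕ} (Q : PathSys G A B r)
    {K : Set V} (hK : Cn G K) (hmeet : ∀ j, (K ∩ Q.vs j).Nonempty) (j j' : Fin r) :
    (linkGraph Q K).Reachable j j' := by
  obtain ⟨x, hxK, hx⟩ := hmeet j
  obtain ⟨y, hyK, hy⟩ := hmeet j'
  have key : ∀ z, Rch G K x z → ∃ l, (linkGraph Q K).Reachable j l ∧ ∃ Z ⊆ K, Cn G Z ∧ z ∈ Z ∧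
      (Z ∩ Q.vs l).Nonempty ∧ ∀ m, m ≠ l → Disjoint Z (Q.vs m) := by
    have hsing : ∀ l z, z ∈ Q.vs l → ∀ m, m ≠ l → Disjoint {z} (Q.vs m) := by
      intro l z hz m hm
      rw [Set.disjoint_singleton_left]
      exact fun h => hm (Q.vs_disj h hz)
    intro z hz
    induction hz with
    | refl => exact ⟨j, SimpleGraph.Reachable.refl _, {x}, by simpa using hxK, Cn.singleton x,
        rfl, ⟨x, rfl, hx⟩, hsing j x hx⟩
    | @tail z w h1 h2 ih =>
      obtain ⟨l, hl, Z, hZK, hZ, hzZ, hZl, hZm⟩ := ih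
      have hU : Cn G (Z ∪ {w}) := hZ.union_adj (Cn.singleton w) hzZ rfl h2.1
      have hUK : Z ∪ {w} ⊆ K := Set.union_subset hZK (by simpa using h2.2.2)
      by_cases hw : ∃ m, m ≠ l ∧ w ∈ Q.vs m
      · obtain ⟨m, hml, hwm⟩ := hw
        refine ⟨m, hl.trans (SimpleGraph.Adj.reachable ⟨hml.symm, Z ∪ {w}, hUK, hU,
          hZl.mono (by gcongr; exact Set.subset_union_left), ⟨w, Or.inr rfl, hwm⟩, ?_⟩), {w},
          by simpa using h2.2.2, Cn.singleton w, rfl, ⟨w, rfl, hwm⟩, hsing m w hwm⟩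
        intro k hkl hkm
        rw [Set.disjoint_union_left]
        exact ⟨hZm k hkl, hsing m w hwm k hkm⟩
      · refine ⟨l, hl, Z ∪ {w}, hUK, hU, Or.inr rfl,
          hZl.mono (by gcongr; exact Set.subset_union_left), ?_⟩
        intro m hm
        rw [Set.disjoint_union_left, Set.disjoint_singleton_left]
        exact ⟨hZm m hm, fun h => hw ⟨m, hm, h⟩⟩
  obtain ⟨l, hl, Z, -, -, hyZ, -, hZm⟩ := key y (hK.2 x hxK y hyK)
  by_cases h : j' = l
  · rwa [h]
  · exact absurd hy (Set.disjoint_left.1 (hZm j' h) hyZ)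

/-- A large connected graph contains a long path or a vertex of large degree. -/
theorem path_or_star {r g : ℕ} (T : SimpleGraph (Fin r)) (hT : ∀ j j', T.Reachable j j')
    (hr : (g + 1) ^ g < r) :
    (∃ ρ : Fin g → Fin r, Function.Injective ρ ∧
      ∀ a b : Fin g, (a : ℕ) + 1 = b → T.Adj (ρ a) (ρ b)) ∨
    (∃ c, ∃ ρ : Fin g → Fin r, Function.Injective ρ ∧ ∀ a, T.Adj c (ρ a)) := by
  classical
  by_cases hdeg : ∃ c, g ≤ T.degree c
  · right
    obtain ⟨c, hc⟩ := hdeg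
    refine ⟨c, fun a => ((T.neighborFinset c).equivFin.symm ⟨a, lt_of_lt_of_le a.2 hc⟩ : Fin r),
      ?_, ?_⟩
    · intro a b hab
      have := (T.neighborFinset c).equivFin.symm.injective (Subtype.ext hab)
      exact Fin.ext (Fin.mk.inj_iff.1 this)
    · intro a
      have := ((T.neighborFinset c).equivFin.symm ⟨a, lt_of_lt_of_le a.2 hc⟩).2
      exact (T.mem_neighborFinset c _).1 this
  · left
    push Not at hdeg
    have hr0 : 0 < r := by omega
    let v0 : Fin r := ⟨0, hr0⟩
    have hball : ∀ n, ∃ B : Finset (Fin r), B.card ≤ (g + 1) ^ n ∧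
        ∀ w (p : T.Walk w v0), p.length ≤ n → w ∈ B := by
      intro n
      induction n with
      | zero =>
        refine ⟨{v0}, by simp, ?_⟩
        intro w p hp
        have := SimpleGraph.Walk.eq_of_length_eq_zero (Nat.le_zero.1 hp)
        simpa using this
      | succ n ih =>
        obtain ⟨B, hB, hBw⟩ := ih
        refine ⟨B ∪ B.biUnion (fun v => T.neighborFinset v), ?_, ?_⟩
        · have h1 := Finset.card_biUnion_le_card_mul B (fun v => T.neighborFinset v) g
            (fun v _ => (hdeg v).le)
          have h2 := Finset.card_union_le B (B.biUnion (fun v => T.neighborFinset v))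
          calc _ ≤ B.card + B.card * g := by omega
            _ = B.card * (g + 1) := by ring
            _ ≤ _ := by rw [pow_succ]; exact Nat.mul_le_mul_right _ hB
        · intro w p hp
          cases p with
          | nil => exact Finset.mem_union_left _ (hBw _ SimpleGraph.Walk.nil (Nat.zero_le _))
          | @cons _ u _ h q =>
            refine Finset.mem_union_right _ (Finset.mem_biUnion.2 ⟨u, hBw u q ?_, ?_⟩)
            · rw [SimpleGraph.Walk.length_cons] at hp; omega
            · simpa using h.symm
    obtain ⟨B, hB, hBw⟩ := hball g
    obtain ⟨w, hw⟩ : ∃ w, w ∉ B := by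
      by_contra hcon
      push Not at hcon
      have := Finset.card_le_card (show Finset.univ ⊆ B from fun w _ => hcon w)
      rw [Finset.card_univ, Fintype.card_fin] at this
      omega
    obtain ⟨p, hp⟩ := (hT w v0).exists_isPath
    have hlen : g < p.length := by
      by_contra h
      exact hw (hBw w p (not_lt.1 h))
    refine ⟨fun a => p.getVert a, ?_, ?_⟩
    · intro a b hab
      have ha := a.2
      have hb := b.2
      exact Fin.ext (hp.getVert_injOn (by simp; omega) (by simp; omega) hab)
    · intro a b hab
      have := b.2
      have := p.adj_getVert_succ (show (a : ℕ) < p.length by omega)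
      rwa [hab] at this

/-- If many disjoint connected sets `K` meet all paths of a sufficiently large path system
starting in `S`, and all paths traverse them in the same order, there is a rooted grid. -/
theorem grid_of_order (g : ℕ) (hg : 0 < g) : ∃ r s : ℕ, 1 ≤ r ∧ ∀ {V : Type} (G : SimpleGraph V)
    (S B : Set V) (Q : PathSys G S B r) (K : Fin s → Set V), (∀ a, Cn G (K a)) →
    (∀ a b, a ≠ b → Disjoint (K a) (K b)) → (∀ a j, ∃ i ≤ Q.len j, Q.q j i ∈ K a) →
    (∀ a b, a < b → ∀ j i i', i ≤ Q.len j → i' ≤ Q.len j → Q.q j i ∈ K a → Q.q j i' ∈ K b →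
      i < i') → RootedGrid G S g hg := by
  classical
  let r := (g + 1) ^ g + 1
  refine ⟨r, Fintype.card (SimpleGraph (Fin r)) * (g * g), by omega, ?_⟩
  intro V G S B Q K hK hdis hmeet hord
  -- Many of the sets have the same link graph.
  obtain ⟨T, hT⟩ : ∃ T, g * g ≤ (Finset.univ.filter (fun a => linkGraph Q (K a) = T)).card := by
    have hne : (Finset.univ : Finset (SimpleGraph (Fin r))).Nonempty := ⟨⊥, Finset.mem_univ _⟩
    obtain ⟨T, -, hT⟩ := Finset.exists_le_card_fiber_of_mul_le_card_of_maps_to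
      (s := Finset.univ) (t := (Finset.univ : Finset (SimpleGraph (Fin r))))
      (f := fun a => linkGraph Q (K a)) (n := g * g) (fun _ _ => Finset.mem_univ _) hne
      (by simp)
    exact ⟨T, hT⟩
  obtain ⟨F, hF, hFc⟩ := Finset.exists_subset_card_eq hT
  let e := F.orderEmbOfFin hFc
  have heT : ∀ n, linkGraph Q (K (e n)) = T := fun n =>
    (Finset.mem_filter.1 (hF (F.orderEmbOfFin_mem hFc n))).2
  have hgg : 0 < g * g := Nat.mul_pos hg hg
  -- The sets, together with the path segments they span.
  let Hull : Fin (g * g) → Set V := fun n => K (e n) ∪ {y | ∃ j α β γ, α ≤ β ∧ β ≤ γ ∧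
    γ ≤ Q.len j ∧ Q.q j α ∈ K (e n) ∧ Q.q j γ ∈ K (e n) ∧ Q.q j β = y}
  have hhit : ∀ n j β, β ≤ Q.len j → Q.q j β ∈ Hull n → ∃ α γ, α ≤ β ∧ β ≤ γ ∧
      γ ≤ Q.len j ∧ Q.q j α ∈ K (e n) ∧ Q.q j γ ∈ K (e n) := by
    rintro n j β hβ (h | ⟨j', α, β', γ, h1, h2, h3, h4, h5, h6⟩)
    · exact ⟨β, β, le_rfl, le_rfl, hβ, h, h⟩
    · obtain ⟨rfl, rfl⟩ := Q.inj _ _ _ _ (h2.trans h3) hβ h6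
      exact ⟨α, γ, h1, h2, h3, h4, h5⟩
  have hHord : ∀ n n', n < n' → ∀ j x x', x ≤ Q.len j → x' ≤ Q.len j → Q.q j x ∈ Hull n →
      Q.q j x' ∈ Hull n' → x < x' := by
    intro n n' hnn j x x' hx hx' h h'
    obtain ⟨α, γ, h1, h2, h3, h4, h5⟩ := hhit _ _ _ hx h
    obtain ⟨α', γ', h1', h2', h3', h4', h5'⟩ := hhit _ _ _ hx' h'
    have := hord _ _ (e.strictMono hnn) j γ α' h3 (by omega) h5 h4'
    omega
  have hHdis : ∀ n n', n ≠ n' → Disjoint (Hull n) (Hull n') := by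
    intro n n' hne
    rw [Set.disjoint_left]
    have hpath : ∀ j β, β ≤ Q.len j → Q.q j β ∈ Hull n → Q.q j β ∈ Hull n' → False := by
      intro j β hβ h h'
      rcases lt_or_gt_of_ne hne with h2 | h2
      · exact lt_irrefl _ (hHord _ _ h2 _ _ _ hβ hβ h h')
      · exact lt_irrefl _ (hHord _ _ h2 _ _ _ hβ hβ h' h)
    intro y hy hy'
    rcases id hy with h | ⟨j, α, β, γ, h1, h2, h3, h4, h5, rfl⟩
    · rcases id hy' with h' | ⟨j, α, β, γ, h1, h2, h3, h4, h5, rfl⟩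
      · exact Set.disjoint_left.1 (hdis _ _ (fun h => hne (e.injective h))) h h'
      · exact hpath j β (h2.trans h3) hy hy'
    · exact hpath j β (h2.trans h3) hy hy'
  have hTr : ∀ j j', T.Reachable j j' := by
    intro j j'
    rw [← heT ⟨0, hgg⟩]
    refine linkGraph_reachable Q (hK _) (fun j => ?_) j j'
    obtain ⟨i, hi, h⟩ := hmeet (e ⟨0, hgg⟩) j
    exact ⟨_, h, i, hi, rfl⟩
  have hadj : ∀ n j j', T.Adj j j' → (linkGraph Q (K (e n))).Adj j j' := by
    intro n j j' h
    rwa [heT n]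
  -- It remains to link consecutive rows inside each hull.
  have main : ∀ (ρ : Fin g → Fin r) (hρ : Function.Injective ρ),
      (∀ n, ∀ a b : Fin g, (a : ℕ) + 1 = b → ∃ Z ⊆ Hull n, Cn G Z ∧
        (Z ∩ Q.vs (ρ a)).Nonempty ∧ (Z ∩ Q.vs (ρ b)).Nonempty ∧
        ∀ l, l ≠ a → l ≠ b → Disjoint Z (Q.vs (ρ l))) → RootedGrid G S g hg := by
    intro ρ hρ hlink
    refine grid_of_links hg (Q.sub ρ hρ) (fun n => if h : n < g * g then Hull ⟨n, h⟩ else ∅)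
      ?_ ?_ ?_ ?_
    · intro n n' hn hn' hne
      simp only [dif_pos hn, dif_pos hn']
      exact hHdis _ _ (fun h => hne (Fin.ext_iff.1 h))
    · intro n n' hnn hn' b x x' hx hx' h h'
      simp only [dif_pos hn', dif_pos (hnn.trans hn')] at h h'
      exact hHord ⟨n, _⟩ ⟨n', _⟩ hnn (ρ b) x x' hx hx' h h'
    · intro n hn b
      simp only [dif_pos hn]
      obtain ⟨i, hi, h⟩ := hmeet (e ⟨n, hn⟩) (ρ b)
      exact ⟨i, hi, Or.inl h⟩
    · intro n hn a b hab
      simp only [dif_pos hn]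
      exact hlink ⟨n, hn⟩ a b hab
  rcases path_or_star T hTr (Nat.lt_succ_self _) with ⟨ρ, hρ, hρT⟩ | ⟨c, ρ, hρ, hρT⟩
  · refine main ρ hρ fun n a b hab => ?_
    obtain ⟨-, Z, z1, z2, z3, z4, z5⟩ := hadj n _ _ (hρT a b hab)
    exact ⟨Z, z1.trans Set.subset_union_left, z2, z3, z4,
      fun l hl hl' => z5 _ (hρ.ne hl) (hρ.ne hl')⟩
  · refine main ρ hρ fun n a b hab => ?_
    have hca := hρT a
    have hcb := hρT b
    obtain ⟨-, Z, z1, z2, ⟨x, hxZ, i, hi, rfl⟩, z4, z5⟩ := hadj n _ _ hca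
    obtain ⟨-, Z', z1', z2', ⟨x', hxZ', i', hi', rfl⟩, z4', z5'⟩ := hadj n _ _ hcb
    -- The two links are joined along the centre path, inside the hull.
    obtain ⟨M, hM, hMH, hMc, hx, hx'⟩ : ∃ M, Cn G M ∧ M ⊆ Hull n ∧ M ⊆ Q.vs c ∧
        Q.q c i ∈ M ∧ Q.q c i' ∈ M := by
      refine ⟨{y | ∃ β, min i i' ≤ β ∧ β ≤ max i i' ∧ Q.q c β = y},
        Q.cn_seg c _ _ (min_le_max) (fun k _ hk => Q.adj c k (lt_of_lt_of_le hk (max_le hi hi'))),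
        ?_, ?_, ⟨i, min_le_left _ _, le_max_left _ _, rfl⟩,
        ⟨i', min_le_right _ _, le_max_right _ _, rfl⟩⟩
      · rintro y ⟨β, h1, h2, rfl⟩
        refine Or.inr ⟨c, min i i', β, max i i', h1, h2, max_le hi hi', ?_, ?_, rfl⟩
        · rcases min_choice i i' with h | h <;> rw [h]
          exacts [z1 hxZ, z1' hxZ']
        · rcases max_choice i i' with h | h <;> rw [h]
          exacts [z1 hxZ, z1' hxZ']
      · rintro y ⟨β, h1, h2, rfl⟩
        exact ⟨β, h2.trans (max_le hi hi'), rfl⟩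
    refine ⟨(Z ∪ M) ∪ Z', ?_, (z2.union hM hxZ hx).union z2' (Or.inr hx') hxZ',
      z4.mono ?_, z4'.mono ?_, ?_⟩
    · exact Set.union_subset (Set.union_subset (z1.trans Set.subset_union_left) hMH)
        (z1'.trans Set.subset_union_left)
    · exact Set.inter_subset_inter_left _ (fun y hy => Or.inl (Or.inl hy))
    · exact Set.inter_subset_inter_left _ (fun y hy => Or.inr hy)
    · intro l hl hl'
      rw [Set.disjoint_union_left, Set.disjoint_union_left]
      refine ⟨⟨z5 _ (hρT l).ne' (hρ.ne hl), ?_⟩, z5' _ (hρT l).ne' (hρ.ne hl')⟩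
      rw [Set.disjoint_left]
      exact fun y hy hy' => (hρT l).ne (Q.vs_disj (hMc hy) hy')

/-! ### Rerouting -/

/-- Without a rooted grid, any `t` disjoint paths starting in `S` can be rerouted such that,
of a given family of disjoint connected sets, only boundedly many meet `r` or more of the paths.
The rerouted system minimizes the number of edges outside the family. -/
theorem tool (g : ℕ) (hg : 0 < g) : ∃ r : ℕ, 1 ≤ r ∧ ∀ t, ∃ N : ℕ, ∀ {V : Type} [Fintype V]
    (G : SimpleGraph V) (S : Set V), ¬ RootedGrid G S g hg → ∀ A B : Set V, A ⊆ S →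
    Nonempty (PathSys G A B t) → ∀ {ι : Type} [Finite ι] (Y : ι → Set V), (∀ n, Cn G (Y n)) →
    (∀ n n', n ≠ n' → Disjoint (Y n) (Y n')) →
    ∃ Q : PathSys G A B t,
      {n | r ≤ {j | (Q.vs j ∩ Y n).Nonempty}.ncard}.ncard < N := by
  classical
  obtain ⟨r, s, hr, hgrid⟩ := grid_of_order g hg
  refine ⟨r, hr, fun t => ?_⟩
  let L := s * t + 1
  refine ⟨Fintype.card (Finset (Fin t)) * (s * L + 1), ?_⟩
  intro V _ G S hno A B hAS hne ι _ Y hY hdis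
  obtain ⟨Q, hQ⟩ : ∃ Q : PathSys G A B t, ∀ Q' : PathSys G A B t,
      Q.cost (inside G Y) ≤ Q'.cost (inside G Y) := by
    obtain ⟨Q, -, hQ⟩ := WellFounded.has_min
      (InvImage.wf (fun Q : PathSys G A B t => Q.cost (inside G Y)) Nat.lt_wfRel.wf) Set.univ
      ⟨hne.some, trivial⟩
    exact ⟨Q, fun Q' => not_lt.1 (hQ Q' trivial)⟩
  refine ⟨Q, ?_⟩
  by_contra hcon
  rw [not_lt] at hcon
  apply hno
  let _ : Fintype ι := Fintype.ofFinite ι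
  have hJ : ∀ n, ∃ J : Finset (Fin t), r ≤ {j | (Q.vs j ∩ Y n).Nonempty}.ncard →
      J.card = r ∧ ∀ j ∈ J, (Q.vs j ∩ Y n).Nonempty := by
    intro n
    by_cases h : r ≤ {j | (Q.vs j ∩ Y n).Nonempty}.ncard
    · rw [Set.ncard_eq_toFinset_card'] at h
      obtain ⟨J, hJ, hJc⟩ := Finset.exists_subset_card_eq h
      exact ⟨J, fun _ => ⟨hJc, fun j hj => by simpa using hJ hj⟩⟩
    · exact ⟨∅, fun h' => absurd h' h⟩
  choose J hJ using hJ
  rw [Set.ncard_eq_toFinset_card'] at hcon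
  obtain ⟨J0, -, hJ0⟩ := Finset.exists_le_card_fiber_of_mul_le_card_of_maps_to
    (t := (Finset.univ : Finset (Finset (Fin t)))) (f := J) (fun _ _ => Finset.mem_univ _)
    ⟨∅, Finset.mem_univ _⟩ (by rw [Finset.card_univ]; exact hcon)
  set F := Finset.filter (fun n => J n = J0)
    ({n | r ≤ {j | (Q.vs j ∩ Y n).Nonempty}.ncard} : Set ι).toFinset with hF
  have hFm : ∀ n ∈ F, J0.card = r ∧ ∀ j ∈ J0, (Q.vs j ∩ Y n).Nonempty := by
    intro n hn
    rw [hF, Finset.mem_filter, Set.mem_toFinset] at hn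
    rw [← hn.2]
    exact hJ n hn.1
  have hFpos : 0 < F.card := by omega
  obtain ⟨n0, hn0⟩ := Finset.card_pos.1 hFpos
  have hJc := (hFm n0 hn0).1
  obtain ⟨j0, hj0⟩ : J0.Nonempty := Finset.card_pos.1 (by omega)
  let σ : Fin (s * L) → ι := fun i => (F.equivFin.symm ⟨i, by omega⟩ : ι)
  have hσ : Function.Injective σ := by
    intro a b hab
    have := F.equivFin.symm.injective (Subtype.ext hab)
    exact Fin.ext (Fin.mk.inj_iff.1 this)
  have hσF : ∀ i, σ i ∈ F := fun i => (F.equivFin.symm ⟨i, by omega⟩).2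
  have hmeet : ∀ i, ∀ j ∈ J0, ∃ x ≤ Q.len j, Q.q j x ∈ Y (σ i) := by
    intro i j hj
    obtain ⟨y, ⟨x, hx, rfl⟩, hy⟩ := (hFm _ (hσF i)).2 j hj
    exact ⟨x, hx, hy⟩
  obtain ⟨τ, hτ⟩ := order Q Y hY hdis hQ j0 s L (Nat.lt_succ_self _) σ hσ
    (fun n => hmeet n j0 hj0)
  have hτinj : Function.Injective τ := by
    intro a b hab
    by_contra hne
    obtain ⟨x, hx, hxY⟩ := hmeet (τ a) j0 hj0
    rcases lt_or_gt_of_ne hne with h | h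
    · exact lt_irrefl _ (hτ a b h j0 x x hx hx hxY (hab ▸ hxY))
    · exact lt_irrefl _ (hτ b a h j0 x x hx hx (hab ▸ hxY) hxY)
  let ρ := J0.orderEmbOfFin hJc
  refine hgrid G S B ((Q.sub ρ ρ.injective).change (fun j i h => Q.adj _ i h)
    (fun j => hAS (Q.start _)) (fun j => Q.fin _)) (fun a => Y (σ (τ a))) (fun a => hY _)
    (fun a b hab => hdis _ _ (hσ.ne (hτinj.ne hab))) ?_ ?_
  · intro a j
    exact hmeet (τ a) (ρ j) (J0.orderEmbOfFin_mem hJc j)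
  · intro a b hab j i i' hi hi' hy hz
    exact hτ a b hab (ρ j) i i' hi hi' hy hz

/-! ### Disjoint connectors between disjoint sets -/

theorem exists_avoid {t t' b : ℕ} (bad : Set (Fin t)) (hb : bad.ncard ≤ b) (ht : t' + b ≤ t) :
    ∃ σ : Fin t' → Fin t, Function.Injective σ ∧ ∀ j, σ j ∉ bad := by
  classical
  have h1 : t' ≤ (bad.toFinset)ᶜ.card := by
    rw [Finset.card_compl, Fintype.card_fin, ← Set.ncard_eq_toFinset_card']
    omega
  obtain ⟨F, hF, hFc⟩ := Finset.exists_subset_card_eq h1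
  refine ⟨F.orderEmbOfFin hFc, (F.orderEmbOfFin hFc).injective, fun j => ?_⟩
  have := hF (F.orderEmbOfFin_mem hFc j)
  simpa using this

/-- The subgraph of `G` formed by the edges inside `W`, on all vertices. -/
def restr (G : SimpleGraph V) (W : Set V) : SimpleGraph V where
  Adj u v := G.Adj u v ∧ u ∈ W ∧ v ∈ W
  symm := ⟨fun _ _ h => ⟨h.1.symm, h.2.2, h.2.1⟩⟩
  loopless := ⟨fun u h => G.loopless.irrefl u h.1⟩

theorem restr_le (G : SimpleGraph V) (W : Set V) : restr G W ≤ G := fun _ _ h => h.1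

/-- The vertices allowed for a connector of the sets `C e.1` and `C e.2`. -/
def allowed {α : Type} (C : α → Set V) (e : α × α) (D : Set V) : Set V :=
  {x | x ∉ D ∧ ∀ l, l ≠ e.1 → l ≠ e.2 → x ∉ C l}

/-- A path between disjoint sets has positive length, hence it uses only vertices of `W`. -/
theorem PathSys.mem_restr {G : SimpleGraph V} {W A B : Set V} {t : ℕ}
    (Q : PathSys (restr G W) A B t) (hAB : Disjoint A B) (j : Fin t) {i : ℕ} (hi : i ≤ Q.len j) :
    Q.q j i ∈ W := by
  have hpos : 0 < Q.len j := by
    by_contra h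
    have h0 : Q.len j = 0 := by omega
    have := Q.fin j
    rw [h0] at this
    exact Set.disjoint_left.1 hAB (Q.start j) this
  rcases hi.lt_or_eq with h | h
  · exact (Q.adj j i h).2.1
  · have := (Q.adj j (i - 1) (by omega)).2.2
    rwa [Nat.sub_add_cancel (by omega)] at this

/-- A path from `A` to `B` contains a segment from `A` to `B` whose inner vertices avoid both. -/
theorem PathSys.segment {G : SimpleGraph V} {A B A' B' : Set V} {t : ℕ} (Q : PathSys G A B t)
    (hA : A ⊆ A') (hB : B ⊆ B') (hdis : Disjoint A' B') (j : Fin t) :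
    ∃ a b, a < b ∧ b ≤ Q.len j ∧ Q.q j a ∈ A' ∧ Q.q j b ∈ B' ∧
      ∀ i, a < i → i < b → Q.q j i ∉ A' ∧ Q.q j i ∉ B' := by
  classical
  have hex : ∃ b, Q.q j b ∈ B' := ⟨_, hB (Q.fin j)⟩
  let b := Nat.find hex
  have hb : Q.q j b ∈ B' := Nat.find_spec hex
  have hbmin : ∀ i, i < b → Q.q j i ∉ B' := fun i hi => Nat.find_min hex hi
  have hble : b ≤ Q.len j := Nat.find_min' hex (hB (Q.fin j))
  have hbpos : b ≠ 0 := by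
    intro h
    rw [h] at hb
    exact Set.disjoint_left.1 hdis (hA (Q.start j)) hb
  let a := Nat.findGreatest (fun i => Q.q j i ∈ A') (b - 1)
  have ha : Q.q j a ∈ A' := Nat.findGreatest_spec (P := fun i => Q.q j i ∈ A') (Nat.zero_le _)
    (hA (Q.start j))
  have hab : a ≤ b - 1 := Nat.findGreatest_le _
  refine ⟨a, b, by omega, hble, ha, hb, fun i h h' => ⟨?_, hbmin i h'⟩⟩
  exact Nat.findGreatest_is_greatest h (by omega)

/-- If every pair in `E` is linked by sufficiently many disjoint paths that avoid the other sets
`C l`, and there is no rooted grid, then one connector for each pair can be chosen such that the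
connectors are disjoint outside the sets `C l`. The connector of the first pair is a path segment
that meets only few paths of (suitably rerouted) path systems of the other pairs; it is added to
the forbidden set `D`. -/
theorem clean (g : ℕ) (hg : 0 < g) : ∀ n : ℕ, ∃ τ : ℕ, ∀ {V : Type} [Fintype V]
    (G : SimpleGraph V) (S : Set V), ¬ RootedGrid G S g hg → ∀ {α : Type} (C : α → Set V),
    (∀ u v, u ≠ v → Disjoint (C u) (C v)) → ∀ E : Finset (α × α), E.card = n →
    (∀ e ∈ E, e.1 ≠ e.2) → ∀ D : Set V,
    (∀ e ∈ E, Nonempty (PathSys (restr G (allowed C e D)) (S ∩ C e.1) (S ∩ C e.2) τ)) →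
    ∃ Z : α × α → Set V,
      (∀ e ∈ E, Cn G (Z e) ∧ (Z e ∩ C e.1).Nonempty ∧ (Z e ∩ C e.2).Nonempty ∧
        (∀ l, l ≠ e.1 → l ≠ e.2 → Disjoint (Z e) (C l)) ∧ Disjoint (Z e) D) ∧
      ∀ e ∈ E, ∀ f ∈ E, e ≠ f → ∀ x ∈ Z e, x ∈ Z f → ∃ l, x ∈ C l := by
  classical
  obtain ⟨r, hr, htool⟩ := tool g hg
  intro n
  induction n with
  | zero =>
    refine ⟨0, fun G S _ α C _ E hE _ D _ => ⟨fun _ => ∅, ?_, ?_⟩⟩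
    · rw [Finset.card_eq_zero] at hE; subst hE; simp
    · rw [Finset.card_eq_zero] at hE; subst hE; simp
  | succ n ih =>
    obtain ⟨τ, ih⟩ := ih
    obtain ⟨N, htool⟩ := htool (τ + r)
    refine ⟨max (τ + r) (n * N + 1), ?_⟩
    intro V _ G S hno α C hC E hE hEne D hP
    have hτ1 : τ + r ≤ max (τ + r) (n * N + 1) := le_max_left _ _
    have hτ2 : n * N + 1 ≤ max (τ + r) (n * N + 1) := le_max_right _ _
    generalize max (τ + r) (n * N + 1) = τ' at *
    obtain ⟨e0, he0⟩ : E.Nonempty := Finset.card_pos.1 (by omega)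
    let E' := E.erase e0
    have hE' : E'.card = n := by rw [Finset.card_erase_of_mem he0, hE]; rfl
    have hsub : ∀ f ∈ E', f ∈ E := fun f hf => Finset.mem_of_mem_erase hf
    have hSdis : ∀ f ∈ E, Disjoint (S ∩ C f.1) (S ∩ C f.2) := fun f hf =>
      (hC _ _ (hEne f hf)).mono Set.inter_subset_right Set.inter_subset_right
    obtain ⟨P⟩ := hP e0 he0
    choose a b hab hb ha hbC hinn using
      P.segment Set.inter_subset_right Set.inter_subset_right (hC _ _ (hEne e0 he0))
    have hPW : ∀ j i, i ≤ P.len j → P.q j i ∈ allowed C e0 D := fun j i hi =>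
      P.mem_restr (hSdis e0 he0) j hi
    let Y : Fin τ' → Set V := fun j => {x | ∃ i, a j < i ∧ i < b j ∧ P.q j i = x}
    have hYC : ∀ j, ∀ x ∈ Y j, ∀ l, x ∉ C l := by
      rintro j x ⟨i, h1, h2, rfl⟩ l
      have h3 := hb j
      by_cases hl1 : l = e0.1
      · rw [hl1]; exact (hinn j i h1 h2).1
      by_cases hl2 : l = e0.2
      · rw [hl2]; exact (hinn j i h1 h2).2
      exact (hPW j i (by omega)).2 l hl1 hl2
    have hYD : ∀ j, ∀ x ∈ Y j, x ∉ D := by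
      rintro j x ⟨i, h1, h2, rfl⟩
      have h3 := hb j
      exact (hPW j i (by omega)).1
    have hYW : ∀ j, ∀ x ∈ Y j, ∀ f, x ∈ allowed C f D := fun j x hx f =>
      ⟨hYD j x hx, fun l _ _ => hYC j x hx l⟩
    obtain ⟨j, hj⟩ : ∃ j, ∀ f ∈ E', Nonempty (PathSys (restr G (allowed C f (D ∪ Y j)))
        (S ∩ C f.1) (S ∩ C f.2) τ) := by
      by_cases hemp : ∃ j, Y j = ∅
      · obtain ⟨j, hj⟩ := hemp
        refine ⟨j, fun f hf => ?_⟩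
        rw [hj, Set.union_empty]
        obtain ⟨Q⟩ := hP f (hsub f hf)
        obtain ⟨σ, hσ, -⟩ := exists_avoid (t := τ') (t' := τ) (b := 0) ∅ (by simp) (by omega)
        exact ⟨Q.sub σ hσ⟩
      · push Not at hemp
        have hYcn : ∀ f, ∀ j, Cn (restr G (allowed C f D)) (Y j) := by
          intro f j
          have hYeq : Y j = {x | ∃ i, a j + 1 ≤ i ∧ i ≤ b j - 1 ∧ P.q j i = x} := by
            ext x
            constructor
            · rintro ⟨i, h1, h2, h3⟩; exact ⟨i, by omega, by omega, h3⟩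
            · rintro ⟨i, h1, h2, h3⟩; exact ⟨i, by omega, by have := hab j; omega, h3⟩
          obtain ⟨x, i, h1, h2, -⟩ := hemp j
          have h3 := hb j
          have : Cn G (Y j) := by
            rw [hYeq]
            exact P.cn_seg j _ _ (by omega) (fun i h h' => (P.adj j i (by omega)).1)
          exact this.mono fun x y hx hy hxy => ⟨hxy, hYW j x hx f, hYW j y hy f⟩
        have hYdis : ∀ j j', j ≠ j' → Disjoint (Y j) (Y j') := by
          intro j j' hne
          rw [Set.disjoint_left]
          rintro x ⟨i, h1, h2, rfl⟩ ⟨i', h1', h2', e⟩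
          have h3 := hb j
          have h3' := hb j'
          exact hne (P.inj _ _ _ _ (by omega) (by omega) e).1.symm
        have hQ : ∀ f, ∃ bad : Set (Fin τ'), bad.ncard ≤ N ∧ (f ∈ E' → ∀ j, j ∉ bad →
            Nonempty (PathSys (restr G (allowed C f (D ∪ Y j))) (S ∩ C f.1) (S ∩ C f.2) τ)) := by
          intro f
          by_cases hf : f ∈ E'
          swap
          · exact ⟨∅, by simp, fun h => absurd h hf⟩
          obtain ⟨Q0⟩ := hP f (hsub f hf)
          obtain ⟨σ, hσ, -⟩ := exists_avoid (t := τ') (t' := τ + r) (b := 0) ∅ (by simp)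
            (by omega)
          obtain ⟨Q, hQ⟩ := htool (restr G (allowed C f D)) S
            (fun h => hno (h.mono (restr_le _ _))) (S ∩ C f.1) (S ∩ C f.2)
            Set.inter_subset_left ⟨Q0.sub σ hσ⟩ Y (hYcn f) hYdis
          refine ⟨_, hQ.le, fun _ j hj => ?_⟩
          have hj' : {k | (Q.vs k ∩ Y j).Nonempty}.ncard ≤ r := (not_le.1 hj).le
          obtain ⟨σ', hσ', hav⟩ := exists_avoid (t' := τ) _ hj' le_rfl
          have hmem : ∀ k i, i ≤ Q.len (σ' k) → Q.q (σ' k) i ∈ allowed C f (D ∪ Y j) := by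
            intro k i hi
            have h1 := Q.mem_restr (hSdis f (hsub f hf)) (σ' k) hi
            refine ⟨?_, h1.2⟩
            rintro (h2 | h2)
            · exact h1.1 h2
            · exact hav k ⟨_, ⟨i, hi, rfl⟩, h2⟩
          exact ⟨(Q.sub σ' hσ').change (fun k i hi => ⟨(Q.adj _ i hi).1, hmem k i hi.le,
            hmem k (i + 1) hi⟩) (fun k => Q.start _) (fun k => Q.fin _)⟩
        choose bad hbad hgood using hQ
        have hcard : (E'.biUnion (fun f => (bad f).toFinset)).card ≤ n * N := by
          rw [← hE']
          refine Finset.card_biUnion_le_card_mul _ _ _ (fun f _ => ?_)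
          rw [← Set.ncard_eq_toFinset_card']
          exact hbad f
        obtain ⟨j, hj⟩ : ∃ j, j ∉ E'.biUnion (fun f => (bad f).toFinset) := by
          by_contra hcon
          push Not at hcon
          have := Finset.card_le_card (show Finset.univ ⊆ E'.biUnion (fun f => (bad f).toFinset)
            from fun j _ => hcon j)
          rw [Finset.card_univ, Fintype.card_fin] at this
          omega
        refine ⟨j, fun f hf => hgood f hf j fun h => hj ?_⟩
        exact Finset.mem_biUnion.2 ⟨f, hf, by simpa using h⟩
    obtain ⟨Z, hZ, hZZ⟩ := ih G S hno C hC E' hE' (fun f hf => hEne f (hsub f hf)) (D ∪ Y j) hj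
    let Z0 : Set V := {x | ∃ i, a j ≤ i ∧ i ≤ b j ∧ P.q j i = x}
    have hZ0 : ∀ x ∈ Z0, (∃ l, x ∈ C l) ∨ x ∈ Y j := by
      rintro x ⟨i, h1, h2, rfl⟩
      rcases h1.eq_or_lt with h | h
      · exact Or.inl ⟨_, h ▸ ha j⟩
      rcases h2.eq_or_lt with h' | h'
      · exact Or.inl ⟨_, h' ▸ hbC j⟩
      exact Or.inr ⟨i, h, h', rfl⟩
    have hcross : ∀ f ∈ E', ∀ x ∈ Z0, x ∈ Z f → ∃ l, x ∈ C l := by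
      intro f hf x hx hxf
      rcases hZ0 x hx with h | h
      · exact h
      · exact absurd (Or.inr h) (Set.disjoint_left.1 (hZ f hf).2.2.2.2 hxf)
    refine ⟨fun e => if e = e0 then Z0 else Z e, ?_, ?_⟩
    · intro e he
      by_cases hee : e = e0
      · subst hee
        simp only [if_pos]
        refine ⟨P.cn_seg j _ _ (hab j).le (fun i _ h' => (P.adj j i (by have := hb j; omega)).1),
          ⟨_, ⟨a j, le_rfl, (hab j).le, rfl⟩, ha j⟩, ⟨_, ⟨b j, (hab j).le, le_rfl, rfl⟩, hbC j⟩,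
          ?_, ?_⟩
        · intro l hl hl'
          rw [Set.disjoint_left]
          rintro x ⟨i, h1, h2, rfl⟩
          exact (hPW j i (h2.trans (hb j))).2 l hl hl'
        · rw [Set.disjoint_left]
          rintro x ⟨i, h1, h2, rfl⟩
          exact (hPW j i (h2.trans (hb j))).1
      · simp only [if_neg hee]
        obtain ⟨h1, h2, h3, h4, h5⟩ := hZ e (Finset.mem_erase.2 ⟨hee, he⟩)
        exact ⟨h1, h2, h3, h4, h5.mono_right Set.subset_union_left⟩
    · intro e he f hf hef x hx hx'
      by_cases hee : e = e0
      · have hfe : f ≠ e0 := fun h => hef (hee.trans h.symm)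
        simp only [if_pos hee, if_neg hfe] at hx hx'
        exact hcross f (Finset.mem_erase.2 ⟨hfe, hf⟩) x hx hx'
      · simp only [if_neg hee] at hx
        by_cases hfe : f = e0
        · simp only [if_pos hfe] at hx'
          exact hcross e (Finset.mem_erase.2 ⟨hee, he⟩) x hx' hx
        · simp only [if_neg hfe] at hx'
          exact hZZ e (Finset.mem_erase.2 ⟨hee, he⟩) f (Finset.mem_erase.2 ⟨hfe, hf⟩) hef x hx hx'

/-! ### Disjoint connected sets with many vertices of a well-linked set -/

theorem pathSys_of_wellLinked {G : SimpleGraph V} {S : Set V} (hS : NodeWellLinked G S)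
    (A B : Finset V) (hA : (A : Set V) ⊆ S) (hB : (B : Set V) ⊆ S) (hAB : Disjoint A B) {t : ℕ}
    (hAt : A.card = t) (hBt : B.card = t) : Nonempty (PathSys G (A : Set V) B t) := by
  obtain ⟨P, h1, h2, -⟩ := hS A B hA hB hAB (hAt.trans hBt.symm)
  let e := A.equivFinOfCardEq hAt
  refine ⟨⟨fun j => (P (e.symm j)).2.2.length, fun j i => (P (e.symm j)).2.2.getVert i,
    ?_, ?_, ?_, ?_⟩⟩
  · exact fun j i hi => SimpleGraph.Walk.adj_getVert_succ _ hi
  · intro j i j' i' hi hi' he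
    have hj : j = j' := by
      by_contra hne
      refine h2 _ _ (e.symm.injective.ne hne) _ (SimpleGraph.Walk.getVert_mem_support _ i) ?_
      rw [he]
      exact SimpleGraph.Walk.getVert_mem_support _ i'
    subst hj
    exact ⟨rfl, (h1 _).2.2.getVert_injOn hi hi' he⟩
  · intro j
    rw [SimpleGraph.Walk.getVert_zero]
    exact (h1 _).1
  · intro j
    rw [SimpleGraph.Walk.getVert_length]
    exact (h1 _).2.1

theorem PathSys.exists_avoiding {G : SimpleGraph V} {A B : Set V} {t : ℕ} (Q : PathSys G A B t)
    (X : Finset V) (hX : X.card < t) :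
    ∃ a ∈ A, ∃ b ∈ B, a ∉ X ∧ Rch G (↑X : Set V)ᶜ a b := by
  classical
  have : ∃ j, ∀ i ≤ Q.len j, Q.q j i ∉ X := by
    by_contra hcon
    push Not at hcon
    choose i hi hiX using hcon
    have := Finset.card_le_card_of_injOn (s := Finset.univ) (fun j => Q.q j (i j))
      (fun j _ => hiX j) (fun j _ j' _ h => (Q.inj _ _ _ _ (hi j) (hi j') h).1)
    rw [Finset.card_univ, Fintype.card_fin] at this
    omega
  obtain ⟨j, hj⟩ := this
  exact ⟨_, Q.start j, _, Q.fin j, hj 0 (Nat.zero_le _),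
    Q.rch_seg j 0 _ (Nat.zero_le _) (fun i _ hi => Q.adj j i hi) (fun i _ hi => hj i hi)⟩

/-- `K` contains `M` disjoint connected sets, each with at least `k` vertices of `S`. -/
def Blobs (G : SimpleGraph V) (S K : Set V) (M k : ℕ) : Prop :=
  ∃ C : Fin M → Set V, (∀ i, Cn G (C i) ∧ k ≤ (C i ∩ S).ncard ∧ C i ⊆ K) ∧
    ∀ i j, i ≠ j → Disjoint (C i) (C j)

/-- There are `D` disjoint connected sets avoiding `v`, each meeting `S` and containing a
neighbour of `v`. -/
def Fan (G : SimpleGraph V) (S : Set V) (v : V) (D : ℕ) : Prop :=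
  ∃ W : Fin D → Set V, (∀ d, Cn G (W d) ∧ (∃ x ∈ W d, G.Adj v x) ∧ (W d ∩ S).Nonempty) ∧
    ∀ d e, d ≠ e → Disjoint (W d) (W e)

/-- The components of `U` without a vertex `v` form a fan, if each of them has at most `k` of the
many vertices of `S` in `U`. -/
theorem fan_of_components [Finite V] {G : SimpleGraph V} {S U : Set V} {v : V} {D k : ℕ}
    (hU : Cn G U) (hv : v ∈ U) (hcard : D * k + 1 < (U ∩ S).ncard)
    (hk : ∀ x ∈ U, x ≠ v → ({y | Rch G (U \ {v}) x y} ∩ S).ncard ≤ k) : Fan G S v D := by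
  classical
  let _ : Fintype V := Fintype.ofFinite V
  let comp : V → Set V := fun x => {y | Rch G (U \ {v}) x y}
  let F : Finset V := ((U ∩ S) \ {v}).toFinset
  have hF : ∀ x, x ∈ F ↔ (x ∈ U ∧ x ∈ S) ∧ x ≠ v := by
    intro x
    simp [F]
  have hFc : D * k < F.card := by
    have h1 : (U ∩ S).ncard ≤ ((U ∩ S) \ {v}).ncard + ({v} : Set V).ncard :=
      Set.ncard_le_ncard_sdiff_add_ncard _ _ (Set.toFinite _)
    rw [Set.ncard_singleton, Set.ncard_eq_toFinset_card' ((U ∩ S) \ {v})] at h1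
    have : ((U ∩ S) \ {v}).toFinset.card = F.card := rfl
    omega
  have himg : D ≤ (F.image comp).card := by
    by_contra hlt
    have h1 := Finset.card_le_mul_card_image (s := F) (f := comp) k (by
      intro c hc
      obtain ⟨x, hx, rfl⟩ := Finset.mem_image.1 hc
      have hx' := (hF x).1 hx
      refine le_trans ?_ (hk x hx'.1.1 hx'.2)
      rw [Set.ncard_eq_toFinset_card']
      refine Finset.card_le_card fun y hy => ?_
      obtain ⟨hy, hyx⟩ := Finset.mem_filter.1 hy
      have : y ∈ comp x := hyx ▸ (Rch.refl y : y ∈ comp y)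
      simpa using ⟨this, ((hF y).1 hy).1.2⟩)
    have h2 := Nat.mul_le_mul_left k (not_le.1 hlt).le
    rw [Nat.mul_comm D k] at hFc
    omega
  obtain ⟨I, hI, hIc⟩ := Finset.exists_subset_card_eq himg
  let e := I.equivFinOfCardEq hIc
  have hW : ∀ d, ∃ x ∈ F, comp x = (e.symm d : Set V) := fun d =>
    Finset.mem_image.1 (hI (e.symm d).2)
  refine ⟨fun d => (e.symm d : Set V), fun d => ?_, fun d d' hne => ?_⟩
  · obtain ⟨x, hx, hxd⟩ := hW d
    obtain ⟨⟨hxU, hxS⟩, hxv⟩ := (hF x).1 hx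
    simp only [← hxd]
    refine ⟨Cn.component x, ?_, ⟨x, Rch.refl x, hxS⟩⟩
    obtain ⟨c, d, hcd, -, hdU, hPc, hPd⟩ := (hU.2 x hxU v hv).exit (P := fun z => z ∈ comp x)
      (Rch.refl x) (fun h => (Rch.mem h ⟨hxU, hxv⟩).2 rfl)
    have hdv : d = v := by
      by_contra hdv
      exact hPd (Rch.trans hPc (Rch.single hcd (Rch.mem hPc ⟨hxU, hxv⟩) ⟨hdU, hdv⟩))
    exact ⟨c, hPc, hdv ▸ hcd.symm⟩
  · obtain ⟨x, hx, hxd⟩ := hW d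
    obtain ⟨x', hx', hxd'⟩ := hW d'
    simp only [← hxd, ← hxd']
    rw [Set.disjoint_left]
    intro y hy hy'
    have hxx : Rch G (U \ {v}) x x' := Rch.trans hy (Rch.symm hy')
    apply hne
    apply e.symm.injective
    apply Subtype.ext
    rw [← hxd, ← hxd']
    ext z
    exact ⟨fun h => (Rch.symm hxx).trans h, fun h => hxx.trans h⟩

/-- A connected set with many vertices of `S` splits into connected sets with at least `k` of
them each, or contains a vertex with a large fan. -/
theorem blobs_or_fan [Finite V] (G : SimpleGraph V) (S : Set V) (D k : ℕ) (hD : 1 ≤ D) :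
    ∀ (M : ℕ) (K : Set V), Cn G K → M * (D * k + 1) ≤ (K ∩ S).ncard →
    Blobs G S K M k ∨ ∃ v ∈ K, Fan G S v D := by
  classical
  intro M
  induction M with
  | zero => exact fun K _ _ => Or.inl ⟨fun i => i.elim0, fun i => i.elim0, fun i => i.elim0⟩
  | succ M ih =>
    intro K hK hKS
    have hkD : k ≤ D * k := Nat.le_mul_of_pos_left k hD
    have hle : D * k + 1 ≤ (M + 1) * (D * k + 1) := Nat.le_mul_of_pos_left _ (Nat.succ_pos M)
    obtain ⟨U, ⟨hUK, hU, hKU, hUS⟩, hmin⟩ := WellFounded.has_min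
      (InvImage.wf (fun U : Set V => U.ncard) Nat.lt_wfRel.wf)
      {U : Set V | U ⊆ K ∧ Cn G U ∧ (K \ U = ∅ ∨ Cn G (K \ U)) ∧ k ≤ (U ∩ S).ncard}
      ⟨K, subset_rfl, hK, Or.inl (by simp), by omega⟩
    by_cases hbig : D * k + 1 < (U ∩ S).ncard
    · right
      obtain ⟨v, hvU, hvK⟩ : ∃ v ∈ U, K \ U = ∅ ∨ ∃ z ∈ K \ U, G.Adj v z := by
        rcases hKU with h | h
        · obtain ⟨v, hv⟩ := hU.1
          exact ⟨v, hv, Or.inl h⟩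
        · obtain ⟨x, hx⟩ := hU.1
          obtain ⟨y, hy⟩ := h.1
          obtain ⟨c, d, hcd, -, hd, hPc, hPd⟩ := (hK.2 x (hUK hx) y hy.1).exit
            (P := fun z => z ∈ U) hx hy.2
          exact ⟨c, hPc, Or.inr ⟨d, ⟨hd, hPd⟩, hcd⟩⟩
      refine ⟨v, hUK hvU, fan_of_components hU hvU hbig fun x hx hxv => ?_⟩
      by_contra hcon
      let comp : V → Set V := fun x => {y | Rch G (U \ {v}) x y}
      have hcompU : ∀ x ∈ U, x ≠ v → comp x ⊆ U \ {v} := fun x hx hxv y hy =>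
        Rch.mem hy ⟨hx, hxv⟩
      refine hmin (comp x) ⟨(hcompU x hx hxv).trans (Set.sdiff_subset.trans hUK),
        Cn.component x, Or.inr ?_, (not_le.1 hcon).le⟩ ?_
      · refine Cn.of_center (x := v) ⟨hUK hvU, fun h => (hcompU x hx hxv h).2 rfl⟩ ?_
        rintro y ⟨hyK, hyx⟩
        by_cases hyU : y ∈ U
        · by_cases hyv : y = v
          · rw [hyv]; exact Rch.refl v
          -- The component of `y` is adjacent to `v` and differs from that of `x`.
          have hsub : comp y ⊆ K \ comp x := fun z hz =>
            ⟨hUK (hcompU y hyU hyv hz).1, fun hz' => hyx (Rch.trans hz' (Rch.symm hz))⟩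
          obtain ⟨c, d, hcd, -, hdU, hPc, hPd⟩ := (hU.2 y hyU v hvU).exit
            (P := fun z => z ∈ comp y) (Rch.refl y) (fun h => (hcompU y hyU hyv h).2 rfl)
          have hdv : d = v := by
            by_contra hdv
            exact hPd (Rch.trans hPc (Rch.single hcd (hcompU y hyU hyv hPc) ⟨hdU, hdv⟩))
          rw [hdv] at hcd
          refine (Rch.single (U := K \ comp x) hcd.symm ⟨hUK hvU, fun h => (hcompU x hx hxv h).2 rfl⟩
            (hsub hPc)).trans ?_
          exact ((Cn.component y).2 c hPc y (Rch.refl y)).mono_set hsub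
        · have hyd : y ∈ K \ U := ⟨hyK, hyU⟩
          have hsub : K \ U ⊆ K \ comp x := fun z hz =>
            ⟨hz.1, fun h => hz.2 (hcompU x hx hxv h).1⟩
          rcases hvK with h | ⟨z, hz, hvz⟩
          · rw [h] at hyd; exact absurd hyd (Set.notMem_empty y)
          · rcases hKU with h | h
            · rw [h] at hyd; exact absurd hyd (Set.notMem_empty y)
            exact (Rch.single (U := K \ comp x) hvz ⟨hUK hvU, fun h => (hcompU x hx hxv h).2 rfl⟩
              (hsub hz)).trans ((h.2 z hz y hyd).mono_set hsub)
      · refine Set.ncard_lt_ncard ?_ (Set.toFinite _)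
        refine ⟨(hcompU x hx hxv).trans Set.sdiff_subset, fun h => ?_⟩
        exact (hcompU x hx hxv (h hvU)).2 rfl
    · have hrest : M * (D * k + 1) ≤ ((K \ U) ∩ S).ncard := by
        have h1 : (K ∩ S).ncard ≤ (U ∩ S).ncard + ((K \ U) ∩ S).ncard := by
          refine le_trans (Set.ncard_le_ncard ?_ (Set.toFinite _)) (Set.ncard_union_le _ _)
          intro x hx
          by_cases hxU : x ∈ U
          · exact Or.inl ⟨hxU, hx.2⟩
          · exact Or.inr ⟨⟨hx.1, hxU⟩, hx.2⟩
        rw [Nat.add_mul] at hKS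
        omega
      have hadd : Blobs G S (K \ U) M k → Blobs G S K (M + 1) k := by
        rintro ⟨C, hC, hCC⟩
        refine ⟨Fin.cons U C, ?_, ?_⟩
        · intro i
          refine Fin.cases ?_ (fun i => ?_) i
          · exact ⟨hU, hUS, hUK⟩
          · simp only [Fin.cons_succ]
            exact ⟨(hC i).1, (hC i).2.1, (hC i).2.2.trans Set.sdiff_subset⟩
        · have hUC : ∀ i, Disjoint U (C i) := fun i =>
            Set.disjoint_left.2 fun x hx hx' => ((hC i).2.2 hx').2 hx
          intro i j
          refine Fin.cases ?_ (fun i => ?_) i <;> refine Fin.cases ?_ (fun j => ?_) j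
          · exact fun h => absurd rfl h
          · exact fun _ => by simpa using hUC j
          · exact fun _ => by simpa using (hUC i).symm
          · exact fun h => by simpa using hCC i j (fun h' => h (by rw [h']))
      rcases hKU with h | h
      · left
        apply hadd
        rw [h, Set.empty_inter, Set.ncard_empty] at hrest
        have hM : M = 0 := by
          rcases Nat.eq_zero_or_pos M with h | h
          · exact h
          · have := Nat.mul_le_mul_right (D * k + 1) h
            omega
        subst hM
        exact ⟨fun i => i.elim0, fun i => i.elim0, fun i => i.elim0⟩
      · rcases ih _ h hrest with h | ⟨v, hv, hvF⟩
        · exact Or.inl (hadd h)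
        · exact Or.inr ⟨v, hv.1, hvF⟩

/-! ### Hubs and clones -/

/-- After deleting a small set `X` of vertices, some component still contains many vertices of
the well-linked set. -/
theorem big_component [Finite V] {G : SimpleGraph V} {S : Set V} (hS : NodeWellLinked G S)
    (X : Finset V) (q : ℕ) (hq : 3 * X.card + 1 + (X.card + 1) * q ≤ S.ncard) :
    ∃ K, Cn G K ∧ (∀ x ∈ K, x ∉ X) ∧ q ≤ (K ∩ S).ncard := by
  classical
  let _ : Fintype V := Fintype.ofFinite V
  rw [Set.ncard_eq_toFinset_card'] at hq
  have h1 : X.card + 1 ≤ (S.toFinset \ X).card := by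
    have := Finset.le_card_sdiff X S.toFinset
    omega
  obtain ⟨A, hA, hAc⟩ := Finset.exists_subset_card_eq h1
  have hAS : (A : Set V) ⊆ S := fun x hx => by
    have := (Finset.mem_sdiff.1 (hA hx)).1
    simpa using this
  have hAX : ∀ a ∈ A, a ∉ X := fun a ha => (Finset.mem_sdiff.1 (hA ha)).2
  let R := ((S.toFinset \ X) \ A).filter (fun s => ∀ a ∈ A, ¬ Rch G (↑X : Set V)ᶜ a s)
  have hR : R.card ≤ X.card := by
    by_contra hcon
    obtain ⟨B, hB, hBc⟩ := Finset.exists_subset_card_eq (show X.card + 1 ≤ R.card by omega)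
    have hBR : ∀ b ∈ B, (b ∈ S ∧ b ∉ A) ∧ ∀ a ∈ A, ¬ Rch G (↑X : Set V)ᶜ a b := by
      intro b hb
      have := hB hb
      simp only [R, Finset.mem_filter, Finset.mem_sdiff, Set.mem_toFinset] at this
      exact ⟨⟨this.1.1.1, this.1.2⟩, this.2⟩
    obtain ⟨Q⟩ := pathSys_of_wellLinked hS A B hAS (fun b hb => (hBR b hb).1.1)
      (Finset.disjoint_left.2 fun x hx hx' => (hBR x hx').1.2 hx) hAc hBc
    obtain ⟨a, ha, b, hb, -, hab⟩ := Q.exists_avoiding X (Nat.lt_succ_self _)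
    exact (hBR b hb).2 a ha hab
  let T := ((S.toFinset \ X) \ A) \ R
  have hT : (X.card + 1) * q ≤ T.card := by
    have e1 := Finset.le_card_sdiff X S.toFinset
    have e2 := Finset.le_card_sdiff A (S.toFinset \ X)
    have e3 := Finset.le_card_sdiff R ((S.toFinset \ X) \ A)
    have : T.card = (((S.toFinset \ X) \ A) \ R).card := rfl
    omega
  have hTr : ∀ s, ∃ a, s ∈ T → s ∈ S ∧ a ∈ A ∧ Rch G (↑X : Set V)ᶜ a s := by
    intro s
    by_cases hs : s ∈ T
    · simp only [T, R, Finset.mem_sdiff, Finset.mem_filter, Set.mem_toFinset, not_and,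
        not_forall, not_not] at hs
      obtain ⟨a, ha, h⟩ := hs.2 hs.1
      exact ⟨a, fun _ => ⟨hs.1.1.1, ha, h⟩⟩
    · exact ⟨s, fun h => absurd h hs⟩
  choose f hf using hTr
  obtain ⟨a, ha, haq⟩ := Finset.exists_le_card_fiber_of_mul_le_card_of_maps_to
    (s := T) (t := A) (f := f) (n := q) (fun s hs => (hf s hs).2.1)
    (Finset.card_pos.1 (by omega)) (by rw [hAc]; exact hT)
  refine ⟨{y | Rch G (↑X : Set V)ᶜ a y}, Cn.component a, fun x hx => Rch.mem hx (hAX a ha), ?_⟩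
  rw [Set.ncard_eq_toFinset_card']
  refine haq.trans (Finset.card_le_card fun s hs => ?_)
  obtain ⟨hs, hsa⟩ := Finset.mem_filter.1 hs
  have := hf s hs
  rw [hsa] at this
  simpa using ⟨this.2.2, this.1⟩

/-- The graph obtained by deleting the hubs `v i` and adding `k` copies of each of them. -/
def cloneGraph (G : SimpleGraph V) {M : ℕ} (v : Fin M → V) (k : ℕ) :
    SimpleGraph (V ⊕ (Fin M × Fin k)) where
  Adj a b := match a, b with
    | Sum.inl x, Sum.inl y => G.Adj x y ∧ (∀ i, x ≠ v i) ∧ ∀ i, y ≠ v i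
    | Sum.inl x, Sum.inr p => G.Adj (v p.1) x ∧ ∀ i, x ≠ v i
    | Sum.inr p, Sum.inl x => G.Adj (v p.1) x ∧ ∀ i, x ≠ v i
    | Sum.inr _, Sum.inr _ => False
  symm := ⟨by
    rintro (x | p) (y | p') h
    · exact ⟨h.1.symm, h.2.2, h.2.1⟩
    · exact h
    · exact h
    · exact h⟩
  loopless := ⟨by
    rintro (x | p) h
    · exact G.loopless.irrefl x h.1
    · exact h⟩

/-- Hubs with large fans give disjoint connected sets with many vertices of `S`: there are,
by Menger's theorem, disjoint paths from the copies of the hubs to `S`. -/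
theorem blobs_of_hubs [Finite V] (G : SimpleGraph V) (S : Set V) {M k D : ℕ} (v : Fin M → V)
    (hv : Function.Injective v) (hD : M + M * k ≤ D) (hfan : ∀ i, Fan G S (v i) D) :
    Blobs G S Set.univ M k := by
  classical
  let _ : Fintype V := Fintype.ofFinite V
  let Γ := cloneGraph G v k
  obtain ⟨Q⟩ : Nonempty (PathSys Γ (Set.range Sum.inr) (Sum.inl '' S) (M * k)) := by
    refine menger (M * k) _ Γ _ _ rfl fun X hX => ?_
    obtain ⟨p, hp⟩ : ∃ p : Fin M × Fin k, Sum.inr p ∉ X := by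
      by_contra hcon
      push Not at hcon
      have := Finset.card_le_card_of_injOn (s := (Finset.univ : Finset (Fin M × Fin k)))
        (t := X) Sum.inr (fun p _ => hcon p) Sum.inr_injective.injOn
      simp at this
      omega
    obtain ⟨W, hW, hWW⟩ := hfan p.1
    obtain ⟨d, hd1, hd2⟩ : ∃ d, (∀ i, v i ∉ W d) ∧ ∀ x ∈ W d, Sum.inl x ∉ X := by
      by_contra hcon
      push Not at hcon
      -- Every set of the fan would contain a hub or an element of `X`.
      have hz : ∀ d, ∃ z ∈ Finset.univ.image v ∪ (Finset.univ.filter fun x => Sum.inl x ∈ X),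
          z ∈ W d := by
        intro d
        by_cases h : ∀ i, v i ∉ W d
        · obtain ⟨x, hx, hxX⟩ := hcon d h
          exact ⟨x, Finset.mem_union_right _ (by simpa using hxX), hx⟩
        · push Not at h
          obtain ⟨i, hi⟩ := h
          exact ⟨v i, Finset.mem_union_left _ (by simp), hi⟩
      choose z hz hzW using hz
      have h1 := Finset.card_le_card_of_injOn (s := Finset.univ) z (fun d _ => hz d) (by
        intro d _ d' _ hdd
        by_contra hne
        exact Set.disjoint_left.1 (hWW d d' hne) (hzW d) (hdd ▸ hzW d'))
      have h2 : (Finset.univ.image v).card ≤ M := by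
        simpa using Finset.card_image_le (s := Finset.univ) (f := v)
      have h3 : (Finset.univ.filter fun x : V => (Sum.inl x : V ⊕ (Fin M × Fin k)) ∈ X).card
          ≤ X.card := Finset.card_le_card_of_injOn Sum.inl (fun x hx => by simpa using hx)
            Sum.inl_injective.injOn
      have h4 := Finset.card_union_le (Finset.univ.image v)
        (Finset.univ.filter fun x : V => (Sum.inl x : V ⊕ (Fin M × Fin k)) ∈ X)
      rw [Finset.card_univ, Fintype.card_fin] at h1
      omega
    obtain ⟨hWd, ⟨x, hx, hvx⟩, s, hs, hsS⟩ := hW d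
    have hnot : ∀ y ∈ W d, ∀ i, y ≠ v i := fun y hy i h => hd1 i (h ▸ hy)
    refine ⟨_, ⟨p, rfl⟩, _, ⟨s, hsS, rfl⟩, hp, ?_⟩
    have hr : ∀ y, Rch G (W d) x y → Rch Γ (↑X : Set (V ⊕ (Fin M × Fin k)))ᶜ (Sum.inl x)
        (Sum.inl y) := by
      intro y hy
      induction hy with
      | refl => exact Rch.refl _
      | tail h1 h2 ih =>
        refine ih.trans (Rch.single ?_ (hd2 _ h2.2.1) (hd2 _ h2.2.2))
        exact ⟨h2.1, hnot _ h2.2.1, hnot _ h2.2.2⟩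
    refine Rch.trans (Rch.single ?_ hp (hd2 x hx)) (hr s (hWd.2 x hx s hs))
    exact ⟨hvx, hnot x hx⟩
  -- Every copy of a hub is the first vertex of exactly one path.
  choose f hf using Q.start
  have hfinj : Function.Injective f := fun j j' h =>
    (Q.inj j 0 j' 0 (Nat.zero_le _) (Nat.zero_le _) (by rw [← hf j, ← hf j', h])).1
  have hfsurj : Function.Surjective f :=
    ((Fintype.bijective_iff_injective_and_card f).2 ⟨hfinj, by simp⟩).2
  choose J hJ using hfsurj
  have hJ0 : ∀ p, Q.q (J p) 0 = Sum.inr p := fun p => by rw [← hf, hJ]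
  have hJinj : Function.Injective J := fun p p' h => by rw [← hJ p, h, hJ]
  have hz : ∀ p l, ∃ z, 0 < l → l ≤ Q.len (J p) → Q.q (J p) l = Sum.inl z ∧ ∀ i, z ≠ v i := by
    intro p l
    by_cases hl : 0 < l ∧ l ≤ Q.len (J p)
    · have hadj := Q.adj (J p) (l - 1) (by omega)
      rw [Nat.sub_add_cancel hl.1] at hadj
      rcases hq : Q.q (J p) l with z | p'
      · refine ⟨z, fun _ _ => ⟨rfl, ?_⟩⟩
        rw [hq] at hadj
        rcases hq' : Q.q (J p) (l - 1) with y | p'' <;> rw [hq'] at hadj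
        · exact hadj.2.2
        · exact hadj.2
      · have := (Q.inj (J p) l (J p') 0 hl.2 (Nat.zero_le _) (by rw [hq, hJ0])).2
        omega
    · exact ⟨v p.1, fun h h' => absurd ⟨h, h'⟩ hl⟩
  choose z hz using hz
  have hlen : ∀ p, 0 < Q.len (J p) := by
    intro p
    by_contra h
    obtain ⟨s, -, hs⟩ := Q.fin (J p)
    rw [Nat.eq_zero_of_not_pos h, hJ0] at hs
    exact absurd hs (by simp)
  have hzinj : ∀ p l p' l', 0 < l → l ≤ Q.len (J p) → 0 < l' → l' ≤ Q.len (J p') →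
      z p l = z p' l' → p = p' ∧ l = l' := by
    intro p l p' l' h1 h2 h1' h2' he
    have := Q.inj (J p) l (J p') l' h2 h2' (by
      rw [(hz p l h1 h2).1, (hz p' l' h1' h2').1, he])
    exact ⟨hJinj this.1, this.2⟩
  let C : Fin M → Set V := fun i =>
    {x | x = v i ∨ ∃ a l, 0 < l ∧ l ≤ Q.len (J (i, a)) ∧ z (i, a) l = x}
  refine ⟨C, fun i => ⟨?_, ?_, Set.subset_univ _⟩, fun i i' hne => ?_⟩
  · refine Cn.of_center (x := v i) (Or.inl rfl) ?_
    rintro y (rfl | ⟨a, l, h1, h2, rfl⟩)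
    · exact Rch.refl _
    · induction l, h1 using Nat.le_induction with
      | base =>
        refine Rch.single ?_ (Or.inl rfl) (Or.inr ⟨a, 1, one_pos, h2, rfl⟩)
        have := Q.adj (J (i, a)) 0 h2
        rw [hJ0, (hz (i, a) 1 one_pos h2).1] at this
        exact this.1
      | succ l hl ih =>
        refine (ih (by omega)).trans (Rch.single ?_ (Or.inr ⟨a, l, hl, by omega, rfl⟩)
          (Or.inr ⟨a, l + 1, by omega, h2, rfl⟩))
        have := Q.adj (J (i, a)) l h2
        rw [(hz (i, a) l hl (by omega)).1, (hz (i, a) (l + 1) (by omega) h2).1] at this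
        exact this.1
  · have := Finset.card_le_card_of_injOn (s := (Finset.univ : Finset (Fin k)))
      (t := (C i ∩ S).toFinset) (fun a => z (i, a) (Q.len (J (i, a)))) (by
        intro a _
        simp only [Set.coe_toFinset]
        refine ⟨Or.inr ⟨a, _, hlen _, le_rfl, rfl⟩, ?_⟩
        obtain ⟨s, hs, hsq⟩ := Q.fin (J (i, a))
        rw [(hz (i, a) _ (hlen _) le_rfl).1] at hsq
        rwa [← Sum.inl_injective hsq]) (by
        intro a _ b _ hab
        have := (hzinj _ _ _ _ (hlen _) le_rfl (hlen _) le_rfl hab).1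
        exact (Prod.ext_iff.1 this).2)
    rw [Set.ncard_eq_toFinset_card']
    simpa using this
  · rw [Set.disjoint_left]
    rintro x (rfl | ⟨a, l, h1, h2, rfl⟩) (h | ⟨a', l', h1', h2', h⟩)
    · exact hne (hv h)
    · exact (hz (i', a') l' h1' h2').2 i h
    · exact (hz (i, a) l h1 h2).2 i' h
    · exact hne (Prod.ext_iff.1 (hzinj _ _ _ _ h1' h2' h1 h2 h).1).1.symm

/-- A sufficiently large well-linked set has many vertices in each of `M` disjoint connected
sets. -/
theorem blobs (M k : ℕ) : ∃ κ : ℕ, ∀ {V : Type} [Finite V] (G : SimpleGraph V) (S : Set V),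
    NodeWellLinked G S → κ ≤ S.ncard → Blobs G S Set.univ M k := by
  classical
  let D := M + M * k + 1
  let q := M * (D * k + 1)
  refine ⟨3 * M + 1 + (M + 1) * q, ?_⟩
  intro V _ G S hS hκ
  by_contra hno
  have hubs : ∀ m ≤ M, ∃ v : Fin m → V, Function.Injective v ∧ ∀ i, Fan G S (v i) D := by
    intro m
    induction m with
    | zero => exact fun _ => ⟨fun i => i.elim0, fun i => i.elim0, fun i => i.elim0⟩
    | succ m ih =>
      intro hm
      obtain ⟨v, hv, hvF⟩ := ih (by omega)
      have hXc : (Finset.univ.image v).card ≤ M := by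
        have := Finset.card_image_le (s := Finset.univ) (f := v)
        simp at this
        omega
      obtain ⟨K, hK, hKX, hKq⟩ := big_component hS (Finset.univ.image v) q (by
        have := Nat.mul_le_mul_right q (Nat.add_le_add_right hXc 1)
        omega)
      rcases blobs_or_fan G S D k (by omega) M K hK hKq with ⟨C, hC, hCC⟩ | ⟨w, hw, hwF⟩
      · exact absurd ⟨C, fun i => ⟨(hC i).1, (hC i).2.1, Set.subset_univ _⟩, hCC⟩ hno
      · refine ⟨Fin.cons w v, ?_, ?_⟩
        · rw [Fin.cons_injective_iff]
          refine ⟨?_, hv⟩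
          rintro ⟨i, rfl⟩
          exact hKX _ hw (by simp)
        · intro i
          refine Fin.cases ?_ (fun i => ?_) i
          · simpa using hwF
          · simpa using hvF i
  obtain ⟨v, hv, hvF⟩ := hubs M le_rfl
  exact hno (blobs_of_hubs G S v hv (by omega) hvF)

/-! ### The rooted grid -/

/-- Given for any two elements of `α × Fin L` a set of at most `N` forbidden elements, where `L`
is large, one can choose an element `(l, x l)` for each `l` such that no chosen element is
forbidden by two others. A random choice works; the proof counts the bad choices. -/
theorem selection {α : Type} [Fintype α] (L N : ℕ)
    (f : α × Fin L → α × Fin L → Set (α × Fin L)) (hf : ∀ p p', (f p p').ncard ≤ N)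
    (hL : Fintype.card α ^ 3 * N < L) :
    ∃ x : α → Fin L, ∀ u v l, l ≠ u → l ≠ v → (l, x l) ∉ f (u, x u) (v, x v) := by
  classical
  let bad : α × α × α → Finset (α → Fin L) := fun w => Finset.univ.filter fun x =>
    w.2.2 ≠ w.1 ∧ w.2.2 ≠ w.2.1 ∧ (w.2.2, x w.2.2) ∈ f (w.1, x w.1) (w.2.1, x w.2.1)
  have hbad : ∀ w, (bad w).card * L ≤ N * L ^ Fintype.card α := by
    rintro ⟨u, v, l⟩
    let F : (α → Fin L) × Fin L → (α → Fin L) := fun y => Function.update y.1 l y.2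
    have h1 := Finset.card_le_mul_card_image (s := bad (u, v, l) ×ˢ (Finset.univ : Finset (Fin L)))
      (f := F) N (by
        intro y _
        refine le_trans ?_ (hf (u, y u) (v, y v))
        rw [Set.ncard_eq_toFinset_card']
        have hmem : ∀ c ∈ (bad (u, v, l) ×ˢ (Finset.univ : Finset (Fin L))).filter
            (fun c => F c = y), c.2 = y l ∧ (∀ w, w ≠ l → c.1 w = y w) ∧
            (l, c.1 l) ∈ f (u, y u) (v, y v) := by
          rintro ⟨x, z⟩ hc
          simp only [bad, Finset.mem_filter, Finset.mem_product, Finset.mem_univ, true_and,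
            and_true] at hc
          obtain ⟨⟨hlu, hlv, hx⟩, rfl⟩ := hc
          refine ⟨by simp [F], fun w hw => by simp [F, hw], ?_⟩
          simpa [F, hlu.symm, hlv.symm] using hx
        refine Finset.card_le_card_of_injOn (fun c => (l, c.1 l)) ?_ ?_
        · intro c hc
          simpa using (hmem c hc).2.2
        · intro c hc c' hc' he
          obtain ⟨h1, h2, -⟩ := hmem c hc
          obtain ⟨h1', h2', -⟩ := hmem c' hc'
          refine Prod.ext (funext fun w => ?_) (h1.trans h1'.symm)
          by_cases hw : w = l
          · rw [hw]; exact (Prod.ext_iff.1 he).2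
          · rw [h2 w hw, h2' w hw])
    rw [Finset.card_product, Finset.card_univ, Fintype.card_fin] at h1
    refine h1.trans (Nat.mul_le_mul_left N ?_)
    have := Finset.card_le_univ ((bad (u, v, l) ×ˢ (Finset.univ : Finset (Fin L))).image F)
    simpa using this
  have hLpos : 0 < L := by omega
  obtain ⟨x, hx⟩ : ∃ x, x ∉ Finset.univ.biUnion bad := by
    by_contra hcon
    push Not at hcon
    have h1 := Finset.card_le_card (show Finset.univ ⊆ Finset.univ.biUnion bad from
      fun x _ => hcon x)
    have h2 := h1.trans Finset.card_biUnion_le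
    have h3 : (∑ w, (bad w).card) * L ≤ Fintype.card α ^ 3 * (N * L ^ Fintype.card α) := by
      rw [Finset.sum_mul]
      refine (Finset.sum_le_sum fun w _ => hbad w).trans (le_of_eq ?_)
      rw [Finset.sum_const, Finset.card_univ, Fintype.card_prod, Fintype.card_prod, smul_eq_mul]
      ring
    have h4 : L ^ Fintype.card α ≤ ∑ w, (bad w).card := by simpa using h2
    have h5 := (Nat.mul_le_mul_right L h4).trans h3
    have h6 := Nat.mul_lt_mul_of_pos_right hL (pow_pos hLpos (Fintype.card α))
    rw [Nat.mul_assoc, Nat.mul_comm L] at h6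
    omega
  refine ⟨x, fun u v l hlu hlv h => hx ?_⟩
  exact Finset.mem_biUnion.2 ⟨(u, v, l), Finset.mem_univ _, by simp [bad, hlu, hlv, h]⟩

/-- The connected sets of `blobs` and the connectors of `clean` form a rooted grid. The constant
`t` is the number of paths between two blobs: at least `τ` of them meet no further chosen blob. -/
theorem rooted_grid (g : ℕ) (hg : 0 < g) : ∃ κ : ℕ, ∀ {V : Type} [Fintype V]
    (G : SimpleGraph V) (S : Set V), NodeWellLinked G S → κ ≤ S.ncard →
    RootedGrid G S g hg := by
  classical
  let E : Finset ((Fin g × Fin g) × (Fin g × Fin g)) :=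
    Finset.univ.filter fun e => gridRel g e.1 e.2 ∧ e.1 ≠ e.2
  have hE : ∀ e, e ∈ E ↔ gridRel g e.1 e.2 ∧ e.1 ≠ e.2 := fun e => by simp [E]
  obtain ⟨τ, hclean⟩ := clean g hg E.card
  obtain ⟨r, hr, htool⟩ := tool g hg
  let m := Fintype.card (Fin g × Fin g)
  have hm : 0 < m := Fintype.card_pos_iff.2 ⟨(⟨0, hg⟩, ⟨0, hg⟩)⟩
  let t := τ + m * r
  have ht : 0 < t := by
    have := Nat.mul_pos hm hr
    omega
  obtain ⟨N, htool⟩ := htool t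
  let L := m ^ 3 * N + 1
  obtain ⟨κ, hblobs⟩ := blobs (Fintype.card ((Fin g × Fin g) × Fin L)) t
  refine ⟨κ, ?_⟩
  intro V _ G S hS hκ
  by_contra hno
  obtain ⟨C0, hC0, hCC0⟩ := hblobs G S hS hκ
  let C : (Fin g × Fin g) × Fin L → Set V := fun p => C0 (Fintype.equivFin _ p)
  have hC : ∀ p, Cn G (C p) := fun p => (hC0 _).1
  have hCt : ∀ p, t ≤ (C p ∩ S).ncard := fun p => (hC0 _).2.1
  have hCC : ∀ p p', p ≠ p' → Disjoint (C p) (C p') := fun p p' h =>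
    hCC0 _ _ ((Fintype.equivFin _).injective.ne h)
  have hpick : ∀ p, ∃ A : Finset V, A.card = t ∧ (A : Set V) ⊆ C p ∩ S := by
    intro p
    have := hCt p
    rw [Set.ncard_eq_toFinset_card'] at this
    obtain ⟨A, hA, hAc⟩ := Finset.exists_subset_card_eq this
    exact ⟨A, hAc, fun x hx => by simpa using hA hx⟩
  choose A hAc hA using hpick
  -- Any two blobs are linked by paths few of which meet any other blob, with few exceptions.
  have hQ : ∀ p p', ∃ F : Set ((Fin g × Fin g) × Fin L), F.ncard ≤ N ∧ (p ≠ p' →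
      ∃ Q : PathSys G (S ∩ C p) (S ∩ C p') t, ∀ n, n ∉ F →
        {j | (Q.vs j ∩ C n).Nonempty}.ncard ≤ r) := by
    intro p p'
    by_cases hpp : p = p'
    · exact ⟨∅, by simp, fun h => absurd hpp h⟩
    obtain ⟨Q0⟩ := pathSys_of_wellLinked hS (A p) (A p') (fun x hx => (hA p hx).2)
      (fun x hx => (hA p' hx).2) (Finset.disjoint_left.2 fun x hx hx' =>
        Set.disjoint_left.1 (hCC p p' hpp) (hA p hx).1 (hA p' hx').1) (hAc p) (hAc p')
    obtain ⟨Q, hQ⟩ := htool G S hno (S ∩ C p) (S ∩ C p') Set.inter_subset_left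
      ⟨Q0.change Q0.adj (fun j => (hA p (Q0.start j)).symm)
        (fun j => (hA p' (Q0.fin j)).symm)⟩ C hC hCC
    exact ⟨_, hQ.le, fun _ => ⟨Q, fun n hn => (not_le.1 hn).le⟩⟩
  choose F hF hFQ using hQ
  obtain ⟨x, hx⟩ := selection L N F hF (Nat.lt_succ_self _)
  let C' : Fin g × Fin g → Set V := fun u => C (u, x u)
  have hCC' : ∀ u v, u ≠ v → Disjoint (C' u) (C' v) := fun u v h =>
    hCC _ _ fun h' => h (Prod.ext_iff.1 h').1
  obtain ⟨Z, hZ, hZZ⟩ := hclean G S hno C' hCC' E rfl (fun e he => ((hE e).1 he).2) ∅ (by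
    rintro ⟨u, v⟩ he
    have huv : u ≠ v := ((hE _).1 he).2
    obtain ⟨Q, hQ⟩ := hFQ (u, x u) (v, x v) fun h => huv (Prod.ext_iff.1 h).1
    let bad : Set (Fin t) := ⋃ l ∈ (Finset.univ.filter fun l => l ≠ u ∧ l ≠ v),
      {j | (Q.vs j ∩ C' l).Nonempty}
    have hbad : bad.ncard ≤ m * r := by
      refine (Finset.set_ncard_biUnion_le _ _).trans ?_
      refine (Finset.sum_le_card_nsmul _ _ r fun l hl => ?_).trans ?_
      · have := (Finset.mem_filter.1 hl).2
        exact hQ _ (hx u v l this.1 this.2)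
      · rw [smul_eq_mul]
        exact Nat.mul_le_mul_right r (Finset.card_le_univ _)
    obtain ⟨σ, hσ, hav⟩ := exists_avoid (t' := τ) bad hbad le_rfl
    have hmem : ∀ k i, i ≤ Q.len (σ k) → Q.q (σ k) i ∈ allowed C' (u, v) ∅ := by
      refine fun k i hi => ⟨Set.notMem_empty _, fun l hl hl' hq => hav k ?_⟩
      simp only [bad, Set.mem_iUnion]
      exact ⟨l, by simpa using ⟨hl, hl'⟩, _, ⟨i, hi, rfl⟩, hq⟩
    exact ⟨(Q.sub σ hσ).change (fun k i hi => ⟨Q.adj _ i hi, hmem k i hi.le, hmem k (i + 1) hi⟩)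
      (fun k => Q.start _) (fun k => Q.fin _)⟩)
  obtain ⟨η, hη, hsub⟩ := build (gridRel g) G C' (fun u v => Z (u, v)) (fun u => hC _) hCC'
    (fun u v h hne => by
      obtain ⟨h1, h2, h3, h4, -⟩ := hZ (u, v) ((hE _).2 ⟨h, hne⟩)
      exact ⟨h1, h2, h3, h4⟩)
    (fun u v u' v' h hne h' hne' hd y hy hy' =>
      hZZ (u, v) ((hE _).2 ⟨h, hne⟩) (u', v') ((hE _).2 ⟨h', hne'⟩) hd y hy hy')
  refine hno ⟨η, hη, fun j => ?_⟩
  obtain ⟨y, hy⟩ := (Set.ncard_pos (Set.toFinite _)).1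
    (lt_of_lt_of_le ht (hCt ((⟨0, hg⟩, j), x (⟨0, hg⟩, j))))
  exact ⟨y, hy.2, hsub _ hy.1⟩

end RootedGrids

/-- Strengthened Excluded-Grid Theorem: for every `g > 0` there is a `κ ≥ 1` such
that every graph with a node-well-linked set `S` of at least `κ` vertices has a
`(g × g)`-grid minor in which every branch set of the first column meets `S`. -/
theorem stmt_13 (g : ℕ) (hg : 0 < g) :
    ∃ κ : ℕ, 1 ≤ κ ∧
      ∀ (V : Type) [Fintype V], ∀ (G : SimpleGraph V) (S : Set V),
        NodeWellLinked G S → κ ≤ S.ncard →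
          ∃ η : Fin g × Fin g → Set V,
            IsMinorMapping (gridGraph g) G η ∧
            ∀ j : Fin g, ∃ x ∈ S, x ∈ η (⟨0, hg⟩, j) := by
  obtain ⟨κ, h⟩ := RootedGrids.rooted_grid g hg
  refine ⟨max 1 κ, le_max_left _ _, fun V _ G S hS hκ => ?_⟩
  exact h G S hS ((le_max_right _ _).trans hκ)
end

section
/- Let k ≥ 1 and let G be a finite simple graph with vertex set V, n = |V|. Let S_k be the star with vertex set {y, x_1, …, x_k} and edges {x_i, y} for i ∈ {1,…,k}, and let X_k = {x_1,…,x_k}. Let G' be the graph with vertex set V × {0,1,…,k} in which, for every i ∈ {1,…,k}, a vertex (u,0) is adjacent to a vertex (v,i) if and only if u ≠ v and {u,v} ∉ E(G), and which has no other edges. Let c : V(G') → V(S_k) be the map sending (v,0) to y and (v,i) to x_i for i ∈ {1,…,k}. Then c is an S_k-coloring of G', and n^k − #cpHom((S_k, X_k) → G') = #Dom_k(G). -/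
/-- The k-star `S_k`: center `y` (encoded `Sum.inr ()`) adjacent to the leaves
`x_1, …, x_k` (encoded `Sum.inl i`). -/
def starGraph (k : ℕ) : SimpleGraph (Fin k ⊕ Unit) :=
  SimpleGraph.fromRel fun a b => ∃ i : Fin k, a = Sum.inl i ∧ b = Sum.inr ()

/-- The free variables `X_k = {x_1, …, x_k}` of the k-star query. -/
def starFree (k : ℕ) : Set (Fin k ⊕ Unit) := Set.range Sum.inl

/-- The graph `G'` on `V × {y, x_1, …, x_k}` (second coordinate `Sum.inr ()` playing
the role of color `0`, `Sum.inl i` the role of color `i`): `(u, y)` is adjacent to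
`(v, x_i)` iff `u ≠ v` and `{u,v} ∉ E(G)`; there are no other edges. -/
def domComplGraph {V : Type} (G : SimpleGraph V) (k : ℕ) :
    SimpleGraph (V × (Fin k ⊕ Unit)) :=
  SimpleGraph.fromRel fun p q =>
    p.2 = Sum.inr () ∧ (∃ i : Fin k, q.2 = Sum.inl i) ∧ p.1 ≠ q.1 ∧ ¬ G.Adj p.1 q.1

/-- `Dom_k(G)`: maps `a : {1,…,k} → V(G)` whose image dominates `G`. -/
def domSet {V : Type} (G : SimpleGraph V) (k : ℕ) : Set (Fin k → V) :=
  {a | ∀ v : V, v ∉ Set.range a → ∃ u ∈ Set.range a, G.Adj v u}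

theorem starGraph_adj_inl_inr (k : ℕ) (i : Fin k) :
    (starGraph k).Adj (Sum.inl i) (Sum.inr ()) := by
  simp [starGraph, SimpleGraph.fromRel_adj]

theorem domComplGraph_adj_iff {V : Type} (G : SimpleGraph V) (k : ℕ) (u v : V) (i : Fin k) :
    (domComplGraph G k).Adj (v, Sum.inl i) (u, Sum.inr ()) ↔ u ≠ v ∧ ¬ G.Adj u v := by
  simp [domComplGraph, SimpleGraph.fromRel_adj]

theorem isColoring_snd {V : Type} (G : SimpleGraph V) (k : ℕ) :
    IsColoring (domComplGraph G k) (starGraph k) Prod.snd := by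
  rintro ⟨u, s⟩ ⟨v, t⟩ h
  rw [domComplGraph, SimpleGraph.fromRel_adj] at h
  obtain ⟨-, ⟨hs, ⟨i, ht⟩, -⟩ | ⟨ht, ⟨i, hs⟩, -⟩⟩ := h
  · dsimp only at hs ht ⊢
    rw [hs, ht]
    exact (starGraph_adj_inl_inr k i).symm
  · dsimp only at hs ht ⊢
    rw [hs, ht]
    exact starGraph_adj_inl_inr k i

/-- The color-prescribed assignment `x_i ↦ (a i, x_i)` of the leaves given by a tuple `a`.
The index `i` is recovered from the membership of the leaf in the range of `Sum.inl`. -/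
noncomputable def leafMap {V : Type} (k : ℕ) (a : Fin k → V) :
    starFree k → V × (Fin k ⊕ Unit) :=
  fun x => (a x.2.choose, x.1)

theorem leafMap_inl {V : Type} (k : ℕ) (a : Fin k → V) (i : Fin k)
    (hi : Sum.inl i ∈ starFree k) : leafMap k a ⟨Sum.inl i, hi⟩ = (a i, Sum.inl i) := by
  have h : hi.choose = i := Sum.inl_injective hi.choose_spec
  simp only [leafMap, h]

theorem leafMap_injective {V : Type} (k : ℕ) :
    Function.Injective (leafMap (V := V) k) := by
  intro a b hab
  funext i
  have hi : Sum.inl i ∈ starFree k := Set.mem_range_self i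
  have h := congrFun hab ⟨Sum.inl i, hi⟩
  rw [leafMap_inl, leafMap_inl] at h
  exact congrArg Prod.fst h

/-- A tuple is not dominating iff some vertex is distinct from and non-adjacent to all entries. -/
theorem notMem_domSet_iff {V : Type} (G : SimpleGraph V) (k : ℕ) (a : Fin k → V) :
    a ∉ domSet G k ↔ ∃ u : V, ∀ i, u ≠ a i ∧ ¬ G.Adj u (a i) := by
  constructor
  · intro h
    by_contra! hne
    refine h fun v hv => ?_
    obtain ⟨i, hi⟩ := hne v
    exact ⟨a i, Set.mem_range_self i, hi fun hva => hv ⟨i, hva.symm⟩⟩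
  · rintro ⟨u, hu⟩ h
    obtain ⟨_, ⟨i, rfl⟩, hadj⟩ := h u fun ⟨i, hi⟩ => (hu i).1 hi.symm
    exact (hu i).2 hadj

/-- The image of the center of the star is a witness that the tuple of leaf images is not
dominating, and every such witness arises in this way. -/
theorem cpHoms_eq_image {V : Type} (G : SimpleGraph V) (k : ℕ) :
    cpHoms (starGraph k) (starFree k) (domComplGraph G k) Prod.snd =
      leafMap k '' (domSet G k)ᶜ := by
  ext b
  constructor
  · rintro ⟨h, hc, hb⟩
    have hpair : ∀ v, h v = ((h v).1, v) := fun v => Prod.ext rfl (hc v)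
    refine ⟨fun i => (h (Sum.inl i)).1, ?_, ?_⟩
    · rw [Set.mem_compl_iff, notMem_domSet_iff]
      refine ⟨(h (Sum.inr ())).1, fun i => ?_⟩
      have hadj := h.map_adj (starGraph_adj_inl_inr k i)
      rw [hpair (Sum.inl i), hpair (Sum.inr ())] at hadj
      exact (domComplGraph_adj_iff G k _ _ i).1 hadj
    · funext ⟨x, i, hi⟩
      subst hi
      exact ((leafMap_inl k _ i _).trans (hpair _).symm).trans (hb _)
  · rintro ⟨a, ha, rfl⟩
    rw [Set.mem_compl_iff, notMem_domSet_iff] at ha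
    obtain ⟨u, hu⟩ := ha
    have hadj : ∀ i, (domComplGraph G k).Adj (a i, Sum.inl i) (u, Sum.inr ()) :=
      fun i => (domComplGraph_adj_iff G k _ _ i).2 (hu i)
    refine ⟨⟨fun v => (Sum.elim a (fun _ => u) v, v), ?_⟩, fun v => rfl, ?_⟩
    · intro v w hvw
      rw [starGraph, SimpleGraph.fromRel_adj] at hvw
      obtain ⟨-, ⟨i, rfl, rfl⟩ | ⟨i, rfl, rfl⟩⟩ := hvw
      · exact hadj i
      · exact (hadj i).symm
    · rintro ⟨x, i, rfl⟩
      exact (leafMap_inl k a i _).symm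

/-- The projection to the second coordinate is an `S_k`-coloring of `G'`, and
`n^k − #cpHom((S_k, X_k) → G') = #Dom_k(G)`. -/
theorem stmt_15 {V : Type} [Fintype V] (k : ℕ) (hk : 1 ≤ k) (G : SimpleGraph V) :
    IsColoring (domComplGraph G k) (starGraph k) Prod.snd ∧
    ((Fintype.card V : ℤ)) ^ k -
        ((cpHoms (starGraph k) (starFree k) (domComplGraph G k) Prod.snd).ncard : ℤ) =
      ((domSet G k).ncard : ℤ) := by
  refine ⟨isColoring_snd G k, ?_⟩
  rw [cpHoms_eq_image, Set.ncard_image_of_injective _ (leafMap_injective k)]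
  have h := Set.ncard_add_ncard_compl (domSet G k)
  rw [Nat.card_eq_fintype_card, Fintype.card_pi_const] at h
  have h' : ((domSet G k).ncard : ℤ) + ((domSet G k)ᶜ.ncard : ℤ) = (Fintype.card V : ℤ) ^ k := by
    exact_mod_cast h
  linarith
end
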